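/- Let d ≥ 2. For every 0 < τ ≪ 1 there exist positive constants ε(τ), C(τ) and θ ∈ (0,1) (depending only on τ and d) with the following property. Let R > 0, let Ω ⊃ B_{2R} be bounded, let μ be a compactly supported measure with μ(ℝ^d) = |Ω|, let T be the optimal transport map from χ_Ω dx to μ, and let O ⊃ B_{2R} be open. If (1/R^{d+2})∫_{B_{2R}}|T−x|² + (1/R^{d+2}) W₂²(μ⌞O, (μ(O)/|O|)χ_O) ≤ ε(τ), then there exist a symmetric d×d matrix B and a vector b ∈ ℝ^d such that |B−Id|² + |b|²/R² ≲ (1/R^{d+2})∫_{B_{2R}}|T−x|², and, setting x̂ := B⁻¹x, Ω̂ := B⁻¹Ω, T̂(x̂) := B(T(x)−b) and μ̂ := T̂#(χ_Ω̂ dx̂), the map T̂ is the optimal transport map from χ_Ω̂ dx̂ to μ̂ and satisfies (1/(θR)^{d+2})∫_{B_{2θR}}|T̂−x̂|² ≤ τ·(1/R^{d+2})∫_{B_{2R}}|T−x|² + C(τ)·(1/R^{d+2}) W₂²(μ⌞O, (μ(O)/|O|)χ_O). -/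

import Mathlib

/-!
The proof is a harmonic approximation argument carried out at the level of the convex potential,
without any PDE theory.

If the data term is at least `δ` times the energy, the identity already works, with
`C(τ) = θ ^ (-(d + 2)) / δ`. Otherwise rescale by `R / 2` and collect what is needed in the
structure `Cfg`: swapping small pieces of `Ω` shows that `T` is cyclically monotone on the support
of its graph (`perm_mono`), so it is a selection of the subdifferential of a finite function `ψ`
(`exists_potential`), and a nearly optimal coupling of `μ⌞O` with the constant density lifts to a
coupling `P` of points `z` with points `x` near `T z` (`glue`).

Write `f = ψ - |x|²/2`, so that `T - id` is the gradient of `f`, and let `E`, `D` be the energy and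
the data term. Monotonicity gives a small supremum bound for `T - id` (`Cfg.sup_bound`); convexity
and subdivision of segments give an `L²` bound for the difference quotients of `f` by `√E`
(`Cfg.diff_quot`), hence a Poincaré inequality and closeness of `f` to its mollification at a small
scale `ρ`. Testing the two marginals of `P` shows that `- div (T - id) = κ - 1` holds weakly with
an error `O(E + √D)` (`Cfg.weak_eq`). As for harmonic functions, the mollifications of `f` at the
scales `ρ` and `1` then agree up to a constant and higher order terms (`Cfg.scales`; the radial
mollifier `(1 - |y|²)₊⁴` has the explicit primitive `(1 - |y|²)₊⁵ / 10`). The mollification at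
scale `1` is smooth, so its Taylor polynomial at the origin approximates `f` in `L²` on the ball of
radius `4 ϑ`, up to terms of higher order in `ϑ` (`approx`).

Let `½⟨Q x, x⟩ + ⟨b, x⟩ + c` be this polynomial, `N = 1 + Q / 2`, `B = N⁻¹`, and let `g` be the
difference of `ψ` and `½|N x|² + ⟨b, x⟩ + c`. Convexity of `ψ` gives, for `X = B² (x - b)` and
`w = T z - N² z - b`, the pointwise inequality `½|B w|² ≤ ½|B (x - T z)|² + g X - g z`
(`Cfg.gq_sub`). Multiplying by a cutoff function and integrating with respect to `P` turns it into
a Caccioppoli inequality (`Cfg.energy_int`): the energy of the transformed map on the ball of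
radius `ϑ` is bounded by the `L²` norm of `g` and by the data. Choosing in turn `ϑ`, `ρ`, the
supremum bound, and finally `δ` and `ε` gives the decay (`core`). Optimality of the transformed map
follows by expanding squares, since `B` is symmetric (`IsOptMap.hat`).
-/

open MeasureTheory Measure Set Metric
open scoped ENNReal NNReal Topology

noncomputable section

abbrev Ed (d : ℕ) : Type := EuclideanSpace ℝ (Fin d)

/-- Squared Euclidean `L²`-Wasserstein distance, as an infimum over couplings. -/
def W2sq {d : ℕ} (μ ν : Measure (Ed d)) : ℝ≥0∞ :=
  sInf { c | ∃ π : Measure (Ed d × Ed d), π.map Prod.fst = μ ∧ π.map Prod.snd = ν ∧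
      c = ∫⁻ p, ENNReal.ofReal (‖p.1 - p.2‖ ^ 2) ∂π }

/-- `T` is the optimal transport map from `χ_Ω dx` to `μ`. -/
def IsOptMap {d : ℕ} (Ω : Set (Ed d)) (μ : Measure (Ed d)) (T : Ed d → Ed d) : Prop :=
  Measurable T ∧ Measure.map T (volume.restrict Ω) = μ ∧
  ∀ S : Ed d → Ed d, Measurable S → Measure.map S (volume.restrict Ω) = μ →
    ∫⁻ x in Ω, ENNReal.ofReal (‖T x - x‖ ^ 2) ≤ ∫⁻ x in Ω, ENNReal.ofReal (‖S x - x‖ ^ 2)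

/-- The excess energy at scale `R` (without the normalizing factor `R^{-(d+2)}`):
`∫_{B_{2R}}|T−x|²`. -/
def ElinR {d : ℕ} (T : Ed d → Ed d) (R : ℝ) : ℝ≥0∞ :=
  ∫⁻ x in ball (0 : Ed d) (2 * R), ENNReal.ofReal (‖T x - x‖ ^ 2)

/-- The data term `W₂²(μ⌞O, (μ(O)/|O|)χ_O)`. -/
def Dlin {d : ℕ} (μ : Measure (Ed d)) (O : Set (Ed d)) : ℝ≥0∞ :=
  W2sq (μ.restrict O) ((μ O / volume O) • volume.restrict O)

/-- The local situation at unit scale: `T` is a measurable selection, on the set `G`, of the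
subdifferential of the function `ψ`; `G` has full measure in the ball of radius `4`. The measure
`P` couples Lebesgue measure on `A` (the points `z`) with a measure which is `κ` times Lebesgue
measure on the ball of radius `4` (the points `x`), and `D` bounds the mean square of `T z - x`.
The number `E` is the energy of `T - id` in the ball of radius `4`. -/
structure Cfg {d : ℕ} (T : Ed d → Ed d) (ψ : Ed d → ℝ) (G A : Set (Ed d))
    (P : Measure (Ed d × Ed d)) (κ E D : ℝ) : Prop where
  meas : Measurable T
  cont : Continuous ψ
  sub : ∀ z ∈ G, ∀ x, ψ z + inner ℝ (T z) (x - z) ≤ ψ x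
  aeG : ∀ᵐ z ∂(volume : Measure (Ed d)), z ∈ ball (0 : Ed d) 4 → z ∈ G
  fin : IsFiniteMeasure P
  measA : MeasurableSet A
  fst : P.map Prod.fst = volume.restrict A
  PG : ∀ᵐ p ∂P, p.1 ∈ G
  inA : ∀ z ∈ ball (0 : Ed d) 4, T z ∈ ball (0 : Ed d) 4 → z ∈ A
  hκ : 0 ≤ κ
  snd : (P.map Prod.snd).restrict (ball (0 : Ed d) 4)
    = ENNReal.ofReal κ • volume.restrict (ball (0 : Ed d) 4)
  energy : ∫⁻ x in ball (0 : Ed d) 4, ENNReal.ofReal (‖T x - x‖ ^ 2) = ENNReal.ofReal E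
  cost : ∫⁻ p, ENNReal.ofReal (‖T p.1 - p.2‖ ^ 2) ∂P ≤ ENNReal.ofReal D
  hE : 0 < E
  hD : 0 ≤ D

/-! ### Interior smallness of the displacement -/

lemma Cfg.mono {d : ℕ} {T : Ed d → Ed d} {ψ : Ed d → ℝ} {G A : Set (Ed d)}
    {P : Measure (Ed d × Ed d)} {κ E D : ℝ} (h : Cfg T ψ G A P κ E D) {z w : Ed d}
    (hz : z ∈ G) (hw : w ∈ G) : 0 ≤ inner ℝ (T w - T z) (w - z) := by
  have h1 := h.sub z hz w
  have h2 := h.sub w hw z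
  have h3 : inner ℝ (T w) (z - w) = - inner ℝ (T w) (w - z) := by
    rw [← inner_neg_right, neg_sub]
  rw [inner_sub_left]
  linarith

/-- Where the energy is small there are points of `G` with small displacement, by Chebyshev's
inequality. -/
lemma Cfg.exists_good {d : ℕ} {T : Ed d → Ed d} {ψ : Ed d → ℝ} {G A : Set (Ed d)}
    {P : Measure (Ed d × Ed d)} {κ E D : ℝ} (h : Cfg T ψ G A P κ E D) {p : Ed d} {r σ : ℝ}
    (hσ : 0 < σ) (hp : ball p r ⊆ ball 0 4)
    (hE : E < σ ^ 2 * volume.real (ball (0 : Ed d) r)) :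
    ∃ w ∈ ball p r, w ∈ G ∧ ‖T w - w‖ < σ := by
  by_contra hcon
  push Not at hcon
  have hvol : volume (ball p r) = ENNReal.ofReal (volume.real (ball (0 : Ed d) r)) := by
    rw [Measure.addHaar_ball_center, ofReal_measureReal measure_ball_lt_top.ne]
  have h1 : ENNReal.ofReal (σ ^ 2) * volume (ball p r) ≤ ENNReal.ofReal E := by
    rw [← h.energy]
    calc ENNReal.ofReal (σ ^ 2) * volume (ball p r)
        = ∫⁻ x in ball p r, ENNReal.ofReal (σ ^ 2) := by simp
      _ ≤ ∫⁻ x in ball p r, ENNReal.ofReal (‖T x - x‖ ^ 2) := by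
          apply lintegral_mono_ae
          rw [ae_restrict_iff' measurableSet_ball]
          filter_upwards [h.aeG] with x hx hxp
          apply ENNReal.ofReal_le_ofReal
          exact pow_le_pow_left₀ hσ.le (hcon x hxp (hx (hp hxp))) 2
      _ ≤ _ := lintegral_mono_set hp
  rw [hvol, ← ENNReal.ofReal_mul (by positivity),
    ENNReal.ofReal_le_ofReal_iff h.hE.le] at h1
  linarith

/-- Monotonicity of `T` tested with a point `w` close to a point `q` of the segment from `z` to
`T z`, at distance `s / 2` from one of its ends: there `T w` is close to `w`, which is incompatible
with a segment longer than `s`. -/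
lemma Cfg.sup_bound {d : ℕ} {T : Ed d → Ed d} {ψ : Ed d → ℝ} {G A : Set (Ed d)}
    {P : Measure (Ed d × Ed d)} {κ E D : ℝ} (h : Cfg T ψ G A P κ E D) {s : ℝ}
    (hs : 0 < s) (hs1 : s ≤ 1)
    (hE : E < (s / 8) ^ 2 * volume.real (ball (0 : Ed d) (s / 8)))
    {z : Ed d} (hz : z ∈ G) (hz3 : ‖z‖ < 3 ∨ ‖T z‖ < 3) : ‖T z - z‖ ≤ s := by
  by_contra hcon
  push Not at hcon
  set m := ‖T z - z‖ with hm
  have hm0 : 0 < m := hs.trans hcon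
  set e : Ed d := m⁻¹ • (T z - z) with he
  have hen : ‖e‖ = 1 := by
    rw [he, norm_smul, norm_inv, norm_norm, ← hm, inv_mul_cancel₀ hm0.ne']
  have hTz : T z = z + m • e := by
    rw [he, smul_smul, mul_inv_cancel₀ hm0.ne', one_smul]; abel
  -- the test point on the segment sits at parameter `a`
  obtain ⟨a, ha0, ham, hcase, hq⟩ : ∃ a : ℝ, 0 < a ∧ a < m ∧ (a = s / 2 ∨ m - a = s / 2) ∧
      ‖z + a • e‖ < 3 + s / 2 := by
    rcases hz3 with h3 | h3
    · refine ⟨s / 2, by linarith, by linarith, Or.inl rfl, ?_⟩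
      calc ‖z + (s / 2) • e‖ ≤ ‖z‖ + ‖(s / 2) • e‖ := norm_add_le _ _
        _ = ‖z‖ + s / 2 := by rw [norm_smul, hen, Real.norm_of_nonneg (by linarith), mul_one]
        _ < _ := by linarith
    · refine ⟨m - s / 2, by linarith, by linarith, Or.inr (by ring), ?_⟩
      have : z + (m - s / 2) • e = T z - (s / 2) • e := by rw [hTz]; module
      rw [this]
      calc ‖T z - (s / 2) • e‖ ≤ ‖T z‖ + ‖(s / 2) • e‖ := norm_sub_le _ _
        _ = ‖T z‖ + s / 2 := by rw [norm_smul, hen, Real.norm_of_nonneg (by linarith), mul_one]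
        _ < _ := by linarith
  set q := z + a • e with hqdef
  have hball : ball q (s / 8) ⊆ ball 0 4 := by
    intro x hx
    rw [mem_ball, dist_eq_norm] at hx
    rw [mem_ball_zero_iff]
    have : ‖x‖ ≤ ‖x - q‖ + ‖q‖ := by simpa using norm_add_le (x - q) q
    linarith
  obtain ⟨w, hwq, hwG, hw⟩ := h.exists_good (by linarith : 0 < s / 8) hball hE
  have hmono := h.mono hz hwG
  clear_value e
  rw [mem_ball, dist_eq_norm] at hwq
  set δ₂ := w - q with hδ₂
  set δ₁ := T w - q with hδ₁
  have hδ₁n : ‖δ₁‖ ≤ s / 4 := by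
    have : δ₁ = (T w - w) + δ₂ := by rw [hδ₁, hδ₂]; abel
    rw [this]
    exact (norm_add_le _ _).trans (by linarith)
  have e1 : T w - T z = δ₁ - (m - a) • e := by rw [hδ₁, hTz, hqdef]; module
  have e2 : w - z = δ₂ + a • e := by rw [hδ₂, hqdef]; module
  have hee : inner ℝ e e = (1 : ℝ) := by rw [real_inner_self_eq_norm_sq, hen]; norm_num
  rw [e1, e2, inner_sub_left, inner_add_right, inner_add_right, real_inner_smul_left,
    real_inner_smul_left, real_inner_smul_right, real_inner_smul_right, hee] at hmono
  have b1 : inner ℝ δ₁ δ₂ ≤ (s / 4) * (s / 8) := (real_inner_le_norm _ _).trans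
    (mul_le_mul hδ₁n hwq.le (norm_nonneg _) (by linarith))
  have b2 : inner ℝ δ₁ e ≤ s / 4 := (real_inner_le_norm _ _).trans (by rw [hen]; linarith)
  have b3 : - (s / 8) ≤ inner ℝ e δ₂ := by
    have := (abs_le.1 (abs_real_inner_le_norm e δ₂)).1
    rw [hen] at this; linarith
  have hma : 0 < m - a := by linarith
  have c2 : a * inner ℝ δ₁ e ≤ a * (s / 4) := mul_le_mul_of_nonneg_left b2 ha0.le
  have c3 : (m - a) * (- (s / 8)) ≤ (m - a) * inner ℝ e δ₂ :=
    mul_le_mul_of_nonneg_left b3 hma.le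
  rcases hcase with hc | hc
  · rw [hc] at hmono c2 c3 hma
    nlinarith
  · rw [hc] at hmono c3
    nlinarith

/-- An increment bound with a quadratic error improves, by subdivision, to the one without. -/
lemma subdivide {u : ℝ → ℝ} {s K : ℝ}
    (hu : ∀ a ∈ Icc (0 : ℝ) 1, ∀ b ∈ Icc (0 : ℝ) 1, |u b - u a| ≤ s * |b - a| + K * |b - a| ^ 2) :
    |u 1 - u 0| ≤ s := by
  have hN : ∀ N : ℕ, |u 1 - u 0| ≤ s + K * (1 / ((N : ℝ) + 1)) := by
    intro N
    have hN0 : (0 : ℝ) < (N : ℝ) + 1 := by positivity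
    have h1 : u 1 - u 0 = ∑ j ∈ Finset.range (N + 1),
        (u (((j + 1 : ℕ) : ℝ) / ((N : ℝ) + 1)) - u ((j : ℝ) / ((N : ℝ) + 1))) := by
      rw [Finset.sum_range_sub (fun j : ℕ => u ((j : ℝ) / ((N : ℝ) + 1)))]
      push_cast
      rw [div_self hN0.ne', zero_div]
    rw [h1]
    calc _ ≤ ∑ j ∈ Finset.range (N + 1),
        |u (((j + 1 : ℕ) : ℝ) / ((N : ℝ) + 1)) - u ((j : ℝ) / ((N : ℝ) + 1))| :=
          Finset.abs_sum_le_sum_abs _ _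
      _ ≤ ∑ j ∈ Finset.range (N + 1), (s * (1 / ((N : ℝ) + 1)) + K * (1 / ((N : ℝ) + 1)) ^ 2) := by
          apply Finset.sum_le_sum
          intro j hj
          have hj' : (j : ℝ) + 1 ≤ (N : ℝ) + 1 := by
            have := Finset.mem_range.1 hj
            exact_mod_cast this
          have := hu ((j : ℝ) / ((N : ℝ) + 1))
            ⟨by positivity, (div_le_one hN0).2 (by linarith)⟩
            (((j + 1 : ℕ) : ℝ) / ((N : ℝ) + 1))
            ⟨by positivity, (div_le_one hN0).2 (by push_cast; linarith)⟩
          have e : ((j + 1 : ℕ) : ℝ) / ((N : ℝ) + 1) - (j : ℝ) / ((N : ℝ) + 1)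
              = 1 / ((N : ℝ) + 1) := by push_cast; ring
          rw [e, abs_of_pos (show 0 < 1 / ((N : ℝ) + 1) by positivity)] at this
          exact this
      _ = s + K * (1 / ((N : ℝ) + 1)) := by
          rw [Finset.sum_const, Finset.card_range, nsmul_eq_mul]
          push_cast
          field_simp
  have hlim : Filter.Tendsto (fun N : ℕ => s + K * (1 / ((N : ℝ) + 1))) Filter.atTop (𝓝 s) := by
    have := (tendsto_one_div_add_atTop_nhds_zero_nat (𝕜 := ℝ)).const_mul K
    simpa using this.const_add s
  exact ge_of_tendsto' hlim hN

/-! ### The potential of the displacement: Lipschitz and `H¹`-type bounds -/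

/-- The potential `ψ - |x|²/2` of the displacement `T - id`. -/
def pot {d : ℕ} (ψ : Ed d → ℝ) (x : Ed d) : ℝ := ψ x - ‖x‖ ^ 2 / 2

section
variable {d : ℕ} {T : Ed d → Ed d} {ψ : Ed d → ℝ} {G A : Set (Ed d)}
    {P : Measure (Ed d × Ed d)} {κ E D : ℝ}

lemma Cfg.pot_cont (h : Cfg T ψ G A P κ E D) : Continuous (pot ψ) := by
  have := h.cont
  unfold pot
  fun_prop

/-- Convexity of `ψ`, written for the potential of the displacement. -/
lemma Cfg.pot_sub (h : Cfg T ψ G A P κ E D) {z : Ed d} (hz : z ∈ G) (x : Ed d) :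
    inner ℝ (T z - z) (x - z) - ‖x - z‖ ^ 2 / 2 ≤ pot ψ x - pot ψ z := by
  have h1 := h.sub z hz x
  have h2 : ‖x‖ ^ 2 = ‖z‖ ^ 2 + 2 * inner ℝ z (x - z) + ‖x - z‖ ^ 2 := by
    have := norm_add_sq_real z (x - z)
    rwa [add_sub_cancel] at this
  rw [inner_sub_left]
  unfold pot
  linarith

lemma Cfg.pot_incr (h : Cfg T ψ G A P κ E D) {z x : Ed d} (hz : z ∈ G) (hx : x ∈ G) :
    |pot ψ x - pot ψ z| ≤ (‖T z - z‖ + ‖T x - x‖) * ‖x - z‖ + ‖x - z‖ ^ 2 / 2 := by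
  have h1 := h.pot_sub hz x
  have h2 := h.pot_sub hx z
  have h3 := (abs_le.1 (abs_real_inner_le_norm (T z - z) (x - z))).1
  have h4 := (abs_le.1 (abs_real_inner_le_norm (T x - x) (z - x))).1
  rw [norm_sub_rev z x] at h2 h4
  have p1 : 0 ≤ ‖T z - z‖ * ‖x - z‖ := by positivity
  have p2 : 0 ≤ ‖T x - x‖ * ‖x - z‖ := by positivity
  rw [abs_le]
  constructor <;> linarith

lemma Cfg.pot_incr_sup (h : Cfg T ψ G A P κ E D) {s : ℝ}
    (hs : ∀ z ∈ G, ‖z‖ < 3 → ‖T z - z‖ ≤ s) {x y : Ed d}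
    (hx : x ∈ ball (0 : Ed d) 3) (hy : y ∈ ball (0 : Ed d) 3) :
    |pot ψ y - pot ψ x| ≤ s * ‖y - x‖ + ‖y - x‖ ^ 2 / 2 := by
  have hdense : ball (0 : Ed d) 3 ⊆ closure (ball (0 : Ed d) 3 ∩ G) := by
    have h1 := (Measure.dense_of_ae h.aeG).open_subset_closure_inter (isOpen_ball (x := (0 : Ed d)) (ε := 3))
    refine h1.trans (closure_mono ?_)
    rintro z ⟨hz, hz'⟩
    exact ⟨hz, hz' (ball_subset_ball (by norm_num) hz)⟩
  have hcl : IsClosed {p : Ed d × Ed d |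
      |pot ψ p.2 - pot ψ p.1| ≤ s * ‖p.2 - p.1‖ + ‖p.2 - p.1‖ ^ 2 / 2} := by
    have := h.pot_cont
    apply isClosed_le <;> fun_prop
  have hsub : (ball (0 : Ed d) 3 ∩ G) ×ˢ (ball (0 : Ed d) 3 ∩ G) ⊆ {p : Ed d × Ed d |
      |pot ψ p.2 - pot ψ p.1| ≤ s * ‖p.2 - p.1‖ + ‖p.2 - p.1‖ ^ 2 / 2} := by
    rintro ⟨a, b⟩ ⟨⟨ha, haG⟩, ⟨hb, hbG⟩⟩
    simp only [mem_ball_zero_iff] at ha hb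
    have h1 := h.pot_sub haG b
    have h2 := h.pot_sub hbG a
    have h3 := (abs_le.1 (abs_real_inner_le_norm (T a - a) (b - a))).1
    have h4 := (abs_le.1 (abs_real_inner_le_norm (T b - b) (a - b))).1
    rw [norm_sub_rev a b] at h2 h4
    have p1 := mul_le_mul_of_nonneg_right (hs a haG ha) (norm_nonneg (b - a))
    have p2 := mul_le_mul_of_nonneg_right (hs b hbG hb) (norm_nonneg (b - a))
    simp only [mem_ofPred_eq, abs_le]
    constructor <;> linarith
  have := closure_minimal hsub hcl
  rw [closure_prod_eq] at this
  exact this (mk_mem_prod (hdense hx) (hdense hy))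

/-- The supremum bound on the displacement is a Lipschitz bound for its potential. -/
lemma Cfg.pot_lip (h : Cfg T ψ G A P κ E D) {s : ℝ}
    (hs : ∀ z ∈ G, ‖z‖ < 3 → ‖T z - z‖ ≤ s) {x y : Ed d}
    (hx : x ∈ ball (0 : Ed d) 3) (hy : y ∈ ball (0 : Ed d) 3) :
    |pot ψ y - pot ψ x| ≤ s * ‖y - x‖ := by
  have hseg : ∀ t ∈ Icc (0 : ℝ) 1, x + t • (y - x) ∈ ball (0 : Ed d) 3 := fun t ht =>
    (convex_ball (0 : Ed d) 3).add_smul_sub_mem hx hy ht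
  have := subdivide (u := fun t => pot ψ (x + t • (y - x))) (s := s * ‖y - x‖)
    (K := ‖y - x‖ ^ 2 / 2) (by
      intro a ha b hb
      have h1 := h.pot_incr_sup hs (hseg a ha) (hseg b hb)
      have e : x + b • (y - x) - (x + a • (y - x)) = (b - a) • (y - x) := by module
      rw [e, norm_smul, Real.norm_eq_abs] at h1
      refine h1.trans (le_of_eq ?_)
      ring)
  simpa using this

lemma Cfg.energy_translate (h : Cfg T ψ G A P κ E D) {S : Set (Ed d)} (c : Ed d)
    (hS : ∀ x ∈ S, x + c ∈ ball (0 : Ed d) 3) :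
    ∫⁻ x in S, ENNReal.ofReal (‖T (x + c) - (x + c)‖ ^ 2) ≤ ENNReal.ofReal E := by
  have hT := h.meas
  have hmp : MeasurePreserving (fun x : Ed d => x + c) volume volume :=
    measurePreserving_add_right volume c
  have hm : Measurable (fun x : Ed d => ENNReal.ofReal (‖T x - x‖ ^ 2)) := by fun_prop
  have h1 := hmp.setLIntegral_comp_preimage (measurableSet_ball (x := (0 : Ed d)) (ε := 4)) hm
  rw [h.energy] at h1
  rw [← h1]
  have h34 : ball (0 : Ed d) 3 ⊆ ball 0 4 := ball_subset_ball (by norm_num)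
  have hsub : S ⊆ (fun x : Ed d => x + c) ⁻¹' ball (0 : Ed d) 4 := by
    intro x hx
    rw [mem_preimage]
    exact h34 (hS x hx)
  exact lintegral_mono_set hsub

/-- Difference quotients of the potential are controlled in `L²` by the energy: the segment from
`x` to `x + h` is cut into `N` pieces, on each of which convexity bounds the increment up to an
error `O(N⁻²)`. -/
lemma Cfg.diff_quot (h : Cfg T ψ G A P κ E D) (v : Ed d) :
    ∫⁻ x in ball (0 : Ed d) 3 ∩ {x | x + v ∈ ball (0 : Ed d) 3},
      ENNReal.ofReal ((pot ψ (x + v) - pot ψ x) ^ 2) ≤ ENNReal.ofReal (6 * ‖v‖ ^ 2 * E) := by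
  set S := ball (0 : Ed d) 3 ∩ {x | x + v ∈ ball (0 : Ed d) 3} with hS
  have hSm : MeasurableSet S :=
    measurableSet_ball.inter (measurableSet_ball.preimage (measurable_add_const v))
  have hT := h.meas
  set K := volume.real (ball (0 : Ed d) 3) with hK
  have hmain : ∀ N : ℕ, ∫⁻ x in S, ENNReal.ofReal ((pot ψ (x + v) - pot ψ x) ^ 2)
      ≤ ENNReal.ofReal (6 * ‖v‖ ^ 2 * E + (‖v‖ ^ 4 * K) * (1 / ((N : ℝ) + 1))) := by
    intro N
    have hN0 : (0 : ℝ) < (N : ℝ) + 1 := by positivity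
    set n : ℝ := (N : ℝ) + 1 with hn
    set pt : ℕ → Ed d → Ed d := fun j x => x + ((j : ℝ) / n) • v with hpt
    have hae : ∀ᵐ x ∂(volume : Measure (Ed d)), ∀ j : ℕ,
        pt j x ∈ ball (0 : Ed d) 4 → pt j x ∈ G := by
      rw [ae_all_iff]
      intro j
      exact (measurePreserving_add_right volume (((j : ℝ) / n) • v)).quasiMeasurePreserving.ae h.aeG
    have hptS : ∀ x ∈ S, ∀ j ≤ N + 1, pt j x ∈ ball (0 : Ed d) 3 := by
      intro x hx j hj
      have hj' : (j : ℝ) ≤ n := by rw [hn]; exact_mod_cast hj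
      have := (convex_ball (0 : Ed d) 3).add_smul_sub_mem hx.1 hx.2
        (t := (j : ℝ) / n) ⟨by positivity, (div_le_one hN0).2 hj'⟩
      simpa [hpt] using this
    have hpoint : ∀ᵐ x ∂(volume : Measure (Ed d)), x ∈ S →
        (pot ψ (x + v) - pot ψ x) ^ 2 ≤ ∑ j ∈ Finset.range (N + 1),
          (3 * ‖v‖ ^ 2 / n * (‖T (pt j x) - pt j x‖ ^ 2) +
           3 * ‖v‖ ^ 2 / n * (‖T (pt (j + 1) x) - pt (j + 1) x‖ ^ 2) + ‖v‖ ^ 4 / n ^ 3) := by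
      filter_upwards [hae] with x hx hxS
      have h1 : pot ψ (x + v) - pot ψ x = ∑ j ∈ Finset.range (N + 1),
          (pot ψ (pt (j + 1) x) - pot ψ (pt j x)) := by
        rw [Finset.sum_range_sub (fun j : ℕ => pot ψ (pt j x))]
        simp only [hpt]
        push_cast
        rw [← hn, div_self hN0.ne', zero_div, one_smul, zero_smul, add_zero]
      rw [h1]
      refine sq_sum_le_card_mul_sum_sq.trans ?_
      rw [Finset.mul_sum]
      apply Finset.sum_le_sum
      intro j hj
      have hj := Finset.mem_range.1 hj
      have g1 := hx j (ball_subset_ball (by norm_num) (hptS x hxS j (by omega)))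
      have g2 := hx (j + 1) (ball_subset_ball (by norm_num) (hptS x hxS (j + 1) (by omega)))
      have h2 := h.pot_incr g1 g2
      have e : pt (j + 1) x - pt j x = (1 / n) • v := by
        simp only [hpt]; push_cast; module
      rw [e, norm_smul, Real.norm_of_nonneg (by positivity)] at h2
      set a := ‖T (pt j x) - pt j x‖
      set b := ‖T (pt (j + 1) x) - pt (j + 1) x‖
      set c := ‖v‖
      rw [Finset.card_range]
      push_cast
      rw [← hn]
      have h3 : (pot ψ (pt (j + 1) x) - pot ψ (pt j x)) ^ 2
          ≤ ((a + b) * (1 / n * c) + (1 / n * c) ^ 2 / 2) ^ 2 := by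
        rw [← sq_abs]
        exact pow_le_pow_left₀ (abs_nonneg _) h2 2
      calc n * (pot ψ (pt (j + 1) x) - pot ψ (pt j x)) ^ 2
          ≤ n * ((a + b) * (1 / n * c) + (1 / n * c) ^ 2 / 2) ^ 2 :=
            mul_le_mul_of_nonneg_left h3 hN0.le
        _ = (1 / n) * ((a * c + b * c) + c ^ 2 / (2 * n)) ^ 2 := by field_simp
        _ ≤ (1 / n) * (3 * c ^ 2 * a ^ 2 + 3 * c ^ 2 * b ^ 2 + c ^ 4 / n ^ 2) := by
            apply mul_le_mul_of_nonneg_left _ (by positivity)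
            have : c ^ 4 / n ^ 2 = 4 * (c ^ 2 / (2 * n)) ^ 2 := by field_simp; norm_num
            rw [this]
            nlinarith [sq_nonneg (a * c - b * c), sq_nonneg (a * c - c ^ 2 / (2 * n)),
              sq_nonneg (b * c - c ^ 2 / (2 * n)), sq_nonneg (c ^ 2 / (2 * n))]
        _ = _ := by field_simp
    have hVj : ∀ j ≤ N + 1, ∫⁻ x in S, ENNReal.ofReal (‖T (pt j x) - pt j x‖ ^ 2)
        ≤ ENNReal.ofReal E := by
      intro j hj
      exact h.energy_translate _ fun x hx => hptS x hx j hj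
    calc ∫⁻ x in S, ENNReal.ofReal ((pot ψ (x + v) - pot ψ x) ^ 2)
        ≤ ∫⁻ x in S, ∑ j ∈ Finset.range (N + 1),
          (ENNReal.ofReal (3 * ‖v‖ ^ 2 / n) * ENNReal.ofReal (‖T (pt j x) - pt j x‖ ^ 2) +
           ENNReal.ofReal (3 * ‖v‖ ^ 2 / n) *
            ENNReal.ofReal (‖T (pt (j + 1) x) - pt (j + 1) x‖ ^ 2)
            + ENNReal.ofReal (‖v‖ ^ 4 / n ^ 3)) := by
          apply lintegral_mono_ae
          rw [ae_restrict_iff' hSm]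
          filter_upwards [hpoint] with x hx hxS
          refine (ENNReal.ofReal_le_ofReal (hx hxS)).trans (le_of_eq ?_)
          rw [ENNReal.ofReal_sum_of_nonneg (fun j _ => by positivity)]
          apply Finset.sum_congr rfl
          intro j _
          rw [ENNReal.ofReal_add (by positivity) (by positivity),
            ENNReal.ofReal_add (by positivity) (by positivity),
            ENNReal.ofReal_mul (by positivity), ENNReal.ofReal_mul (by positivity)]
      _ = ∑ j ∈ Finset.range (N + 1),
          (ENNReal.ofReal (3 * ‖v‖ ^ 2 / n) *
            (∫⁻ x in S, ENNReal.ofReal (‖T (pt j x) - pt j x‖ ^ 2)) +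
           ENNReal.ofReal (3 * ‖v‖ ^ 2 / n) *
            (∫⁻ x in S, ENNReal.ofReal (‖T (pt (j + 1) x) - pt (j + 1) x‖ ^ 2))
            + ENNReal.ofReal (‖v‖ ^ 4 / n ^ 3) * volume S) := by
          have hm : ∀ j, Measurable (pt j) := fun j => by simp only [hpt]; fun_prop
          have hm' : ∀ j, Measurable (fun x => ENNReal.ofReal (‖T (pt j x) - pt j x‖ ^ 2)) := by
            intro j
            have := hm j
            have := hT.comp this
            fun_prop
          rw [lintegral_finsetSum _ (fun j _ => by
            have h1 := hm' j
            have h2 := hm' (j + 1)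
            fun_prop)]
          apply Finset.sum_congr rfl
          intro j _
          rw [lintegral_add_right _ measurable_const, lintegral_add_right _ ((hm' (j + 1)).const_mul _),
            lintegral_const_mul _ (hm' j), lintegral_const_mul _ (hm' (j + 1)), setLIntegral_const]
      _ ≤ ∑ j ∈ Finset.range (N + 1),
          (ENNReal.ofReal (3 * ‖v‖ ^ 2 / n) * ENNReal.ofReal E +
           ENNReal.ofReal (3 * ‖v‖ ^ 2 / n) * ENNReal.ofReal E
            + ENNReal.ofReal (‖v‖ ^ 4 / n ^ 3) * ENNReal.ofReal K) := by
          apply Finset.sum_le_sum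
          intro j hj
          have hj := Finset.mem_range.1 hj
          have hvS : volume S ≤ ENNReal.ofReal K := by
            rw [hK, ofReal_measureReal measure_ball_lt_top.ne]
            exact measure_mono inter_subset_left
          gcongr
          · exact hVj j (by omega)
          · exact hVj (j + 1) (by omega)
      _ = ENNReal.ofReal (n * (3 * ‖v‖ ^ 2 / n * E + 3 * ‖v‖ ^ 2 / n * E + ‖v‖ ^ 4 / n ^ 3 * K)) := by
          have hE := h.hE
          rw [Finset.sum_const, Finset.card_range, nsmul_eq_mul,
            ENNReal.ofReal_mul hN0.le,
            ENNReal.ofReal_add (p := 3 * ‖v‖ ^ 2 / n * E + 3 * ‖v‖ ^ 2 / n * E)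
              (by positivity) (by positivity),
            ENNReal.ofReal_add (p := 3 * ‖v‖ ^ 2 / n * E) (by positivity) (by positivity),
            ENNReal.ofReal_mul (q := E) (by positivity), ENNReal.ofReal_mul (q := K) (by positivity)]
          congr 1
          rw [hn, ← Nat.cast_succ, ENNReal.ofReal_natCast]
      _ ≤ _ := by
          apply ENNReal.ofReal_le_ofReal
          have e : n * (3 * ‖v‖ ^ 2 / n * E + 3 * ‖v‖ ^ 2 / n * E + ‖v‖ ^ 4 / n ^ 3 * K)
            = 6 * ‖v‖ ^ 2 * E + (‖v‖ ^ 4 * K) * (1 / n ^ 2) := by field_simp; ring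
          rw [e]
          have hn1 : 1 ≤ n := by rw [hn]; linarith [(Nat.cast_nonneg N : (0 : ℝ) ≤ N)]
          gcongr
          nlinarith
  have hlim : Filter.Tendsto (fun N : ℕ => ENNReal.ofReal
      (6 * ‖v‖ ^ 2 * E + (‖v‖ ^ 4 * K) * (1 / ((N : ℝ) + 1)))) Filter.atTop
      (𝓝 (ENNReal.ofReal (6 * ‖v‖ ^ 2 * E))) := by
    apply ENNReal.tendsto_ofReal
    have := (tendsto_one_div_add_atTop_nhds_zero_nat (𝕜 := ℝ)).const_mul (‖v‖ ^ 4 * K)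
    simpa using this.const_add (6 * ‖v‖ ^ 2 * E)
  exact ge_of_tendsto' hlim hmain

end

/-! ### The mollifier -/

/-- The (unnormalized) radial mollifier `(1 - |y|²)₊⁴`. -/
def moll {d : ℕ} (y : Ed d) : ℝ := (max (1 - ‖y‖ ^ 2) 0) ^ 4

/-- The mass of the mollifier. -/
def mollMass (d : ℕ) : ℝ := ∫ y : Ed d, moll y

/-- The mollification of `f` at scale `t`, multiplied by `mollMass`. -/
def mollify {d : ℕ} (f : Ed d → ℝ) (t : ℝ) (x : Ed d) : ℝ := ∫ y, f (x - t • y) * moll y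

lemma moll_cont {d : ℕ} : Continuous (moll : Ed d → ℝ) := by
  unfold moll; fun_prop

lemma moll_nonneg {d : ℕ} (y : Ed d) : 0 ≤ moll y := by
  unfold moll; positivity

lemma moll_le_one {d : ℕ} (y : Ed d) : moll y ≤ 1 := by
  unfold moll
  apply pow_le_one₀ (le_max_right _ _)
  exact max_le (by linarith [sq_nonneg ‖y‖]) zero_le_one

lemma moll_eq_zero {d : ℕ} {y : Ed d} (hy : y ∉ ball (0 : Ed d) 1) : moll y = 0 := by
  rw [mem_ball_zero_iff, not_lt] at hy
  unfold moll
  rw [max_eq_right (by nlinarith)]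
  norm_num

lemma moll_compact {d : ℕ} : HasCompactSupport (moll : Ed d → ℝ) :=
  HasCompactSupport.of_support_subset_isCompact (isCompact_closedBall (0 : Ed d) 1) fun y hy => by
    by_contra h
    exact hy (moll_eq_zero fun h' => h (ball_subset_closedBall h'))

lemma mul_moll_integrable {d : ℕ} {u : Ed d → ℝ} (hu : Continuous u) :
    Integrable (fun y => u y * moll y) :=
  (hu.mul moll_cont).integrable_of_hasCompactSupport moll_compact.mul_left

lemma moll_integrable {d : ℕ} : Integrable (moll : Ed d → ℝ) :=
  moll_cont.integrable_of_hasCompactSupport moll_compact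

lemma mollMass_pos (d : ℕ) : 0 < mollMass d := by
  unfold mollMass
  refine moll_cont.integral_pos_of_hasCompactSupport_nonneg_nonzero moll_compact moll_nonneg
    (x := (0 : Ed d)) ?_
  simp [moll]

lemma sq_integral_le {α : Type*} [MeasurableSpace α] (m : Measure α) [IsFiniteMeasure m]
    {a : α → ℝ} (h1 : Integrable a m) (h2 : Integrable (fun x => a x ^ 2) m) :
    (∫ x, a x ∂m) ^ 2 ≤ m.real univ * ∫ x, a x ^ 2 ∂m := by
  set I := ∫ x, a x ∂m with hI
  set M := m.real univ with hM
  rcases (measureReal_nonneg (μ := m) (s := univ)).eq_or_lt with h0 | h0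
  · have hm0 : m = 0 := by
      have := (measureReal_eq_zero_iff (μ := m) (s := univ)).1 h0.symm
      exact Measure.measure_univ_eq_zero.1 this
    rw [hI, hm0]; simp
  · have h3 : 0 ≤ ∫ x, (M * a x - I) ^ 2 ∂m := integral_nonneg fun x => sq_nonneg _
    have h4 : ∫ x, (M * a x - I) ^ 2 ∂m
        = M ^ 2 * (∫ x, a x ^ 2 ∂m) - 2 * M * I * I + M * I ^ 2 := by
      have e : (fun x => (M * a x - I) ^ 2)
          = fun x => (M ^ 2 * a x ^ 2 - (2 * M * I) * a x) + I ^ 2 := by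
        ext x; ring
      have i1 : Integrable (fun x => M ^ 2 * a x ^ 2) m := h2.const_mul _
      have i2 : Integrable (fun x => (2 * M * I) * a x) m := h1.const_mul _
      have i3 : Integrable (fun x => M ^ 2 * a x ^ 2 - (2 * M * I) * a x) m := i1.sub i2
      rw [e, integral_add i3 (integrable_const _),
        integral_sub i1 i2, integral_const_mul, integral_const_mul,
        integral_const, smul_eq_mul]
    rw [h4] at h3
    have h5 : 0 ≤ M * (M * (∫ x, a x ^ 2 ∂m) - I ^ 2) := by nlinarith
    have := nonneg_of_mul_nonneg_right h5 h0
    linarith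

lemma moll_jensen {d : ℕ} {u : Ed d → ℝ} (hu : Continuous u) (c : ℝ) :
    ENNReal.ofReal ((mollMass d * c - ∫ y, u y * moll y) ^ 2)
      ≤ ENNReal.ofReal (volume.real (ball (0 : Ed d) 1)) *
        ∫⁻ y in ball (0 : Ed d) 1, ENNReal.ofReal ((c - u y) ^ 2) := by
  have hintg : ∀ w : Ed d → ℝ, Continuous w → IntegrableOn w (ball (0 : Ed d) 1) := fun w hw =>
    (hw.continuousOn.integrableOn_compact (isCompact_closedBall (0 : Ed d) 1)).mono_set
      ball_subset_closedBall
  have e1 : mollMass d * c - ∫ y, u y * moll y = ∫ y in ball (0 : Ed d) 1, (c - u y) * moll y := by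
    have : ∫ y in ball (0 : Ed d) 1, (c - u y) * moll y = ∫ y, (c - u y) * moll y := by
      apply setIntegral_eq_integral_of_forall_compl_eq_zero
      intro y hy
      rw [moll_eq_zero hy, mul_zero]
    rw [this, mollMass, ← integral_mul_const, ← integral_sub
      (moll_integrable.mul_const c) (mul_moll_integrable hu)]
    congr 1
    ext y; ring
  have hc1 : Continuous fun y => (c - u y) * moll y := by have := @moll_cont d; fun_prop
  have hc2 : Continuous fun y => (c - u y) ^ 2 := by fun_prop
  have hc3 : Continuous fun y => ((c - u y) * moll y) ^ 2 := by fun_prop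
  have : IsFiniteMeasure (volume.restrict (ball (0 : Ed d) 1)) :=
    isFiniteMeasure_restrict.2 measure_ball_lt_top.ne
  have h1 := sq_integral_le (volume.restrict (ball (0 : Ed d) 1)) (hintg _ hc1) (hintg _ hc3)
  have h2 : ∫ y in ball (0 : Ed d) 1, ((c - u y) * moll y) ^ 2
      ≤ ∫ y in ball (0 : Ed d) 1, (c - u y) ^ 2 := by
    apply integral_mono (hintg _ hc3) (hintg _ hc2)
    intro y
    simp only
    rw [mul_pow]
    exact mul_le_of_le_one_right (sq_nonneg _) (pow_le_one₀ (moll_nonneg y) (moll_le_one y))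
  rw [← ofReal_integral_eq_lintegral_ofReal (hintg _ hc2) (ae_of_all _ fun y => sq_nonneg _),
    ← ENNReal.ofReal_mul measureReal_nonneg, e1]
  apply ENNReal.ofReal_le_ofReal
  refine h1.trans ?_
  rw [measureReal_restrict_apply_univ]
  exact mul_le_mul_of_nonneg_left h2 measureReal_nonneg

section
variable {d : ℕ} {T : Ed d → Ed d} {ψ : Ed d → ℝ} {G A : Set (Ed d)}
    {P : Measure (Ed d × Ed d)} {κ E D : ℝ}

/-- Mollification at scale `ρ` moves the potential by `O(ρ)` in `L²`, relative to the energy. -/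
lemma Cfg.moll_close (h : Cfg T ψ G A P κ E D) {ρ : ℝ} (hρ : 0 < ρ) (hρ1 : ρ ≤ 1) :
    ∫⁻ x in ball (0 : Ed d) 1,
      ENNReal.ofReal ((mollMass d * pot ψ x - mollify (pot ψ) ρ x) ^ 2)
      ≤ ENNReal.ofReal (volume.real (ball (0 : Ed d) 1) ^ 2 * 6 * ρ ^ 2 * E) := by
  have hc := h.pot_cont
  set V := volume.real (ball (0 : Ed d) 1) with hV
  have hm : Measurable (Function.uncurry fun x y : Ed d =>
      ENNReal.ofReal ((pot ψ x - pot ψ (x - ρ • y)) ^ 2)) := by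
    apply Measurable.ennreal_ofReal
    apply Continuous.measurable
    fun_prop
  calc _ ≤ ∫⁻ x in ball (0 : Ed d) 1, ENNReal.ofReal V *
        ∫⁻ y in ball (0 : Ed d) 1, ENNReal.ofReal ((pot ψ x - pot ψ (x - ρ • y)) ^ 2) := by
        apply lintegral_mono
        intro x
        exact moll_jensen (u := fun y => pot ψ (x - ρ • y)) (by fun_prop) (pot ψ x)
    _ = ENNReal.ofReal V * ∫⁻ y in ball (0 : Ed d) 1, ∫⁻ x in ball (0 : Ed d) 1,
          ENNReal.ofReal ((pot ψ x - pot ψ (x - ρ • y)) ^ 2) := by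
        rw [lintegral_const_mul' _ _ ENNReal.ofReal_ne_top, lintegral_lintegral_swap hm.aemeasurable]
    _ ≤ ENNReal.ofReal V * ∫⁻ y in ball (0 : Ed d) 1, ENNReal.ofReal (6 * ρ ^ 2 * E) := by
        gcongr ENNReal.ofReal V * ?_
        apply setLIntegral_mono' measurableSet_ball
        intro y hy
        rw [mem_ball_zero_iff] at hy
        have hn : ‖-(ρ • y)‖ ≤ ρ := by
          rw [norm_neg, norm_smul, Real.norm_of_nonneg hρ.le]
          exact mul_le_of_le_one_right hρ.le hy.le
        calc _ ≤ ∫⁻ x in ball (0 : Ed d) 3 ∩ {x | x + -(ρ • y) ∈ ball (0 : Ed d) 3},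
              ENNReal.ofReal ((pot ψ (x + -(ρ • y)) - pot ψ x) ^ 2) := by
              refine (lintegral_mono_set (t := ball (0 : Ed d) 3 ∩
                {x | x + -(ρ • y) ∈ ball (0 : Ed d) 3}) ?_).trans (le_of_eq ?_)
              · intro x hx
                rw [mem_ball_zero_iff] at hx
                refine ⟨by rw [mem_ball_zero_iff]; linarith, ?_⟩
                rw [mem_ofPred_eq, mem_ball_zero_iff]
                exact (norm_add_le _ _).trans_lt (by linarith)
              · congr 1
                ext x
                rw [sub_eq_add_neg x]
                congr 1
                ring
          _ ≤ _ := h.diff_quot _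
          _ ≤ _ := by
              apply ENNReal.ofReal_le_ofReal
              have hE := h.hE
              gcongr
    _ = _ := by
        rw [setLIntegral_const, ← ofReal_measureReal (measure_ball_lt_top.ne), ← hV,
          ← ENNReal.ofReal_mul (by have := h.hE; positivity),
          ← ENNReal.ofReal_mul (by rw [hV]; positivity)]
        congr 1
        ring

/-- A Poincaré inequality, with respect to the mollified value at the origin. -/
lemma Cfg.poincare (h : Cfg T ψ G A P κ E D) :
    ∫⁻ x in ball (0 : Ed d) 2,
      ENNReal.ofReal ((mollMass d * pot ψ x - mollify (pot ψ) 1 0) ^ 2)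
      ≤ ENNReal.ofReal (volume.real (ball (0 : Ed d) 1) * volume.real (ball (0 : Ed d) 3)
          * 54 * E) := by
  have hc := h.pot_cont
  set V := volume.real (ball (0 : Ed d) 1) with hV
  set V3 := volume.real (ball (0 : Ed d) 3) with hV3
  set k : Ed d → Ed d → ℝ≥0∞ := fun x v =>
    (ball (0 : Ed d) 3 ∩ {x | x + v ∈ ball (0 : Ed d) 3}).indicator
      (fun x => ENNReal.ofReal ((pot ψ (x + v) - pot ψ x) ^ 2)) x with hk
  have hm : Measurable (Function.uncurry k) := by
    have : Function.uncurry k = ({p : Ed d × Ed d | p.1 ∈ ball (0 : Ed d) 3} ∩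
        {p : Ed d × Ed d | p.1 + p.2 ∈ ball (0 : Ed d) 3}).indicator
        (fun p => ENNReal.ofReal ((pot ψ (p.1 + p.2) - pot ψ p.1) ^ 2)) := by
      ext ⟨x, v⟩
      simp only [hk, Function.uncurry, indicator]
      rfl
    rw [this]
    apply Measurable.indicator
    · apply Measurable.ennreal_ofReal
      apply Continuous.measurable
      fun_prop
    · exact (measurableSet_ball.preimage measurable_fst).inter
        (measurableSet_ball.preimage (measurable_fst.add measurable_snd))
  calc _ ≤ ∫⁻ x in ball (0 : Ed d) 2, ENNReal.ofReal V *
        ∫⁻ y in ball (0 : Ed d) 1, ENNReal.ofReal ((pot ψ x - pot ψ (0 - (1 : ℝ) • y)) ^ 2) := by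
        apply lintegral_mono
        intro x
        exact moll_jensen (u := fun y => pot ψ (0 - (1 : ℝ) • y)) (by fun_prop) (pot ψ x)
    _ ≤ ∫⁻ x in ball (0 : Ed d) 2, ENNReal.ofReal V * ∫⁻ v in ball (0 : Ed d) 3, k x v := by
        apply setLIntegral_mono' measurableSet_ball
        intro x hx
        gcongr ENNReal.ofReal V * ?_
        rw [mem_ball_zero_iff] at hx
        -- substitute `y = - x - v`
        have hmp : MeasurePreserving (fun y : Ed d => -x - y) volume volume :=
          measurePreserving_sub_left volume (-x)
        have hm1 : Measurable ((ball (0 : Ed d) 3).indicator (k x)) :=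
          (hm.comp (measurable_const.prodMk measurable_id)).indicator measurableSet_ball
        rw [← lintegral_indicator (measurableSet_ball (x := (0 : Ed d)) (ε := 3)),
          ← lintegral_indicator (measurableSet_ball (x := (0 : Ed d)) (ε := 1)),
          ← hmp.lintegral_comp hm1]
        apply lintegral_mono
        intro y
        by_cases hy : y ∈ ball (0 : Ed d) 1
        · have hy' := hy
          rw [mem_ball_zero_iff] at hy'
          have e : x + (-x - y) = -y := by abel
          have i1 : -x - y ∈ ball (0 : Ed d) 3 := by
            rw [mem_ball_zero_iff]
            calc ‖-x - y‖ ≤ ‖-x‖ + ‖y‖ := norm_sub_le _ _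
              _ < 3 := by rw [norm_neg]; linarith
          have i2 : x ∈ ball (0 : Ed d) 3 ∩ {x' | x' + (-x - y) ∈ ball (0 : Ed d) 3} := by
            refine ⟨by rw [mem_ball_zero_iff]; linarith, ?_⟩
            rw [mem_ofPred_eq, e, mem_ball_zero_iff, norm_neg]
            linarith
          simp only
          rw [indicator_of_mem hy, indicator_of_mem i1, hk]
          simp only
          rw [indicator_of_mem i2, e]
          apply le_of_eq
          congr 1
          rw [one_smul, zero_sub]
          ring
        · rw [indicator_of_notMem hy]
          exact zero_le
    _ = ENNReal.ofReal V * ∫⁻ v in ball (0 : Ed d) 3, ∫⁻ x in ball (0 : Ed d) 2, k x v := by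
        rw [lintegral_const_mul' _ _ ENNReal.ofReal_ne_top, lintegral_lintegral_swap hm.aemeasurable]
    _ ≤ ENNReal.ofReal V * ∫⁻ v in ball (0 : Ed d) 3, ENNReal.ofReal (54 * E) := by
        gcongr ENNReal.ofReal V * ?_
        apply setLIntegral_mono' measurableSet_ball
        intro v hv
        rw [mem_ball_zero_iff] at hv
        have hSm : MeasurableSet (ball (0 : Ed d) 3 ∩ {x | x + v ∈ ball (0 : Ed d) 3}) :=
          measurableSet_ball.inter (measurableSet_ball.preimage (measurable_add_const v))
        calc ∫⁻ x in ball (0 : Ed d) 2, k x v ≤ ∫⁻ x, k x v := setLIntegral_le_lintegral _ _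
          _ = _ := lintegral_indicator hSm _
          _ ≤ _ := h.diff_quot v
          _ ≤ _ := by
              apply ENNReal.ofReal_le_ofReal
              have hE := h.hE
              have : ‖v‖ ^ 2 ≤ 9 := by nlinarith [norm_nonneg v]
              nlinarith
    _ = _ := by
        rw [setLIntegral_const, ← ofReal_measureReal (measure_ball_lt_top.ne), ← hV3,
          ← ENNReal.ofReal_mul (by have := h.hE; positivity),
          ← ENNReal.ofReal_mul (by rw [hV]; positivity)]
        congr 1
        ring

end

/-! ### Marginals and the linearized equation -/

section
variable {d : ℕ} {T : Ed d → Ed d} {ψ : Ed d → ℝ} {G A : Set (Ed d)}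
    {P : Measure (Ed d × Ed d)} {κ E D : ℝ}

lemma Cfg.lint_fst_le (h : Cfg T ψ G A P κ E D) {g : Ed d → ℝ≥0∞} (hg : Measurable g) :
    ∫⁻ p, g p.1 ∂P ≤ ∫⁻ z, g z := by
  rw [← lintegral_map hg measurable_fst, h.fst]
  exact setLIntegral_le_lintegral _ _

lemma Cfg.lint_snd (h : Cfg T ψ G A P κ E D) {g : Ed d → ℝ≥0∞} (hg : Measurable g)
    (h0 : ∀ x, x ∉ ball (0 : Ed d) 4 → g x = 0) :
    ∫⁻ p, g p.2 ∂P = ENNReal.ofReal κ * ∫⁻ x, g x := by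
  have hi : (ball (0 : Ed d) 4).indicator g = g := by
    ext x
    by_cases hx : x ∈ ball (0 : Ed d) 4
    · rw [indicator_of_mem hx]
    · rw [indicator_of_notMem hx, h0 x hx]
  rw [← lintegral_map hg measurable_snd, ← hi, lintegral_indicator measurableSet_ball, h.snd,
    lintegral_smul_measure, lintegral_indicator measurableSet_ball, smul_eq_mul]

/-- Up to a null set, all points of the ball of radius `3` take part in the coupling `P`. -/
lemma Cfg.ball_subset (h : Cfg T ψ G A P κ E D) {s : ℝ} (hs1 : s ≤ 1 / 2)
    (hs : ∀ z ∈ G, (‖z‖ < 3 ∨ ‖T z‖ < 3) → ‖T z - z‖ ≤ s) :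
    ∀ᵐ z ∂(volume : Measure (Ed d)), z ∈ ball (0 : Ed d) 3 → z ∈ A := by
  filter_upwards [h.aeG] with z hz hz3
  rw [mem_ball_zero_iff] at hz3
  have hz4 : z ∈ ball (0 : Ed d) 4 := by rw [mem_ball_zero_iff]; linarith
  refine h.inA z hz4 ?_
  have h1 := hs z (hz hz4) (Or.inl hz3)
  rw [mem_ball_zero_iff]
  calc ‖T z‖ = ‖(T z - z) + z‖ := by rw [sub_add_cancel]
    _ ≤ ‖T z - z‖ + ‖z‖ := norm_add_le _ _
    _ < 4 := by linarith

lemma Cfg.int_fst (h : Cfg T ψ G A P κ E D) {s : ℝ} (hs1 : s ≤ 1 / 2)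
    (hs : ∀ z ∈ G, (‖z‖ < 3 ∨ ‖T z‖ < 3) → ‖T z - z‖ ≤ s) {g : Ed d → ℝ} (hg : Measurable g)
    (h0 : ∀ x, x ∉ ball (0 : Ed d) 3 → g x = 0) :
    ∫ p, g p.1 ∂P = ∫ z, g z := by
  rw [← integral_map measurable_fst.aemeasurable hg.aestronglyMeasurable, h.fst,
    ← integral_indicator h.measA]
  apply integral_congr_ae
  filter_upwards [h.ball_subset hs1 hs] with z hz
  by_cases hz3 : z ∈ ball (0 : Ed d) 3
  · rw [indicator_of_mem (hz hz3)]
  · by_cases hzA : z ∈ A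
    · rw [indicator_of_mem hzA]
    · rw [indicator_of_notMem hzA, h0 z hz3]

lemma Cfg.int_snd (h : Cfg T ψ G A P κ E D) {g : Ed d → ℝ} (hg : Measurable g)
    (h0 : ∀ x, x ∉ ball (0 : Ed d) 4 → g x = 0) :
    ∫ p, g p.2 ∂P = κ * ∫ x, g x := by
  have hi : (ball (0 : Ed d) 4).indicator g = g := by
    ext x
    by_cases hx : x ∈ ball (0 : Ed d) 4
    · rw [indicator_of_mem hx]
    · rw [indicator_of_notMem hx, h0 x hx]
  rw [← integral_map measurable_snd.aemeasurable hg.aestronglyMeasurable, ← hi,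
    integral_indicator measurableSet_ball, h.snd,
    integral_smul_measure, integral_indicator measurableSet_ball, smul_eq_mul,
    ENNReal.toReal_ofReal h.hκ]

/-- An a priori bound for the density `κ`. -/
def kapMax (d : ℕ) : ℝ :=
  (volume.real (ball (0 : Ed d) 3) + 1) / volume.real (ball (0 : Ed d) 1)

lemma volB_pos (d : ℕ) {r : ℝ} (hr : 0 < r) : 0 < volume.real (ball (0 : Ed d) r) :=
  ENNReal.toReal_pos (measure_ball_pos _ _ hr).ne' measure_ball_lt_top.ne

lemma kapMax_pos (d : ℕ) : 0 < kapMax d := by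
  unfold kapMax
  have := volB_pos d (r := 1) one_pos
  positivity

lemma Cfg.kap_le (h : Cfg T ψ G A P κ E D) {s : ℝ} (hs1 : s ≤ 1 / 2)
    (hs : ∀ z ∈ G, (‖z‖ < 3 ∨ ‖T z‖ < 3) → ‖T z - z‖ ≤ s) (hD1 : D ≤ 1) : κ ≤ kapMax d := by
  have h1 := h.lint_snd (g := (ball (0 : Ed d) 1).indicator 1)
    (measurable_one.indicator measurableSet_ball) (fun x hx => by
      rw [indicator_of_notMem]
      intro hx'
      exact hx (ball_subset_ball (by norm_num) hx'))
  rw [lintegral_indicator_one measurableSet_ball] at h1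
  have h2 : ∫⁻ p, (ball (0 : Ed d) 1).indicator 1 p.2 ∂P
      ≤ ∫⁻ p, ((ball (0 : Ed d) 3).indicator (1 : Ed d → ℝ≥0∞) p.1
        + ENNReal.ofReal (‖T p.1 - p.2‖ ^ 2)) ∂P := by
    apply lintegral_mono_ae
    filter_upwards [h.PG] with p hp
    by_cases hx : p.2 ∈ ball (0 : Ed d) 1
    · rw [indicator_of_mem hx]
      rw [mem_ball_zero_iff] at hx
      by_cases hT : ‖T p.1 - p.2‖ < 1
      · have hT3 : ‖T p.1‖ < 2 := by
          calc ‖T p.1‖ = ‖(T p.1 - p.2) + p.2‖ := by rw [sub_add_cancel]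
            _ ≤ ‖T p.1 - p.2‖ + ‖p.2‖ := norm_add_le _ _
            _ < 2 := by linarith
        have h3 := hs p.1 hp (Or.inr (by linarith))
        have : p.1 ∈ ball (0 : Ed d) 3 := by
          rw [mem_ball_zero_iff]
          calc ‖p.1‖ = ‖T p.1 - (T p.1 - p.1)‖ := by rw [sub_sub_cancel]
            _ ≤ ‖T p.1‖ + ‖T p.1 - p.1‖ := norm_sub_le _ _
            _ < 3 := by linarith
        rw [indicator_of_mem this]
        exact le_self_add
      · push Not at hT
        calc (1 : ℝ≥0∞) = ENNReal.ofReal 1 := by simp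
          _ ≤ ENNReal.ofReal (‖T p.1 - p.2‖ ^ 2) := ENNReal.ofReal_le_ofReal (by nlinarith)
          _ ≤ _ := le_add_self
    · rw [indicator_of_notMem hx]
      exact zero_le
  have h3 : ∫⁻ p, ((ball (0 : Ed d) 3).indicator (1 : Ed d → ℝ≥0∞) p.1
        + ENNReal.ofReal (‖T p.1 - p.2‖ ^ 2)) ∂P
        ≤ volume (ball (0 : Ed d) 3) + ENNReal.ofReal 1 := by
    have hm3 : Measurable fun p : Ed d × Ed d =>
        (ball (0 : Ed d) 3).indicator (1 : Ed d → ℝ≥0∞) p.1 :=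
      (measurable_one.indicator measurableSet_ball).comp measurable_fst
    rw [lintegral_add_left hm3]
    apply add_le_add
    · refine (h.lint_fst_le (measurable_one.indicator measurableSet_ball)).trans ?_
      rw [lintegral_indicator_one measurableSet_ball]
    · exact h.cost.trans (ENNReal.ofReal_le_ofReal hD1)
  rw [h1] at h2
  have h4 := h2.trans h3
  rw [← ofReal_measureReal (measure_ball_lt_top.ne), ← ofReal_measureReal (measure_ball_lt_top.ne),
    ← ENNReal.ofReal_mul h.hκ, ← ENNReal.ofReal_add measureReal_nonneg zero_le_one,
    ENNReal.ofReal_le_ofReal_iff (by positivity)] at h4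
  unfold kapMax
  rwa [le_div_iff₀ (volB_pos d one_pos)]

/-- `ζ` is a test function supported in the ball of radius `2`, with gradient `ξ`; the number `M`
bounds its first and second derivatives. -/
structure IsTest {d : ℕ} (ζ : Ed d → ℝ) (ξ : Ed d → Ed d) (M : ℝ) : Prop where
  cont : Continuous ζ
  contξ : Continuous ξ
  supp : ∀ x, x ∉ ball (0 : Ed d) 2 → ζ x = 0
  suppξ : ∀ x, x ∉ ball (0 : Ed d) 2 → ξ x = 0
  lip : ∀ a b, |ζ a - ζ b| ≤ M * ‖a - b‖
  bdd : ∀ a, ‖ξ a‖ ≤ M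
  taylor : ∀ a b, |ζ b - ζ a - inner ℝ (ξ a) (b - a)| ≤ M * ‖b - a‖ ^ 2

lemma integrable_of_ball {d : ℕ} {g : Ed d → ℝ} (hg : Continuous g) {r : ℝ}
    (h0 : ∀ x, x ∉ ball (0 : Ed d) r → g x = 0) : Integrable g :=
  hg.integrable_of_hasCompactSupport
    (HasCompactSupport.of_support_subset_isCompact (isCompact_closedBall (0 : Ed d) r) fun y hy => by
      by_contra h
      exact hy (h0 y fun h' => h (ball_subset_closedBall h')))

/-- The constant in the linearized equation. -/
def weakC (d : ℕ) : ℝ :=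
  1 + volume.real (ball (0 : Ed d) 3) + kapMax d * volume.real (ball (0 : Ed d) 2)

/-- The displacement `T - id` solves `- div (T - id) = κ - 1` weakly, up to an error which is
quadratic in the displacement and linear in the data. -/
lemma Cfg.weak_eq (h : Cfg T ψ G A P κ E D) {s : ℝ} (hs1 : s ≤ 1 / 2)
    (hs : ∀ z ∈ G, (‖z‖ < 3 ∨ ‖T z‖ < 3) → ‖T z - z‖ ≤ s) {γ : ℝ} (hγ : 0 < γ) (hDγ : D ≤ γ ^ 2)
    (hD1 : D ≤ 1) {ζ : Ed d → ℝ} {ξ : Ed d → Ed d} {M : ℝ} (hζ : IsTest ζ ξ M) :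
    |(∫ z, inner ℝ (ξ z) (T z - z)) - (κ - 1) * ∫ z, ζ z| ≤ weakC d * M * (E + γ) := by
  have hM : 0 ≤ M := (norm_nonneg _).trans (hζ.bdd 0)
  have := h.fin
  have hTm := h.meas
  have hκ1 := h.kap_le hs1 hs hD1
  have hζm := hζ.cont.measurable
  have hξm := hζ.contξ.measurable
  have hinm : Measurable fun z => inner ℝ (ξ z) (T z - z) := by fun_prop
  have hin0 : ∀ z, z ∉ ball (0 : Ed d) 2 → inner ℝ (ξ z) (T z - z) = 0 := fun z hz => by
    rw [hζ.suppξ z hz, inner_zero_left]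
  have hsub : ∀ {x : Ed d}, x ∉ ball (0 : Ed d) 3 → x ∉ ball (0 : Ed d) 2 := fun hx hx' =>
    hx (ball_subset_ball (by norm_num) hx')
  have hsub4 : ∀ {x : Ed d}, x ∉ ball (0 : Ed d) 4 → x ∉ ball (0 : Ed d) 2 := fun hx hx' =>
    hx (ball_subset_ball (by norm_num) hx')
  -- boundedness of `ζ`
  obtain ⟨Z, hZ⟩ : ∃ Z, ∀ x, ‖ζ x‖ ≤ Z := by
    have hcs : HasCompactSupport ζ :=
      HasCompactSupport.of_support_subset_isCompact (isCompact_closedBall (0 : Ed d) 2)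
        fun y hy => by
          by_contra h
          exact hy (hζ.supp y fun h' => h (ball_subset_closedBall h'))
    exact hcs.exists_bound_of_continuous hζ.cont
  have i1 : Integrable (fun p : Ed d × Ed d => ζ p.1) P :=
    (integrable_const Z).mono' (hζm.comp measurable_fst).aestronglyMeasurable
      (ae_of_all _ fun p => hZ p.1)
  have i2 : Integrable (fun p : Ed d × Ed d => ζ p.2) P :=
    (integrable_const Z).mono' (hζm.comp measurable_snd).aestronglyMeasurable
      (ae_of_all _ fun p => hZ p.2)
  have i3 : Integrable (fun p : Ed d × Ed d => inner ℝ (ξ p.1) (T p.1 - p.1)) P := by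
    refine (integrable_const (M * (1 / 2))).mono' (hinm.comp measurable_fst).aestronglyMeasurable ?_
    filter_upwards [h.PG] with p hp
    by_cases hz : p.1 ∈ ball (0 : Ed d) 2
    · have := hs p.1 hp (Or.inl (by rw [mem_ball_zero_iff] at hz; linarith))
      calc _ ≤ ‖ξ p.1‖ * ‖T p.1 - p.1‖ := norm_inner_le_norm _ _
        _ ≤ M * (1 / 2) := by
          gcongr
          · exact hζ.bdd _
          · linarith
    · rw [hin0 _ hz, norm_zero]; positivity
  have e1 : ∫ p, (ζ p.2 - ζ p.1 - inner ℝ (ξ p.1) (T p.1 - p.1)) ∂P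
      = κ * (∫ z, ζ z) - (∫ z, ζ z) - ∫ z, inner ℝ (ξ z) (T z - z) := by
    have i12 : Integrable (fun p : Ed d × Ed d => ζ p.2 - ζ p.1) P := i2.sub i1
    rw [integral_sub i12 i3, integral_sub i2 i1,
      h.int_snd hζm fun x hx => hζ.supp x (hsub4 hx),
      h.int_fst hs1 hs hζm fun x hx => hζ.supp x (hsub hx),
      h.int_fst hs1 hs hinm fun x hx => hin0 x (hsub hx)]
  have e2 : (∫ z, inner ℝ (ξ z) (T z - z)) - (κ - 1) * ∫ z, ζ z
      = - ∫ p, (ζ p.2 - ζ p.1 - inner ℝ (ξ p.1) (T p.1 - p.1)) ∂P := by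
    rw [e1]; ring
  rw [e2, abs_neg]
  have hE := h.hE
  have hV3 := (volB_pos d (r := 3) (by norm_num)).le
  have hV2 := (volB_pos d (r := 2) (by norm_num)).le
  have hK := (kapMax_pos d).le
  have hrhs : 0 ≤ weakC d * M * (E + γ) := by unfold weakC; positivity
  -- the pointwise bound
  set q3 : Ed d → ℝ≥0∞ := (ball (0 : Ed d) 3).indicator 1 with hq3
  set q2 : Ed d → ℝ≥0∞ := (ball (0 : Ed d) 2).indicator 1 with hq2
  set qv : Ed d → ℝ≥0∞ := (ball (0 : Ed d) 4).indicator
    (fun z => ENNReal.ofReal (‖T z - z‖ ^ 2)) with hqv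
  have mq3 : Measurable q3 := measurable_one.indicator measurableSet_ball
  have mq2 : Measurable q2 := measurable_one.indicator measurableSet_ball
  have mqv : Measurable qv := Measurable.indicator (by fun_prop) measurableSet_ball
  have hpt : ∀ᵐ p ∂P, ‖ζ p.2 - ζ p.1 - inner ℝ (ξ p.1) (T p.1 - p.1)‖ₑ
      ≤ ENNReal.ofReal M * (ENNReal.ofReal (1 / (2 * γ)) * ENNReal.ofReal (‖T p.1 - p.2‖ ^ 2)
        + (ENNReal.ofReal γ * q3 p.1 + ENNReal.ofReal γ * q2 p.2) + qv p.1) := by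
    filter_upwards [h.PG] with p hp
    have b1 : ENNReal.ofReal |ζ p.2 - ζ (T p.1)|
        ≤ ENNReal.ofReal M * (ENNReal.ofReal (1 / (2 * γ)) * ENNReal.ofReal (‖T p.1 - p.2‖ ^ 2)
        + (ENNReal.ofReal γ * q3 p.1 + ENNReal.ofReal γ * q2 p.2)) := by
      by_cases hc : p.2 ∈ ball (0 : Ed d) 2 ∨ T p.1 ∈ ball (0 : Ed d) 2
      · have hq : 1 ≤ q3 p.1 + q2 p.2 := by
          rcases hc with hc | hc
          · rw [hq2, indicator_of_mem hc]; exact le_add_self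
          · rw [mem_ball_zero_iff] at hc
            have h3 := hs p.1 hp (Or.inr (by linarith))
            have : p.1 ∈ ball (0 : Ed d) 3 := by
              rw [mem_ball_zero_iff]
              calc ‖p.1‖ = ‖T p.1 - (T p.1 - p.1)‖ := by rw [sub_sub_cancel]
                _ ≤ ‖T p.1‖ + ‖T p.1 - p.1‖ := norm_sub_le _ _
                _ < 3 := by linarith
            rw [hq3, indicator_of_mem this]; exact le_self_add
        calc _ ≤ ENNReal.ofReal (M * (1 / (2 * γ) * ‖T p.1 - p.2‖ ^ 2 + γ)) := by
              apply ENNReal.ofReal_le_ofReal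
              refine (hζ.lip _ _).trans ?_
              gcongr
              rw [norm_sub_rev]
              set n := ‖T p.1 - p.2‖
              have : 1 / (2 * γ) * n ^ 2 + γ - n = ((n - γ) ^ 2 + γ ^ 2) / (2 * γ) := by
                field_simp; ring
              have : 0 ≤ ((n - γ) ^ 2 + γ ^ 2) / (2 * γ) := by positivity
              linarith
          _ = ENNReal.ofReal M * (ENNReal.ofReal (1 / (2 * γ)) *
                ENNReal.ofReal (‖T p.1 - p.2‖ ^ 2) + ENNReal.ofReal γ * 1) := by
              rw [ENNReal.ofReal_mul hM, ENNReal.ofReal_add (by positivity) hγ.le,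
                ENNReal.ofReal_mul (by positivity), mul_one]
          _ ≤ _ := by
              rw [← mul_add]
              gcongr
      · push Not at hc
        rw [hζ.supp _ hc.1, hζ.supp _ hc.2]
        simp
    have b2 : ENNReal.ofReal |ζ (T p.1) - ζ p.1 - inner ℝ (ξ p.1) (T p.1 - p.1)|
        ≤ ENNReal.ofReal M * qv p.1 := by
      by_cases hc : p.1 ∈ ball (0 : Ed d) 4
      · rw [hqv, indicator_of_mem hc, ← ENNReal.ofReal_mul hM]
        exact ENNReal.ofReal_le_ofReal (hζ.taylor _ _)
      · have hT : T p.1 ∉ ball (0 : Ed d) 2 := by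
          intro hT
          rw [mem_ball_zero_iff] at hT
          have h3 := hs p.1 hp (Or.inr (by linarith))
          apply hc
          rw [mem_ball_zero_iff]
          calc ‖p.1‖ = ‖T p.1 - (T p.1 - p.1)‖ := by rw [sub_sub_cancel]
            _ ≤ ‖T p.1‖ + ‖T p.1 - p.1‖ := norm_sub_le _ _
            _ < 4 := by linarith
        rw [hζ.supp _ hT, hζ.supp _ (hsub4 hc), hin0 _ (hsub4 hc)]
        simp
    rw [Real.enorm_eq_ofReal_abs]
    calc _ ≤ ENNReal.ofReal (|ζ p.2 - ζ (T p.1)|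
          + |ζ (T p.1) - ζ p.1 - inner ℝ (ξ p.1) (T p.1 - p.1)|) := by
          apply ENNReal.ofReal_le_ofReal
          refine le_trans (le_of_eq ?_) (abs_add_le _ _)
          congr 1
          ring
      _ ≤ _ := by
          rw [ENNReal.ofReal_add (abs_nonneg _) (abs_nonneg _), mul_add (ENNReal.ofReal M)]
          exact add_le_add b1 b2
  have hfin := (enorm_integral_le_lintegral_enorm _).trans (lintegral_mono_ae hpt)
  rw [Real.enorm_eq_ofReal_abs] at hfin
  rw [← ENNReal.ofReal_le_ofReal_iff hrhs]
  refine hfin.trans ?_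
  have me : Measurable fun p : Ed d × Ed d => ENNReal.ofReal (‖T p.1 - p.2‖ ^ 2) := by fun_prop
  have mq3' : Measurable fun p : Ed d × Ed d => q3 p.1 := mq3.comp measurable_fst
  have mqv' : Measurable fun p : Ed d × Ed d => qv p.1 := mqv.comp measurable_fst
  have mq2' : Measurable fun p : Ed d × Ed d => q2 p.2 := mq2.comp measurable_snd
  rw [lintegral_const_mul' _ _ ENNReal.ofReal_ne_top, lintegral_add_right _ mqv',
    lintegral_add_left (me.const_mul _), lintegral_add_left (mq3'.const_mul _),
    lintegral_const_mul _ me, lintegral_const_mul _ mq3', lintegral_const_mul _ mq2']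
  have c1 : ∫⁻ p, q3 p.1 ∂P ≤ ENNReal.ofReal (volume.real (ball (0 : Ed d) 3)) := by
    refine (h.lint_fst_le mq3).trans (le_of_eq ?_)
    rw [hq3, lintegral_indicator_one measurableSet_ball, ofReal_measureReal measure_ball_lt_top.ne]
  have c2 : ∫⁻ p, q2 p.2 ∂P ≤ ENNReal.ofReal (kapMax d * volume.real (ball (0 : Ed d) 2)) := by
    rw [h.lint_snd mq2 (fun x hx => by rw [hq2, indicator_of_notMem (hsub4 hx)]),
      hq2, lintegral_indicator_one measurableSet_ball, ENNReal.ofReal_mul hK,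
      ofReal_measureReal measure_ball_lt_top.ne]
    gcongr
  have c3 : ∫⁻ p, qv p.1 ∂P ≤ ENNReal.ofReal E := by
    refine (h.lint_fst_le mqv).trans (le_of_eq ?_)
    rw [hqv, lintegral_indicator measurableSet_ball, h.energy]
  calc _ ≤ ENNReal.ofReal M * (ENNReal.ofReal (1 / (2 * γ)) * ENNReal.ofReal D
        + (ENNReal.ofReal γ * ENNReal.ofReal (volume.real (ball (0 : Ed d) 3))
          + ENNReal.ofReal γ * ENNReal.ofReal (kapMax d * volume.real (ball (0 : Ed d) 2)))
        + ENNReal.ofReal E) := by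
        gcongr
        exact h.cost
    _ = ENNReal.ofReal (M * (1 / (2 * γ) * D + (γ * volume.real (ball (0 : Ed d) 3)
          + γ * (kapMax d * volume.real (ball (0 : Ed d) 2))) + E)) := by
        have hD := h.hD
        rw [← ENNReal.ofReal_mul (by positivity), ← ENNReal.ofReal_mul (by positivity),
          ← ENNReal.ofReal_mul (by positivity), ← ENNReal.ofReal_add (by positivity) (by positivity),
          ← ENNReal.ofReal_add (by positivity) (by positivity),
          ← ENNReal.ofReal_add (by positivity) (by positivity), ← ENNReal.ofReal_mul (by positivity)]
    _ ≤ _ := by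
        apply ENNReal.ofReal_le_ofReal
        have : 1 / (2 * γ) * D ≤ γ := by
          rw [div_mul_eq_mul_div, div_le_iff₀ (by positivity)]
          nlinarith
        unfold weakC
        set V3 := volume.real (ball (0 : Ed d) 3)
        set V2 := kapMax d * volume.real (ball (0 : Ed d) 2) with hV2'
        have hV2p : 0 ≤ V2 := by positivity
        have : 1 / (2 * γ) * D + (γ * V3 + γ * V2) + E ≤ (1 + V3 + V2) * (E + γ) := by
          nlinarith [mul_nonneg hV3 hE.le, mul_nonneg hV2p hE.le]
        calc _ ≤ M * ((1 + V3 + V2) * (E + γ)) := by gcongr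
          _ = _ := by ring

end

/-! ### Comparison of mollifications at different scales -/

/-- The truncated paraboloid `(1 - |y|²)₊`. -/
def rp {d : ℕ} (y : Ed d) : ℝ := max (1 - ‖y‖ ^ 2) 0

lemma rp_nonneg {d : ℕ} (y : Ed d) : 0 ≤ rp y := le_max_right _ _

lemma rp_le_one {d : ℕ} (y : Ed d) : rp y ≤ 1 :=
  max_le (by linarith [sq_nonneg ‖y‖]) zero_le_one

lemma rp_cont {d : ℕ} : Continuous (rp : Ed d → ℝ) := by
  unfold rp; fun_prop

lemma rp_eq_zero {d : ℕ} {y : Ed d} (hy : y ∉ ball (0 : Ed d) 1) : rp y = 0 := by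
  rw [mem_ball_zero_iff, not_lt] at hy
  unfold rp
  rw [max_eq_right (by nlinarith)]

lemma moll_eq {d : ℕ} (y : Ed d) : moll y = rp y ^ 4 := rfl

lemma rp_lip {d : ℕ} (a b : Ed d) : |rp a - rp b| ≤ 2 * ‖a - b‖ := by
  have e : ∀ y : Ed d, rp y = 1 - (min ‖y‖ 1) ^ 2 := fun y => by
    unfold rp
    rcases le_total ‖y‖ 1 with h | h
    · rw [min_eq_left h, max_eq_left (by nlinarith [norm_nonneg y])]
    · rw [min_eq_right h, max_eq_right (by nlinarith [norm_nonneg y])]; norm_num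
  have h1 : |min ‖b‖ 1 - min ‖a‖ 1| ≤ ‖a - b‖ := by
    have h2 := abs_min_sub_min_le_max ‖b‖ 1 ‖a‖ 1
    have h3 := abs_norm_sub_norm_le b a
    rw [norm_sub_rev] at h3
    refine h2.trans (max_le h3 ?_)
    simp
  have h4 : |min ‖b‖ 1 + min ‖a‖ 1| ≤ 2 := by
    have p1 : 0 ≤ min ‖b‖ 1 := le_min (norm_nonneg _) zero_le_one
    have p2 : 0 ≤ min ‖a‖ 1 := le_min (norm_nonneg _) zero_le_one
    rw [abs_of_nonneg (by positivity)]
    linarith [min_le_right ‖b‖ 1, min_le_right ‖a‖ 1]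
  rw [e, e]
  calc _ = |min ‖b‖ 1 + min ‖a‖ 1| * |min ‖b‖ 1 - min ‖a‖ 1| := by rw [← abs_mul]; congr 1; ring
    _ ≤ _ := by gcongr

/-- The primitive `(1 - |y|²)₊⁵ / 10`, whose gradient is `- moll y • y`. -/
def bump5 {d : ℕ} (y : Ed d) : ℝ := rp y ^ 5 / 10

lemma bump5_cont {d : ℕ} : Continuous (bump5 : Ed d → ℝ) := by
  have := @rp_cont d
  unfold bump5; fun_prop

lemma bump5_eq_zero {d : ℕ} {y : Ed d} (hy : y ∉ ball (0 : Ed d) 1) : bump5 y = 0 := by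
  unfold bump5; rw [rp_eq_zero hy]; norm_num

lemma bump5_lip {d : ℕ} (a b : Ed d) : |bump5 a - bump5 b| ≤ ‖a - b‖ := by
  have h := rp_lip a b
  have ha0 := rp_nonneg a
  have hb0 := rp_nonneg b
  have ha1 := rp_le_one a
  have hb1 := rp_le_one b
  unfold bump5
  set x := rp a
  set y := rp b
  have h5 : 0 ≤ x ^ 4 + x ^ 3 * y + x ^ 2 * y ^ 2 + x * y ^ 3 + y ^ 4 := by positivity
  have h6 : x ^ 4 + x ^ 3 * y + x ^ 2 * y ^ 2 + x * y ^ 3 + y ^ 4 ≤ 5 := by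
    have := pow_le_one₀ (n := 4) ha0 ha1
    have := pow_le_one₀ (n := 4) hb0 hb1
    have := mul_le_one₀ (pow_le_one₀ (n := 3) ha0 ha1) hb0 hb1
    have := mul_le_one₀ (pow_le_one₀ (n := 2) ha0 ha1) (by positivity) (pow_le_one₀ (n := 2) hb0 hb1)
    have := mul_le_one₀ ha1 (by positivity) (pow_le_one₀ (n := 3) hb0 hb1)
    linarith
  have e : x ^ 5 / 10 - y ^ 5 / 10
      = (x - y) * ((x ^ 4 + x ^ 3 * y + x ^ 2 * y ^ 2 + x * y ^ 3 + y ^ 4) / 10) := by ring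
  rw [e, abs_mul, abs_of_nonneg (a := _ / 10) (by positivity)]
  calc _ ≤ (2 * ‖a - b‖) * (5 / 10) := by gcongr
    _ = _ := by ring

lemma bump5_taylor {d : ℕ} (y y' : Ed d) :
    |bump5 y' - bump5 y + moll y * inner ℝ y (y' - y)| ≤ 9 * ‖y' - y‖ ^ 2 := by
  have hlip := rp_lip y' y
  have hsq : ‖y'‖ ^ 2 = ‖y‖ ^ 2 + 2 * inner ℝ y (y' - y) + ‖y' - y‖ ^ 2 := by
    have := norm_add_sq_real y (y' - y)
    rwa [add_sub_cancel] at this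
  have hcs := abs_real_inner_le_norm y (y' - y)
  rw [moll_eq]
  unfold bump5
  have ha0 := rp_nonneg y
  have hb0 := rp_nonneg y'
  have ha1 := rp_le_one y
  have hb1 := rp_le_one y'
  have hS : 0 ≤ rp y ^ 4 * (rp y' - rp y - (‖y‖ ^ 2 - ‖y'‖ ^ 2)) ∧
      rp y ^ 4 * (rp y' - rp y - (‖y‖ ^ 2 - ‖y'‖ ^ 2)) ≤ 9 * ‖y' - y‖ ^ 2 := by
    rcases le_total (1 - ‖y‖ ^ 2) 0 with h1 | h1
    · have : rp y = 0 := max_eq_right h1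
      rw [this]; constructor
      · norm_num
      · norm_num
    · have e1 : rp y = 1 - ‖y‖ ^ 2 := max_eq_left h1
      rcases le_total 0 (1 - ‖y'‖ ^ 2) with h2 | h2
      · have e2 : rp y' = 1 - ‖y'‖ ^ 2 := max_eq_left h2
        have e3 : rp y' - rp y - (‖y‖ ^ 2 - ‖y'‖ ^ 2) = 0 := by rw [e1, e2]; ring
        rw [e3, mul_zero]
        exact ⟨le_rfl, by positivity⟩
      · have e2 : rp y' = 0 := max_eq_right h2
        have hy1 : ‖y‖ ≤ 1 := by nlinarith [norm_nonneg y]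
        have hw : ‖y'‖ ^ 2 - ‖y‖ ^ 2 ≤ 2 * ‖y' - y‖ + ‖y' - y‖ ^ 2 := by
          have := (abs_le.1 hcs).2
          have : ‖y‖ * ‖y' - y‖ ≤ 1 * ‖y' - y‖ := by gcongr
          linarith
        have e3 : rp y' - rp y - (‖y‖ ^ 2 - ‖y'‖ ^ 2) = ‖y'‖ ^ 2 - 1 := by rw [e1, e2]; ring
        rw [e3]
        set r := rp y
        set w := ‖y'‖ ^ 2 - ‖y‖ ^ 2 with hwd
        set n := ‖y' - y‖
        have hn : 0 ≤ n := norm_nonneg _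
        have hr : r ≤ w := by rw [e1]; linarith
        have hw0 : 0 ≤ w := ha0.trans hr
        refine ⟨mul_nonneg (by positivity) (by linarith), ?_⟩
        have h3 : r ^ 4 * (‖y'‖ ^ 2 - 1) ≤ r * w := by
          have : r ^ 4 ≤ r := by
            calc r ^ 4 = r * r ^ 3 := by ring
              _ ≤ r * 1 := by gcongr; exact pow_le_one₀ ha0 ha1
              _ = r := mul_one r
          apply mul_le_mul this (by linarith [sq_nonneg ‖y‖]) (by linarith) ha0
        refine h3.trans ?_
        rcases le_total n 1 with hn1 | hn1
        · have : w ≤ 3 * n := by nlinarith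
          nlinarith
        · have : w ≤ 3 * n ^ 2 := by nlinarith
          nlinarith
  obtain ⟨hS0, hS1⟩ := hS
  have hQ : 0 ≤ rp y' ^ 5 - rp y ^ 5 - 5 * rp y ^ 4 * (rp y' - rp y) ∧
      rp y' ^ 5 - rp y ^ 5 - 5 * rp y ^ 4 * (rp y' - rp y) ≤ 40 * ‖y' - y‖ ^ 2 := by
    set a := rp y
    set b := rp y'
    have e : b ^ 5 - a ^ 5 - 5 * a ^ 4 * (b - a)
        = (b - a) ^ 2 * (b ^ 3 + 2 * a * b ^ 2 + 3 * a ^ 2 * b + 4 * a ^ 3) := by ring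
    have h1 : b ^ 3 + 2 * a * b ^ 2 + 3 * a ^ 2 * b + 4 * a ^ 3 ≤ 10 := by
      have := pow_le_one₀ (n := 3) ha0 ha1
      have := pow_le_one₀ (n := 3) hb0 hb1
      have := mul_le_one₀ (pow_le_one₀ (n := 2) ha0 ha1) hb0 hb1
      have := mul_le_one₀ ha1 (by positivity) (pow_le_one₀ (n := 2) hb0 hb1)
      linarith
    have h2 : (b - a) ^ 2 ≤ 4 * ‖y' - y‖ ^ 2 := by
      have := sq_le_sq' (by linarith [abs_nonneg (b - a), (abs_le.1 hlip).1]) (abs_le.1 hlip).2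
      linarith
    rw [e]
    refine ⟨by positivity, ?_⟩
    calc _ ≤ (4 * ‖y' - y‖ ^ 2) * 10 := by gcongr
      _ = _ := by ring
  obtain ⟨hQ0, hQ1⟩ := hQ
  have ha4 : rp y ^ 4 ≤ 1 := pow_le_one₀ ha0 ha1
  have ha40 : 0 ≤ rp y ^ 4 := by positivity
  set a := rp y
  set b := rp y'
  set n2 := ‖y' - y‖ ^ 2 with hn2
  have hn20 : 0 ≤ n2 := by positivity
  have e : b ^ 5 / 10 - a ^ 5 / 10 + a ^ 4 * inner ℝ y (y' - y)
      = (b ^ 5 - a ^ 5 - 5 * a ^ 4 * (b - a)) / 10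
        + a ^ 4 * (b - a - (‖y‖ ^ 2 - ‖y'‖ ^ 2)) / 2 - a ^ 4 * n2 / 2 := by
    rw [hsq]; ring
  have h7 : a ^ 4 * n2 ≤ n2 := mul_le_of_le_one_left hn20 ha4
  have h8 : 0 ≤ a ^ 4 * n2 := by positivity
  rw [e, abs_le]
  constructor <;> linarith

/-- The scaled and translated bump functions are admissible test functions. -/
lemma isTest_bump5 {d : ℕ} {x : Ed d} (hx : x ∈ ball (0 : Ed d) 1) {t : ℝ} (ht : 0 < t)
    (ht1 : t ≤ 1) :
    IsTest (fun z => bump5 (t⁻¹ • (x - z)))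
      (fun z => t⁻¹ • moll (t⁻¹ • (x - z)) • (t⁻¹ • (x - z))) (9 / t ^ 2) := by
  have hb := @bump5_cont d
  have hm := @moll_cont d
  rw [mem_ball_zero_iff] at hx
  have hti : 1 ≤ t⁻¹ := (one_le_inv₀ ht).2 ht1
  have hti0 : 0 < t⁻¹ := by positivity
  have e9 : 9 / t ^ 2 = 9 * (t⁻¹) ^ 2 := by rw [inv_pow]; rfl
  have hsupp : ∀ z, z ∉ ball (0 : Ed d) 2 → t⁻¹ • (x - z) ∉ ball (0 : Ed d) 1 := by
    intro z hz hz'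
    apply hz
    rw [mem_ball_zero_iff, norm_smul, Real.norm_of_nonneg hti0.le, inv_mul_lt_iff₀ ht,
      mul_one] at hz'
    rw [mem_ball_zero_iff]
    calc ‖z‖ = ‖x - (x - z)‖ := by rw [sub_sub_cancel]
      _ ≤ ‖x‖ + ‖x - z‖ := norm_sub_le _ _
      _ < 2 := by linarith
  have hn : ∀ a b : Ed d, ‖t⁻¹ • (x - a) - t⁻¹ • (x - b)‖ = t⁻¹ * ‖a - b‖ := by
    intro a b
    rw [← smul_sub, norm_smul, Real.norm_of_nonneg hti0.le, sub_sub_sub_cancel_left, norm_sub_rev]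
  refine ⟨by fun_prop, by fun_prop, fun z hz => bump5_eq_zero (hsupp z hz), fun z hz => ?_,
    fun a b => ?_, fun a => ?_, fun a b => ?_⟩
  · simp only [moll_eq_zero (hsupp z hz), zero_smul, smul_zero]
  · refine (bump5_lip _ _).trans ?_
    rw [hn, e9]
    gcongr
    nlinarith
  · rw [norm_smul, norm_smul, Real.norm_of_nonneg hti0.le, Real.norm_of_nonneg (moll_nonneg _), e9]
    have : moll (t⁻¹ • (x - a)) * ‖t⁻¹ • (x - a)‖ ≤ 1 := by
      by_cases h : t⁻¹ • (x - a) ∈ ball (0 : Ed d) 1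
      · exact mul_le_one₀ (moll_le_one _) (norm_nonneg _) (mem_ball_zero_iff.1 h).le
      · rw [moll_eq_zero h]; norm_num
    calc _ ≤ t⁻¹ * 1 := by gcongr
      _ ≤ _ := by nlinarith
  · have h1 := bump5_taylor (t⁻¹ • (x - a)) (t⁻¹ • (x - b))
    have e1 : t⁻¹ • (x - b) - t⁻¹ • (x - a) = - (t⁻¹ • (b - a)) := by
      rw [← smul_sub, ← smul_neg]; congr 1; abel
    rw [hn] at h1
    rw [e1] at h1
    have e2 : 9 * (t⁻¹ * ‖b - a‖) ^ 2 = 9 / t ^ 2 * ‖b - a‖ ^ 2 := by rw [e9]; ring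
    rw [e2] at h1
    refine le_trans (le_of_eq ?_) h1
    congr 1
    rw [inner_neg_right, real_inner_smul_right, real_inner_smul_left, real_inner_smul_left]
    ring

lemma integral_affine {d : ℕ} (g : Ed d → ℝ) (x : Ed d) {t : ℝ} (ht : 0 < t) :
    ∫ y, g (x - t • y) = (t ^ d)⁻¹ * ∫ z, g z := by
  have h1 := integral_comp_smul (volume : Measure (Ed d)) (fun w => g (x - w)) t
  rw [h1, integral_sub_left_eq_self, finrank_euclideanSpace_fin, smul_eq_mul,
    abs_of_nonneg (by positivity)]

lemma ae_affine {d : ℕ} {p : Ed d → Prop} (hp : ∀ᵐ z ∂(volume : Measure (Ed d)), p z) (x : Ed d)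
    {t : ℝ} (ht : 0 < t) : ∀ᵐ y ∂(volume : Measure (Ed d)), p (x - t • y) := by
  have h1 : ∀ᵐ w ∂(volume : Measure (Ed d)), p (x - w) :=
    (measurePreserving_sub_left volume x).quasiMeasurePreserving.ae hp
  rw [ae_iff] at h1 ⊢
  have h2 := addHaar_preimage_smul (volume : Measure (Ed d)) ht.ne' {w | ¬ p (x - w)}
  rw [h1, mul_zero] at h2
  exact h2

section
variable {d : ℕ} {T : Ed d → Ed d} {ψ : Ed d → ℝ} {G A : Set (Ed d)}
    {P : Measure (Ed d × Ed d)} {κ E D : ℝ}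

/-- The mass of `bump5`. -/
def bumpMass (d : ℕ) : ℝ := ∫ y : Ed d, bump5 y

lemma bumpMass_pos (d : ℕ) : 0 < bumpMass d := by
  unfold bumpMass
  refine bump5_cont.integral_pos_of_hasCompactSupport_nonneg_nonzero
    (HasCompactSupport.of_support_subset_isCompact (isCompact_closedBall (0 : Ed d) 1)
      fun y hy => by
        by_contra h
        exact hy (bump5_eq_zero fun h' => h (ball_subset_closedBall h')))
    (fun y => by have := rp_nonneg y; unfold bump5; positivity) (x := (0 : Ed d)) ?_
  simp [bump5, rp]

/-- The linearized equation tested with bump functions at scale `t`. -/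
lemma Cfg.flux (h : Cfg T ψ G A P κ E D) {s : ℝ} (hs1 : s ≤ 1 / 2)
    (hs : ∀ z ∈ G, (‖z‖ < 3 ∨ ‖T z‖ < 3) → ‖T z - z‖ ≤ s) {γ : ℝ} (hγ : 0 < γ) (hDγ : D ≤ γ ^ 2)
    (hD1 : D ≤ 1) {x : Ed d} (hx : x ∈ ball (0 : Ed d) 1) {t : ℝ} (ht : 0 < t) (ht1 : t ≤ 1) :
    |(∫ y, moll y * inner ℝ y (T (x - t • y) - (x - t • y))) - (κ - 1) * bumpMass d * t|
      ≤ 9 * weakC d / t ^ (d + 1) * (E + γ) := by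
  have h1 := h.weak_eq hs1 hs hγ hDγ hD1 (isTest_bump5 hx ht ht1)
  have ey : ∀ y : Ed d, t⁻¹ • (x - (x - t • y)) = y := fun y => by
    rw [sub_sub_cancel, smul_smul, inv_mul_cancel₀ ht.ne', one_smul]
  have e1 := integral_affine (fun z => bump5 (t⁻¹ • (x - z))) x ht
  have e2 := integral_affine (fun z => inner ℝ (t⁻¹ • moll (t⁻¹ • (x - z)) • (t⁻¹ • (x - z)))
    (T z - z)) x ht
  simp only [ey] at e1 e2
  have e3 : ∀ y : Ed d, inner ℝ (t⁻¹ • moll y • y) (T (x - t • y) - (x - t • y))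
      = t⁻¹ * (moll y * inner ℝ y (T (x - t • y) - (x - t • y))) := fun y => by
    rw [real_inner_smul_left, real_inner_smul_left]
  simp only [e3] at e2
  rw [integral_const_mul] at e2
  have htd : (0 : ℝ) < t ^ d := by positivity
  set J := ∫ y, moll y * inner ℝ y (T (x - t • y) - (x - t • y)) with hJ
  set I1 := ∫ z, bump5 (t⁻¹ • (x - z)) with hI1
  set I2 := ∫ z, inner ℝ (t⁻¹ • moll (t⁻¹ • (x - z)) • (t⁻¹ • (x - z))) (T z - z) with hI2
  have f1 : I1 = t ^ d * bumpMass d := by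
    unfold bumpMass; rw [e1]; field_simp
  have f2 : I2 = t ^ d * (t⁻¹ * J) := by rw [e2]; field_simp
  have f3 : I2 - (κ - 1) * I1 = (t ^ d * t⁻¹) * (J - (κ - 1) * bumpMass d * t) := by
    rw [f1, f2]; field_simp
  rw [f3, abs_mul, abs_of_pos (by positivity)] at h1
  have f4 : 9 * weakC d / t ^ (d + 1) * (E + γ)
      = (t ^ d * t⁻¹)⁻¹ * (weakC d * (9 / t ^ 2) * (E + γ)) := by
    field_simp
    ring
  rw [f4, le_inv_mul_iff₀ (by positivity)]
  exact h1

lemma Cfg.flux_integrable (h : Cfg T ψ G A P κ E D) {s : ℝ} (hs1 : s ≤ 1 / 2)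
    (hs : ∀ z ∈ G, (‖z‖ < 3 ∨ ‖T z‖ < 3) → ‖T z - z‖ ≤ s)
    {x : Ed d} (hx : x ∈ ball (0 : Ed d) 1) {t : ℝ} (ht : 0 < t) (ht1 : t ≤ 1) :
    Integrable fun y => moll y * inner ℝ y (T (x - t • y) - (x - t • y)) := by
  have hT := h.meas
  have hm := (@moll_cont d).measurable
  rw [mem_ball_zero_iff] at hx
  refine (moll_integrable (d := d)).mono' (by fun_prop) ?_
  filter_upwards [ae_affine h.aeG x ht] with y hy
  by_cases hy1 : y ∈ ball (0 : Ed d) 1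
  · have hy1' := mem_ball_zero_iff.1 hy1
    have hn : ‖x - t • y‖ < 2 := by
      calc _ ≤ ‖x‖ + ‖t • y‖ := norm_sub_le _ _
        _ ≤ ‖x‖ + 1 * ‖y‖ := by rw [norm_smul, Real.norm_of_nonneg ht.le]; gcongr
        _ < 2 := by linarith
    have h1 := hs _ (hy (mem_ball_zero_iff.2 (by linarith))) (Or.inl (by linarith))
    rw [norm_mul, Real.norm_of_nonneg (moll_nonneg y)]
    calc _ ≤ moll y * 1 := by
          gcongr
          · exact moll_nonneg y
          · refine (norm_inner_le_norm _ _).trans ?_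
            exact mul_le_one₀ hy1'.le (norm_nonneg _) (by linarith)
      _ = _ := mul_one _
  · rw [moll_eq_zero hy1]; simp

/-- The average density differs from `1` by at most the square root of the energy. -/
lemma Cfg.kap_sub_one (h : Cfg T ψ G A P κ E D) {s : ℝ} (hs1 : s ≤ 1 / 2)
    (hs : ∀ z ∈ G, (‖z‖ < 3 ∨ ‖T z‖ < 3) → ‖T z - z‖ ≤ s) {γ : ℝ} (hγ : 0 < γ) (hDγ : D ≤ γ ^ 2)
    (hD1 : D ≤ 1) :
    |κ - 1| * bumpMass d
      ≤ (1 + volume.real (ball (0 : Ed d) 1)) * √E + 9 * weakC d * (E + γ) := by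
  have h1 := h.flux hs1 hs hγ hDγ hD1 (x := 0) (mem_ball_self one_pos) one_pos le_rfl
  set e := √E with he
  have he0 : 0 < e := Real.sqrt_pos.2 h.hE
  have heE : e ^ 2 = E := Real.sq_sqrt h.hE.le
  have hTm := h.meas
  have h2 : |∫ y, moll y * inner ℝ y (T (0 - (1 : ℝ) • y) - (0 - (1 : ℝ) • y))|
      ≤ (1 + volume.real (ball (0 : Ed d) 1)) * e := by
    rw [← ENNReal.ofReal_le_ofReal_iff (by positivity), ← Real.enorm_eq_ofReal_abs]
    refine (enorm_integral_le_lintegral_enorm _).trans ?_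
    have h3 : ∀ y : Ed d, ‖moll y * inner ℝ y (T (0 - (1 : ℝ) • y) - (0 - (1 : ℝ) • y))‖ₑ
        ≤ ENNReal.ofReal e⁻¹ * (ball (0 : Ed d) 4).indicator
            (fun z => ENNReal.ofReal (‖T z - z‖ ^ 2)) (0 - y)
          + ENNReal.ofReal e * (ball (0 : Ed d) 1).indicator 1 y := by
      intro y
      rw [one_smul, Real.enorm_eq_ofReal_abs]
      by_cases hy : y ∈ ball (0 : Ed d) 1
      · have hy' := mem_ball_zero_iff.1 hy
        have hy4 : 0 - y ∈ ball (0 : Ed d) 4 := by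
          rw [mem_ball_zero_iff, zero_sub, norm_neg]; linarith
        rw [indicator_of_mem hy, indicator_of_mem hy4, Pi.one_apply, mul_one,
          ← ENNReal.ofReal_mul (by positivity), ← ENNReal.ofReal_add (by positivity) he0.le]
        apply ENNReal.ofReal_le_ofReal
        rw [abs_mul, abs_of_nonneg (moll_nonneg y)]
        set n := ‖T (0 - y) - (0 - y)‖
        have b1 : |inner ℝ y (T (0 - y) - (0 - y))| ≤ n := by
          refine (abs_real_inner_le_norm _ _).trans ?_
          exact mul_le_of_le_one_left (norm_nonneg _) hy'.le
        have b2 : moll y * |inner ℝ y (T (0 - y) - (0 - y))| ≤ n :=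
          (mul_le_of_le_one_left (abs_nonneg _) (moll_le_one y)).trans b1
        refine b2.trans ?_
        have b3 : e⁻¹ * n ^ 2 + e - n = e⁻¹ * ((n - e / 2) ^ 2 + 3 / 4 * e ^ 2) := by
          field_simp; ring
        have b4 : 0 ≤ e⁻¹ * ((n - e / 2) ^ 2 + 3 / 4 * e ^ 2) := by positivity
        linarith
      · rw [moll_eq_zero hy]; simp
    have m1 : Measurable ((ball (0 : Ed d) 4).indicator
        (fun z => ENNReal.ofReal (‖T z - z‖ ^ 2))) :=
      Measurable.indicator (by fun_prop) measurableSet_ball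
    have m2 : Measurable ((ball (0 : Ed d) 1).indicator (1 : Ed d → ℝ≥0∞)) :=
      measurable_one.indicator measurableSet_ball
    refine (lintegral_mono h3).trans (le_of_eq ?_)
    have m1' : Measurable fun y : Ed d => (ball (0 : Ed d) 4).indicator
        (fun z => ENNReal.ofReal (‖T z - z‖ ^ 2)) (0 - y) := m1.comp (by fun_prop)
    rw [lintegral_add_left (m1'.const_mul _), lintegral_const_mul _ m1', lintegral_const_mul _ m2,
      (measurePreserving_sub_left volume (0 : Ed d)).lintegral_comp m1,
      lintegral_indicator measurableSet_ball, lintegral_indicator_one measurableSet_ball, h.energy,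
      ← ofReal_measureReal measure_ball_lt_top.ne, ← ENNReal.ofReal_mul (by positivity),
      ← ENNReal.ofReal_mul (by positivity), ← ENNReal.ofReal_add (by have := h.hE; positivity)
        (by positivity), ← heE]
    congr 1
    field_simp
  rw [one_pow, div_one, mul_one] at h1
  have hb := bumpMass_pos d
  calc |κ - 1| * bumpMass d = |(κ - 1) * bumpMass d| := by rw [abs_mul, abs_of_pos hb]
    _ ≤ _ := by
      have := abs_sub_abs_le_abs_sub ((κ - 1) * bumpMass d)
        (∫ y, moll y * inner ℝ y (T (0 - (1 : ℝ) • y) - (0 - (1 : ℝ) • y)))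
      rw [abs_sub_comm] at this
      linarith

/-- The mollifications of the potential at scales `1` and `ρ` differ by a constant, up to an
error of higher order. This is where the equation enters. -/
lemma Cfg.scales (h : Cfg T ψ G A P κ E D) {s : ℝ} (hs1 : s ≤ 1 / 2)
    (hs : ∀ z ∈ G, (‖z‖ < 3 ∨ ‖T z‖ < 3) → ‖T z - z‖ ≤ s) {γ : ℝ} (hγ : 0 < γ) (hDγ : D ≤ γ ^ 2)
    (hD1 : D ≤ 1) {x : Ed d} (hx : x ∈ ball (0 : Ed d) 1) {ρ : ℝ} (hρ : 0 < ρ) (hρ1 : ρ ≤ 1) :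
    |mollify (pot ψ) 1 x - mollify (pot ψ) ρ x + (κ - 1) * bumpMass d * (1 - ρ ^ 2) / 2|
      ≤ 9 * weakC d / ρ ^ (d + 1) * (E + γ) := by
  set W := 9 * weakC d / ρ ^ (d + 1) * (E + γ) with hW
  set a := (κ - 1) * bumpMass d with ha
  have hc := h.pot_cont
  have hE := h.hE
  have hweak : 0 ≤ weakC d := by
    have := kapMax_pos d
    unfold weakC; positivity
  have hW0 : 0 ≤ W := by positivity
  have hx' := mem_ball_zero_iff.1 hx
  have key : ∀ t ∈ Icc ρ 1, ∀ t' ∈ Icc ρ 1,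
      - (t' - t) * (a * t) - |t' - t| * W - (t' - t) ^ 2 * mollMass d
        ≤ mollify (pot ψ) t' x - mollify (pot ψ) t x := by
    intro t ht t' ht'
    have ht0 : 0 < t := hρ.trans_le ht.1
    have hfl := h.flux hs1 hs hγ hDγ hD1 hx ht0 ht.2
    have hWt : 9 * weakC d / t ^ (d + 1) * (E + γ) ≤ W := by
      rw [hW]
      gcongr
      exact ht.1
    have hfl' := hfl.trans hWt
    set J := ∫ y, moll y * inner ℝ y (T (x - t • y) - (x - t • y)) with hJ
    have i0 := h.flux_integrable hs1 hs hx ht0 ht.2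
    have i1 : Integrable fun y => pot ψ (x - t' • y) * moll y :=
      mul_moll_integrable (u := fun y => pot ψ (x - t' • y)) (by fun_prop)
    have i2 : Integrable fun y => pot ψ (x - t • y) * moll y :=
      mul_moll_integrable (u := fun y => pot ψ (x - t • y)) (by fun_prop)
    have i3 : Integrable fun y => (t - t') * (moll y * inner ℝ y (T (x - t • y) - (x - t • y)))
        - (t' - t) ^ 2 * moll y :=
      (i0.const_mul _).sub (moll_integrable.const_mul _)
    have h1 : ∫ y, ((t - t') * (moll y * inner ℝ y (T (x - t • y) - (x - t • y)))
        - (t' - t) ^ 2 * moll y)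
        ≤ ∫ y, (pot ψ (x - t' • y) * moll y - pot ψ (x - t • y) * moll y) := by
      apply integral_mono_ae i3 (i1.sub i2)
      filter_upwards [ae_affine h.aeG x ht0] with y hy
      simp only [Pi.sub_apply]
      by_cases hy1 : y ∈ ball (0 : Ed d) 1
      · have hy1' := mem_ball_zero_iff.1 hy1
        have hn : ‖x - t • y‖ < 2 := by
          calc _ ≤ ‖x‖ + ‖t • y‖ := norm_sub_le _ _
            _ ≤ ‖x‖ + 1 * ‖y‖ := by
              rw [norm_smul, Real.norm_of_nonneg ht0.le]
              gcongr
              exact ht.2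
            _ < 2 := by linarith
        have h2 := h.pot_sub (hy (mem_ball_zero_iff.2 (by linarith))) (x - t' • y)
        have e1 : (x - t' • y) - (x - t • y) = (t - t') • y := by rw [sub_smul]; abel
        rw [e1, real_inner_smul_right, real_inner_comm, norm_smul, Real.norm_eq_abs, mul_pow,
          sq_abs] at h2
        have h3 : (t - t') ^ 2 * ‖y‖ ^ 2 / 2 ≤ (t' - t) ^ 2 := by
          have : ‖y‖ ^ 2 ≤ 1 := pow_le_one₀ (norm_nonneg _) hy1'.le
          have : (t - t') ^ 2 * ‖y‖ ^ 2 ≤ (t - t') ^ 2 * 1 := by gcongr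
          nlinarith [sq_nonneg (t - t')]
        have hm := moll_nonneg y
        calc _ = moll y * ((t - t') * inner ℝ y (T (x - t • y) - (x - t • y)) - (t' - t) ^ 2) := by
              ring
          _ ≤ moll y * (pot ψ (x - t' • y) - pot ψ (x - t • y)) := by
              apply mul_le_mul_of_nonneg_left _ hm
              linarith
          _ = _ := by ring
      · rw [moll_eq_zero hy1]; simp
    rw [integral_sub (i0.const_mul _) (moll_integrable.const_mul _), integral_const_mul,
      integral_const_mul, integral_sub i1 i2, ← hJ] at h1
    change _ ≤ mollify (pot ψ) t' x - mollify (pot ψ) t x at h1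
    have h4 : - (t' - t) * (a * t) - |t' - t| * W ≤ (t - t') * J := by
      have h5 : |(t' - t) * (J - a * t)| ≤ |t' - t| * W := by
        rw [abs_mul]; gcongr
      have := (abs_le.1 h5).2
      linarith
    unfold mollMass
    linarith
  set H : ℝ → ℝ := fun t => mollify (pot ψ) t x + a * t ^ 2 / 2 with hH
  have hm := (mollMass_pos d).le
  have key2 : ∀ t ∈ Icc ρ 1, ∀ t' ∈ Icc ρ 1,
      |H t' - H t| ≤ W * |t' - t| + (mollMass d + |a|) * |t' - t| ^ 2 := by
    have one : ∀ t ∈ Icc ρ 1, ∀ t' ∈ Icc ρ 1,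
        - (W * |t' - t| + (mollMass d + |a|) * |t' - t| ^ 2) ≤ H t' - H t := by
      intro t ht t' ht'
      have h1 := key t ht t' ht'
      rw [sq_abs]
      have h2 : -(|a| * (t' - t) ^ 2) ≤ a * (t' - t) ^ 2 / 2 := by
        have := neg_abs_le a
        have := abs_nonneg a
        nlinarith [sq_nonneg (t' - t)]
      have h3 : H t' - H t = (mollify (pot ψ) t' x - mollify (pot ψ) t x)
          + (t' - t) * (a * t) + a * (t' - t) ^ 2 / 2 := by simp only [hH]; ring
      rw [h3]
      linarith
    intro t ht t' ht'
    rw [abs_le]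
    refine ⟨one t ht t' ht', ?_⟩
    have := one t' ht' t ht
    rw [abs_sub_comm] at this
    linarith
  have hsd := subdivide (u := fun r => H (ρ + (1 - ρ) * r)) (s := W) (K := mollMass d + |a|) (by
    intro r hr r' hr'
    have mem : ∀ r ∈ Icc (0 : ℝ) 1, ρ + (1 - ρ) * r ∈ Icc ρ 1 := by
      intro r hr
      constructor
      · nlinarith [hr.1]
      · nlinarith [hr.2]
    have h1 := key2 _ (mem r hr) _ (mem r' hr')
    have e : |ρ + (1 - ρ) * r' - (ρ + (1 - ρ) * r)| ≤ |r' - r| := by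
      have : ρ + (1 - ρ) * r' - (ρ + (1 - ρ) * r) = (1 - ρ) * (r' - r) := by ring
      rw [this, abs_mul, abs_of_nonneg (by linarith)]
      exact mul_le_of_le_one_left (abs_nonneg _) (by linarith)
    refine h1.trans ?_
    gcongr)
  refine le_trans (le_of_eq ?_) hsd
  simp only [hH]
  congr 1
  ring_nf

end

/-! ### Second-order Taylor expansion of a mollified function -/

lemma pow_four_taylor {r u : ℝ} :
    |(max (r + u) 0) ^ 4 - (max r 0) ^ 4 - 4 * (max r 0) ^ 3 * u - 6 * (max r 0) ^ 2 * u ^ 2|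
      ≤ 4 * max r 0 * |u| ^ 3 + 11 * |u| ^ 4 := by
  rcases le_total r 0 with hr | hr
  · rw [max_eq_right hr]
    have h1 : max (r + u) 0 ≤ |u| := max_le (by linarith [le_abs_self u]) (abs_nonneg u)
    have h2 : 0 ≤ max (r + u) 0 := le_max_right _ _
    have h3 : (max (r + u) 0) ^ 4 ≤ |u| ^ 4 := by gcongr
    have h4 : 0 ≤ (max (r + u) 0) ^ 4 := by positivity
    have h5 : 0 ≤ |u| ^ 4 := by positivity
    rw [abs_le]
    constructor <;> nlinarith
  · rw [max_eq_left hr]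
    rcases le_total 0 (r + u) with h | h
    · rw [max_eq_left h]
      have e : (r + u) ^ 4 - r ^ 4 - 4 * r ^ 3 * u - 6 * r ^ 2 * u ^ 2
          = 4 * r * u ^ 3 + u ^ 4 := by ring
      rw [e]
      refine (abs_add_le _ _).trans ?_
      rw [abs_mul, abs_pow, abs_pow, abs_of_nonneg (by positivity)]
      have : 0 ≤ |u| ^ 4 := by positivity
      linarith
    · rw [max_eq_right h]
      have hu : u ≤ 0 := by linarith
      have hru : r ≤ |u| := by rw [abs_of_nonpos hu]; linarith
      have h1 : |u| ^ 4 = u ^ 4 := by rw [← abs_pow]; exact abs_of_nonneg (by positivity)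
      set w := |u| with hw
      have hw0 : 0 ≤ w := abs_nonneg _
      have huw : u = -w := by rw [hw, abs_of_nonpos hu]; ring
      rw [huw]
      have a1 : r ^ 4 ≤ w ^ 4 := by gcongr
      have a2 : r ^ 3 * w ≤ w ^ 4 := by
        calc _ ≤ w ^ 3 * w := by gcongr
          _ = _ := by ring
      have a3 : r ^ 2 * w ^ 2 ≤ w ^ 4 := by
        calc _ ≤ w ^ 2 * w ^ 2 := by gcongr
          _ = _ := by ring
      have b1 : 0 ≤ r ^ 4 := by positivity
      have b2 : 0 ≤ r ^ 3 * w := by positivity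
      have b3 : 0 ≤ r ^ 2 * w ^ 2 := by positivity
      have b4 : 0 ≤ r * w ^ 3 := by positivity
      rw [abs_le]
      constructor <;> nlinarith

lemma moll_taylor {d : ℕ} {x : Ed d} (hx : ‖x‖ ≤ 1) (y : Ed d) :
    |moll (x - y) - moll y - 8 * rp y ^ 3 * inner ℝ y x
        - (24 * rp y ^ 2 * inner ℝ y x ^ 2 - 4 * rp y ^ 3 * ‖x‖ ^ 2)|
      ≤ (ball (0 : Ed d) 2).indicator (fun _ => 7500 * ‖x‖ ^ 3) y := by
  by_cases hy : y ∈ ball (0 : Ed d) 2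
  · rw [indicator_of_mem hy]
    rw [mem_ball_zero_iff] at hy
    set n := ‖x‖ with hn
    set q : ℝ := inner ℝ y x with hq
    have hn0 : 0 ≤ n := norm_nonneg _
    have hq1 : |q| ≤ 2 * n := by
      refine (abs_real_inner_le_norm y x).trans ?_
      gcongr
    have e1 : ‖x - y‖ ^ 2 = ‖y‖ ^ 2 - (2 * q - n ^ 2) := by
      rw [norm_sub_sq_real, real_inner_comm]; ring
    have h1 := @pow_four_taylor (1 - ‖y‖ ^ 2) (2 * q - n ^ 2)
    have e2 : 1 - ‖y‖ ^ 2 + (2 * q - n ^ 2) = 1 - ‖x - y‖ ^ 2 := by rw [e1]; ring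
    rw [e2] at h1
    change |moll (x - y) - moll y - 4 * rp y ^ 3 * (2 * q - n ^ 2)
      - 6 * rp y ^ 2 * (2 * q - n ^ 2) ^ 2|
      ≤ 4 * rp y * |2 * q - n ^ 2| ^ 3 + 11 * |2 * q - n ^ 2| ^ 4 at h1
    have hu : |2 * q - n ^ 2| ≤ 5 * n := by
      have := abs_le.1 hq1
      rw [abs_le]; constructor <;> nlinarith
    have a0 := rp_nonneg y
    have a1 := rp_le_one y
    have h2 : 4 * rp y * |2 * q - n ^ 2| ^ 3 + 11 * |2 * q - n ^ 2| ^ 4 ≤ 7375 * n ^ 3 := by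
      calc _ ≤ 4 * 1 * (5 * n) ^ 3 + 11 * (5 * n) ^ 4 := by gcongr
        _ = 500 * n ^ 3 + 6875 * (n ^ 3 * n) := by ring
        _ ≤ 500 * n ^ 3 + 6875 * (n ^ 3 * 1) := by gcongr
        _ = _ := by ring
    have h3 : |6 * rp y ^ 2 * (n ^ 4 - 4 * q * n ^ 2)| ≤ 54 * n ^ 3 := by
      rw [abs_mul, abs_of_nonneg (by positivity)]
      have h4 : |n ^ 4 - 4 * q * n ^ 2| ≤ 9 * n ^ 3 := by
        have e3 : n ^ 4 - 4 * q * n ^ 2 = n ^ 2 * (n ^ 2 - 4 * q) := by ring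
        have h5 : |n ^ 2 - 4 * q| ≤ 9 * n := by
          have := abs_le.1 hq1
          rw [abs_le]; constructor <;> nlinarith
        rw [e3, abs_mul, abs_of_nonneg (by positivity)]
        calc _ ≤ n ^ 2 * (9 * n) := by gcongr
          _ = _ := by ring
      calc _ ≤ 6 * 1 ^ 2 * (9 * n ^ 3) := by gcongr
        _ = _ := by ring
    have e4 : moll (x - y) - moll y - 8 * rp y ^ 3 * q
        - (24 * rp y ^ 2 * q ^ 2 - 4 * rp y ^ 3 * n ^ 2)
        = (moll (x - y) - moll y - 4 * rp y ^ 3 * (2 * q - n ^ 2)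
      - 6 * rp y ^ 2 * (2 * q - n ^ 2) ^ 2) + 6 * rp y ^ 2 * (n ^ 4 - 4 * q * n ^ 2) := by ring
    rw [e4]
    refine (abs_add_le _ _).trans ?_
    have : 0 ≤ n ^ 3 := by positivity
    linarith
  · rw [indicator_of_notMem hy]
    have hy1 : y ∉ ball (0 : Ed d) 1 := fun h => hy (ball_subset_ball (by norm_num) h)
    have hxy : x - y ∉ ball (0 : Ed d) 1 := by
      rw [mem_ball_zero_iff, not_lt] at hy ⊢
      have := norm_sub_norm_le y x
      rw [norm_sub_rev] at this
      linarith
    rw [moll_eq_zero hxy, moll_eq_zero hy1, rp_eq_zero hy1]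
    simp

/-- Second-order Taylor expansion at the origin of the mollification of `u`. All coefficients are
controlled by the `L¹` norm of `u`. -/
lemma taylor_mollify {d : ℕ} {u : Ed d → ℝ} (hu : Continuous u) {L : ℝ}
    (hL : ∫ y in ball (0 : Ed d) 2, |u y| ≤ L) :
    ∃ (b : Ed d) (A : Ed d →L[ℝ] Ed d), IsSelfAdjoint A ∧ ‖b‖ ≤ 8 * L ∧ ‖A‖ ≤ 200 * L ∧
      ∀ x : Ed d, ‖x‖ ≤ 1 →
        |(∫ y, u y * moll (x - y)) - (∫ y, u y * moll y) - inner ℝ b x - inner ℝ (A x) x / 2|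
          ≤ 7500 * L * ‖x‖ ^ 3 := by
  have hrc := @rp_cont d
  have hmc := @moll_cont d
  have hsub : ∀ {x : Ed d}, x ∉ ball (0 : Ed d) 2 → x ∉ ball (0 : Ed d) 1 := fun hx hx' =>
    hx (ball_subset_ball (by norm_num) hx')
  have hcs : ∀ {F : Type} [NormedAddCommGroup F] [NormedSpace ℝ F] (w : Ed d → F),
      Continuous w → (∀ y, y ∉ ball (0 : Ed d) 2 → w y = 0) → Integrable w := by
    intro F _ _ w hw h0
    exact hw.integrable_of_hasCompactSupport
      (HasCompactSupport.of_support_subset_isCompact (isCompact_closedBall (0 : Ed d) 2)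
        fun y hy => by
          by_contra h
          exact hy (h0 y fun h' => h (ball_subset_closedBall h')))
  have iabs : IntegrableOn (fun y => |u y|) (ball (0 : Ed d) 2) :=
    (hu.abs.continuousOn.integrableOn_compact (isCompact_closedBall (0 : Ed d) 2)).mono_set
      ball_subset_closedBall
  have iind : Integrable ((ball (0 : Ed d) 2).indicator fun y => |u y|) :=
    iabs.integrable_indicator measurableSet_ball
  have hLind : ∫ y, (ball (0 : Ed d) 2).indicator (fun y => |u y|) y ≤ L := by
    rwa [integral_indicator measurableSet_ball]
  -- integrals of kernels are bounded by the `L¹` norm of `u`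
  have hbd : ∀ {F : Type} [NormedAddCommGroup F] [NormedSpace ℝ F] (w : Ed d → F) (K : ℝ),
      0 ≤ K → (∀ y, ‖w y‖ ≤ K * (ball (0 : Ed d) 2).indicator (fun y => |u y|) y) →
      ‖∫ y, w y‖ ≤ K * L := by
    intro F _ _ w K hK hw
    calc ‖∫ y, w y‖ ≤ ∫ y, K * (ball (0 : Ed d) 2).indicator (fun y => |u y|) y :=
          norm_integral_le_of_norm_le (iind.const_mul K) (ae_of_all _ hw)
      _ = K * ∫ y, (ball (0 : Ed d) 2).indicator (fun y => |u y|) y := integral_const_mul _ _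
      _ ≤ K * L := by gcongr
  set kb : Ed d → Ed d := fun y => (u y * (8 * rp y ^ 3)) • y with hkb
  set kA : Ed d → Ed d →L[ℝ] Ed d := fun y =>
    u y • ((48 * rp y ^ 2) • (innerSL ℝ y).smulRight y
      - (8 * rp y ^ 3) • ContinuousLinearMap.id ℝ (Ed d)) with hkA
  have hkbc : Continuous kb := by rw [hkb]; fun_prop
  have hsr : Continuous fun y : Ed d => (innerSL ℝ y).smulRight y := by
    have h1 : Continuous fun p : (Ed d →L[ℝ] ℝ) × Ed d => p.1.smulRight p.2 :=
      (ContinuousLinearMap.smulRightL ℝ (Ed d) (Ed d)).continuous₂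
    exact h1.comp ((innerSL ℝ).continuous.prodMk continuous_id)
  have hkAc : Continuous kA := by rw [hkA]; fun_prop
  have hkA0 : ∀ y, y ∉ ball (0 : Ed d) 1 → kA y = 0 := fun y hy => by
    have h2 : 48 * rp y ^ 2 = 0 := by rw [rp_eq_zero hy]; norm_num
    have h3 : 8 * rp y ^ 3 = 0 := by rw [rp_eq_zero hy]; norm_num
    ext1 x
    simp only [hkA, _root_.smul_apply, _root_.sub_apply, h2, h3, zero_smul, sub_zero, smul_zero,
      _root_.zero_apply]
  have ikb : Integrable kb := hcs kb hkbc fun y hy => by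
    simp [hkb, rp_eq_zero (hsub hy)]
  have ikA : Integrable kA := hcs kA hkAc fun y hy => by
    rw [hkA0 y (hsub hy)]
  have hin : ∀ x x' : Ed d, inner ℝ ((∫ y, kA y) x) x'
      = ∫ y, u y * (48 * rp y ^ 2 * (inner ℝ y x * inner ℝ y x') - 8 * rp y ^ 3 * inner ℝ x x') := by
    intro x x'
    rw [ContinuousLinearMap.integral_apply ikA, real_inner_comm,
      ← integral_inner (ikA.apply_continuousLinearMap x)]
    congr 1
    ext y
    simp only [hkA, _root_.smul_apply, _root_.sub_apply,
      ContinuousLinearMap.smulRight_apply, innerSL_apply_apply, ContinuousLinearMap.id_apply,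
      real_inner_smul_right, inner_sub_right]
    rw [real_inner_comm x' x, real_inner_comm x' y]
  refine ⟨∫ y, kb y, ∫ y, kA y, ?_, ?_, ?_, ?_⟩
  · rw [ContinuousLinearMap.isSelfAdjoint_iff_isSymmetric]
    intro x x'
    rw [ContinuousLinearMap.coe_coe, hin, real_inner_comm ((∫ y, kA y) x') x, hin]
    congr 1
    ext y
    rw [real_inner_comm x' x]
    ring
  · refine hbd kb 8 (by norm_num) fun y => ?_
    have a0 := rp_nonneg y
    by_cases hy : y ∈ ball (0 : Ed d) 1
    · rw [indicator_of_mem (ball_subset_ball (by norm_num) hy)]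
      rw [mem_ball_zero_iff] at hy
      rw [hkb, norm_smul, norm_mul, Real.norm_eq_abs, Real.norm_of_nonneg (by positivity)]
      have : rp y ^ 3 ≤ 1 := pow_le_one₀ a0 (rp_le_one y)
      calc _ ≤ |u y| * (8 * 1) * 1 := by gcongr
        _ = _ := by ring
    · simp only [hkb, rp_eq_zero hy]
      have : 0 ≤ (ball (0 : Ed d) 2).indicator (fun y => |u y|) y :=
        indicator_nonneg (fun _ _ => abs_nonneg _) _
      simp [this]
  · refine hbd kA 200 (by norm_num) fun y => ?_
    have a0 := rp_nonneg y
    by_cases hy : y ∈ ball (0 : Ed d) 1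
    · rw [indicator_of_mem (ball_subset_ball (by norm_num) hy)]
      rw [mem_ball_zero_iff] at hy
      rw [hkA, norm_smul, Real.norm_eq_abs, mul_comm (200 : ℝ)]
      gcongr
      refine (norm_sub_le _ _).trans ?_
      rw [norm_smul, norm_smul, Real.norm_of_nonneg (by positivity),
        Real.norm_of_nonneg (by positivity), ContinuousLinearMap.norm_smulRight_apply,
        innerSL_apply_norm]
      have h3 : rp y ^ 3 ≤ 1 := pow_le_one₀ a0 (rp_le_one y)
      have h2 : rp y ^ 2 ≤ 1 := pow_le_one₀ a0 (rp_le_one y)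
      have h4 := ContinuousLinearMap.norm_id_le (𝕜 := ℝ) (E := Ed d)
      calc _ ≤ (48 : ℝ) * 1 * (1 * 1) + 8 * 1 * 1 := by gcongr
        _ ≤ 200 := by norm_num
    · rw [hkA0 y hy, norm_zero]
      have : 0 ≤ (ball (0 : Ed d) 2).indicator (fun y => |u y|) y :=
        indicator_nonneg (fun _ _ => abs_nonneg _) _
      positivity
  · intro x hx
    have i1 : Integrable fun y => u y * moll (x - y) := by
      refine hcs _ (by fun_prop) fun y hy => ?_
      have hxy : x - y ∉ ball (0 : Ed d) 1 := by
        rw [mem_ball_zero_iff, not_lt] at hy ⊢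
        have := norm_sub_norm_le y x
        rw [norm_sub_rev] at this
        linarith
      rw [moll_eq_zero hxy, mul_zero]
    have i2 : Integrable fun y => u y * moll y := mul_moll_integrable hu
    have i3 : Integrable fun y => u y * (8 * rp y ^ 3 * inner ℝ y x) :=
      hcs _ (by fun_prop) fun y hy => by rw [rp_eq_zero (hsub hy)]; simp
    have i4 : Integrable fun y => u y * (24 * rp y ^ 2 * inner ℝ y x ^ 2
        - 4 * rp y ^ 3 * ‖x‖ ^ 2) :=
      hcs _ (by fun_prop) fun y hy => by rw [rp_eq_zero (hsub hy)]; simp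
    have e3 : inner ℝ (∫ y, kb y) x = ∫ y, u y * (8 * rp y ^ 3 * inner ℝ y x) := by
      rw [real_inner_comm, ← integral_inner ikb]
      congr 1
      ext y
      rw [hkb, real_inner_smul_right, real_inner_comm]; ring
    have e4 : inner ℝ ((∫ y, kA y) x) x / 2 = ∫ y, u y * (24 * rp y ^ 2 * inner ℝ y x ^ 2
        - 4 * rp y ^ 3 * ‖x‖ ^ 2) := by
      rw [hin, div_eq_mul_inv, ← integral_mul_const]
      congr 1
      ext y
      rw [real_inner_self_eq_norm_sq]; ring
    have i12 : Integrable fun y => u y * moll (x - y) - u y * moll y := i1.sub i2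
    have i123 : Integrable fun y => u y * moll (x - y) - u y * moll y
      - u y * (8 * rp y ^ 3 * inner ℝ y x) := i12.sub i3
    rw [e3, e4, ← integral_sub i1 i2, ← integral_sub i12 i3, ← integral_sub i123 i4,
      ← Real.norm_eq_abs]
    refine (hbd _ (7500 * ‖x‖ ^ 3) (by positivity) fun y => ?_).trans (le_of_eq (by ring))
    have h1 := moll_taylor hx y
    have e5 : u y * moll (x - y) - u y * moll y - u y * (8 * rp y ^ 3 * inner ℝ y x)
        - u y * (24 * rp y ^ 2 * inner ℝ y x ^ 2 - 4 * rp y ^ 3 * ‖x‖ ^ 2)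
        = u y * (moll (x - y) - moll y - 8 * rp y ^ 3 * inner ℝ y x
        - (24 * rp y ^ 2 * inner ℝ y x ^ 2 - 4 * rp y ^ 3 * ‖x‖ ^ 2)) := by ring
    rw [e5, norm_mul, Real.norm_eq_abs, Real.norm_eq_abs]
    calc _ ≤ |u y| * (ball (0 : Ed d) 2).indicator (fun _ => 7500 * ‖x‖ ^ 3) y := by gcongr
      _ = _ := by
        by_cases hy : y ∈ ball (0 : Ed d) 2
        · rw [indicator_of_mem hy, indicator_of_mem hy]; ring
        · rw [indicator_of_notMem hy, indicator_of_notMem hy]; ring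

/-! ### Approximation of the potential by a quadratic polynomial -/

lemma weakC_nonneg (d : ℕ) : 0 ≤ weakC d := by
  have := kapMax_pos d
  unfold weakC; positivity

section
variable {d : ℕ} {T : Ed d → Ed d} {ψ : Ed d → ℝ} {G A : Set (Ed d)}
    {P : Measure (Ed d × Ed d)} {κ E D : ℝ}

/-- The constant in the `L¹` Poincaré inequality. -/
def poinC (d : ℕ) : ℝ :=
  volume.real (ball (0 : Ed d) 1) * volume.real (ball (0 : Ed d) 3) * 54 / mollMass d ^ 2
    + volume.real (ball (0 : Ed d) 2)

lemma poinC_pos (d : ℕ) : 0 < poinC d := by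
  have := volB_pos d (r := 2) (by norm_num)
  unfold poinC; positivity

lemma Cfg.poincare_L1 (h : Cfg T ψ G A P κ E D) :
    ∫ y in ball (0 : Ed d) 2, |pot ψ y - mollify (pot ψ) 1 0 / mollMass d| ≤ poinC d * √E := by
  have hc := h.pot_cont
  have h1 := h.poincare
  have hm := mollMass_pos d
  set m := mollMass d
  set q := mollify (pot ψ) 1 0 with hq
  set e := √E with he
  have he0 : 0 < e := Real.sqrt_pos.2 h.hE
  have heE : e ^ 2 = E := Real.sq_sqrt h.hE.le
  have hintg : IntegrableOn (fun y => |pot ψ y - q / m|) (ball 0 2) :=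
    ((by fun_prop : Continuous fun y => |pot ψ y - q / m|).continuousOn.integrableOn_compact
      (isCompact_closedBall (0 : Ed d) 2)).mono_set ball_subset_closedBall
  rw [← ENNReal.ofReal_le_ofReal_iff (by have := poinC_pos d; positivity),
    ofReal_integral_eq_lintegral_ofReal hintg (ae_of_all _ fun y => abs_nonneg _)]
  calc _ ≤ ∫⁻ y in ball (0 : Ed d) 2, (ENNReal.ofReal (1 / (m ^ 2 * e)) *
        ENNReal.ofReal ((m * pot ψ y - q) ^ 2) + ENNReal.ofReal e) := by
        apply lintegral_mono
        intro y
        simp only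
        rw [← ENNReal.ofReal_mul (by positivity), ← ENNReal.ofReal_add (by positivity) he0.le]
        apply ENNReal.ofReal_le_ofReal
        set n := pot ψ y - q / m with hn
        have e1 : m * pot ψ y - q = m * n := by rw [hn]; field_simp
        rw [e1]
        have e2 : 1 / (m ^ 2 * e) * (m * n) ^ 2 + e - |n|
            = ((|n| - e / 2) ^ 2 + 3 / 4 * e ^ 2) / e := by
          have := sq_abs n
          rw [mul_pow, ← this]; field_simp; ring
        have e3 : 0 ≤ ((|n| - e / 2) ^ 2 + 3 / 4 * e ^ 2) / e := by positivity
        linarith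
    _ = ENNReal.ofReal (1 / (m ^ 2 * e)) * (∫⁻ y in ball (0 : Ed d) 2,
        ENNReal.ofReal ((m * pot ψ y - q) ^ 2))
        + ENNReal.ofReal e * volume (ball (0 : Ed d) 2) := by
        rw [lintegral_add_right _ measurable_const, lintegral_const_mul' _ _ ENNReal.ofReal_ne_top,
          setLIntegral_const]
    _ ≤ ENNReal.ofReal (1 / (m ^ 2 * e)) * ENNReal.ofReal (volume.real (ball (0 : Ed d) 1)
        * volume.real (ball (0 : Ed d) 3) * 54 * E)
        + ENNReal.ofReal e * ENNReal.ofReal (volume.real (ball (0 : Ed d) 2)) := by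
        rw [ofReal_measureReal measure_ball_lt_top.ne]
        gcongr
    _ = _ := by
        have hE := h.hE
        rw [← ENNReal.ofReal_mul (by positivity), ← ENNReal.ofReal_mul (by positivity),
          ← ENNReal.ofReal_add (by positivity) (by positivity)]
        congr 1
        have hmm : mollMass d = m := rfl
        unfold poinC
        rw [← heE, hmm]
        field_simp

lemma approx_alg {m X1 X2 X3 X4 W Tc K : ℝ} (hm : 0 < m) (h2 : |X2| ≤ W) (h3 : |X3| ≤ Tc)
    (h40 : 0 ≤ X4) (h4 : X4 ≤ K ^ 2) :
    (m⁻¹ * X1 - m⁻¹ * X2 + m⁻¹ * X3 - X4) ^ 2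
      ≤ 4 / m ^ 2 * X1 ^ 2 + (4 / m ^ 2 * W ^ 2 + 4 / m ^ 2 * Tc ^ 2 + 4 * K ^ 4) := by
  have s2 : X2 ^ 2 ≤ W ^ 2 := sq_le_sq' (by linarith [(abs_le.1 h2).1]) (abs_le.1 h2).2
  have s3 : X3 ^ 2 ≤ Tc ^ 2 := sq_le_sq' (by linarith [(abs_le.1 h3).1]) (abs_le.1 h3).2
  have s4 : X4 ^ 2 ≤ K ^ 4 := by
    calc X4 ^ 2 ≤ (K ^ 2) ^ 2 := by gcongr
      _ = _ := by ring
  have s5 : ∀ x1 x2 x3 x4 : ℝ, (x1 - x2 + x3 - x4) ^ 2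
      ≤ 4 * (x1 ^ 2 + x2 ^ 2 + x3 ^ 2 + x4 ^ 2) := by
    intro x1 x2 x3 x4
    nlinarith [sq_nonneg (x1 + x2), sq_nonneg (x1 - x3), sq_nonneg (x1 + x4),
      sq_nonneg (x2 + x3), sq_nonneg (x2 - x4), sq_nonneg (x3 + x4)]
  refine (s5 _ _ _ _).trans ?_
  have e2 : 4 * ((m⁻¹ * X1) ^ 2 + (m⁻¹ * X2) ^ 2 + (m⁻¹ * X3) ^ 2 + X4 ^ 2)
      = 4 / m ^ 2 * X1 ^ 2 + (4 / m ^ 2 * X2 ^ 2 + 4 / m ^ 2 * X3 ^ 2 + 4 * X4 ^ 2) := by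
    field_simp
    ring
  rw [e2]
  gcongr

set_option maxHeartbeats 2000000 in
/-- The potential is close in `L²` to a quadratic polynomial on small balls. The term
`‖Q x‖ ^ 2 / 8` completes the square, so that the polynomial is
`‖(1 + Q / 2) x‖ ^ 2 / 2 - ‖x‖ ^ 2 / 2` up to affine terms. -/
lemma approx (d : ℕ) : ∃ C : ℝ, 0 < C ∧ ∀ {T : Ed d → Ed d} {ψ : Ed d → ℝ} {G A : Set (Ed d)}
    {P : Measure (Ed d × Ed d)} {κ E D : ℝ} (_ : Cfg T ψ G A P κ E D) {s : ℝ} (_ : s ≤ 1 / 2)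
    (_ : ∀ z ∈ G, (‖z‖ < 3 ∨ ‖T z‖ < 3) → ‖T z - z‖ ≤ s) {γ : ℝ} (_ : 0 < γ)
    (_ : D ≤ γ ^ 2) (_ : γ ^ 2 ≤ E) (_ : E ≤ 1) {ρ ϑ : ℝ} (_ : 0 < ρ) (_ : ρ ≤ 1) (_ : 0 < ϑ)
    (_ : ϑ ≤ 1 / 4),
    |κ - 1| ≤ C * √E ∧
    ∃ (b : Ed d) (Q : Ed d →L[ℝ] Ed d) (c : ℝ), IsSelfAdjoint Q ∧ ‖b‖ ≤ C * √E ∧ ‖Q‖ ≤ C * √E ∧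
      ∫⁻ x in ball (0 : Ed d) (4 * ϑ),
        ENNReal.ofReal ((pot ψ x - c - inner ℝ b x - inner ℝ (Q x) x / 2 - ‖Q x‖ ^ 2 / 8) ^ 2)
        ≤ ENNReal.ofReal (C * (ρ ^ 2 + ϑ ^ (d + 6)) * E
            + C / (ρ ^ (d + 1)) ^ 2 * (E + γ) ^ 2) := by
  have hm := mollMass_pos d
  have hbm := bumpMass_pos d
  have hw := weakC_nonneg d
  have hV1 := volB_pos d (r := 1) one_pos
  have hp := poinC_pos d
  set m := mollMass d with hmdef
  set V1 := volume.real (ball (0 : Ed d) 1) with hV1def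
  set p := poinC d with hpdef
  set C1 : ℝ := (1 + V1 + 18 * weakC d) / bumpMass d with hC1
  set C2 : ℝ := 200 * p / m with hC2
  have hC2p : 0 < C2 := by positivity
  set K1 : ℝ := 4 * V1 ^ 2 * 6 / m ^ 2 with hK1
  set K2 : ℝ := 4 * V1 * (9 * weakC d) ^ 2 / m ^ 2 with hK2
  set K3 : ℝ := 4 * V1 * (7500 * p) ^ 2 * 4 ^ (d + 6) / m ^ 2 with hK3
  set K4 : ℝ := 4 * V1 * C2 ^ 4 with hK4
  have hC1p : 0 ≤ C1 := by positivity
  have hK1p : 0 ≤ K1 := by positivity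
  have hK2p : 0 ≤ K2 := by positivity
  have hK3p : 0 ≤ K3 := by positivity
  have hK4p : 0 ≤ K4 := by positivity
  refine ⟨C1 + C2 + K1 + K2 + K3 + K4, by positivity, ?_⟩
  intro T ψ G A P κ E D h s hs1 hs γ hγ hDγ hγE hE1 ρ ϑ hρ hρ1 hϑ hϑ1
  have hE := h.hE
  have hc := h.pot_cont
  have hD1 : D ≤ 1 := by linarith
  set e := √E with he
  have he0 : 0 < e := Real.sqrt_pos.2 h.hE
  have heE : e ^ 2 = E := Real.sq_sqrt h.hE.le
  have he1 : e ≤ 1 := by nlinarith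
  have hγe : γ ≤ e := by nlinarith
  have hEe : E ≤ e := by nlinarith
  set CC := C1 + C2 + K1 + K2 + K3 + K4 with hCC
  constructor
  · have h1 := h.kap_sub_one hs1 hs hγ hDγ hD1
    rw [← le_div_iff₀ hbm] at h1
    refine h1.trans ?_
    calc _ ≤ ((1 + V1) * e + 9 * weakC d * (e + e)) / bumpMass d := by gcongr
      _ = C1 * e := by rw [hC1]; ring
      _ ≤ CC * e := by gcongr; linarith
  set c0 := mollify (pot ψ) 1 0 / m with hc0
  obtain ⟨b, Q, hQs, hb, hQ, hT⟩ := taylor_mollify (u := fun y => pot ψ y - c0) (by fun_prop)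
    (L := p * e) h.poincare_L1
  have hchange : ∀ x : Ed d, (∫ y, (pot ψ y - c0) * moll (x - y))
      = mollify (pot ψ) 1 x - m * c0 := by
    intro x
    have e1 := integral_sub_left_eq_self (fun y => (pot ψ y - c0) * moll (x - y)) volume x
    rw [← e1]
    have i1 : Integrable fun y => pot ψ (x - y) * moll y :=
      mul_moll_integrable (u := fun y => pot ψ (x - y)) (by fun_prop)
    have i2 : Integrable fun y : Ed d => c0 * moll y := moll_integrable.const_mul _
    have e2 : mollify (pot ψ) 1 x = ∫ y, pot ψ (x - y) * moll y := by
      unfold mollify; simp only [one_smul]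
    rw [e2, hmdef, mollMass, mul_comm, ← integral_const_mul, ← integral_sub i1 i2]
    congr 1
    ext y
    rw [sub_sub_cancel]; ring
  have hsym : ∀ y : Ed d, moll (0 - y) = moll y := fun y => by
    unfold moll; rw [zero_sub, norm_neg]
  have hzero : (∫ y, (pot ψ y - c0) * moll y) = 0 := by
    have := hchange 0
    simp only [hsym] at this
    rw [this, hc0]; field_simp; ring
  set a := (κ - 1) * bumpMass d * (1 - ρ ^ 2) / 2 with ha
  have hms : ∀ r : ℝ, |m⁻¹ * r| = m⁻¹ * |r| := fun r => by rw [abs_mul, abs_of_pos (by positivity)]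
  have hbn : ‖m⁻¹ • b‖ ≤ C2 * e := by
    rw [norm_smul, Real.norm_of_nonneg (by positivity)]
    calc _ ≤ m⁻¹ * (8 * (p * e)) := by gcongr
      _ ≤ m⁻¹ * (200 * (p * e)) := by gcongr; norm_num
      _ = _ := by rw [hC2]; field_simp
  have hQn : ‖m⁻¹ • Q‖ ≤ C2 * e := by
    rw [norm_smul, Real.norm_of_nonneg (by positivity)]
    calc _ ≤ m⁻¹ * (200 * (p * e)) := by gcongr
      _ = _ := by rw [hC2]; field_simp
  have hCe : C2 * e ≤ CC * e := by gcongr; linarith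
  refine ⟨m⁻¹ • b, m⁻¹ • Q, c0 + m⁻¹ * a, ?_, hbn.trans hCe, hQn.trans hCe, ?_⟩
  · have : IsSelfAdjoint (m⁻¹ : ℝ) := IsSelfAdjoint.all _
    exact this.smul hQs
  have hball : ball (0 : Ed d) (4 * ϑ) ⊆ ball (0 : Ed d) 1 := ball_subset_ball (by linarith)
  set W := 9 * weakC d / ρ ^ (d + 1) * (E + γ) with hW
  set Tc := 7500 * (p * e) * (4 * ϑ) ^ 3 with hTc
  have hWp : 0 ≤ W := by positivity
  have hTp : 0 ≤ Tc := by positivity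
  have hpt : ∀ x ∈ ball (0 : Ed d) (4 * ϑ),
      ENNReal.ofReal ((pot ψ x - (c0 + m⁻¹ * a) - inner ℝ (m⁻¹ • b) x
        - inner ℝ ((m⁻¹ • Q) x) x / 2 - ‖(m⁻¹ • Q) x‖ ^ 2 / 8) ^ 2)
      ≤ ENNReal.ofReal (4 / m ^ 2) * ENNReal.ofReal ((m * pot ψ x - mollify (pot ψ) ρ x) ^ 2)
        + ENNReal.ofReal (4 / m ^ 2 * W ^ 2 + 4 / m ^ 2 * Tc ^ 2 + 4 * (C2 * e) ^ 4) := by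
    intro x hx
    have hx1 := hball hx
    have h1 := h.scales hs1 hs hγ hDγ hD1 hx1 hρ hρ1
    rw [mem_ball_zero_iff] at hx hx1
    have h2 := hT x hx1.le
    rw [hchange, hzero, sub_zero] at h2
    have h3 : 7500 * (p * e) * ‖x‖ ^ 3 ≤ Tc := by rw [hTc]; gcongr
    have h2' := h2.trans h3
    have h4 : ‖(m⁻¹ • Q) x‖ ^ 2 / 8 ≤ (C2 * e) ^ 2 := by
      have : ‖(m⁻¹ • Q) x‖ ≤ C2 * e := by
        calc _ ≤ ‖m⁻¹ • Q‖ * ‖x‖ := ContinuousLinearMap.le_opNorm _ _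
          _ ≤ (C2 * e) * 1 := by gcongr
          _ = _ := mul_one _
      have : ‖(m⁻¹ • Q) x‖ ^ 2 ≤ (C2 * e) ^ 2 := by gcongr
      nlinarith [sq_nonneg (C2 * e)]
    have h40 : 0 ≤ ‖(m⁻¹ • Q) x‖ ^ 2 / 8 := by positivity
    rw [← ENNReal.ofReal_mul (by positivity), ← ENNReal.ofReal_add (by positivity) (by positivity)]
    apply ENNReal.ofReal_le_ofReal
    set X1 := m * pot ψ x - mollify (pot ψ) ρ x with hX1
    set X2 := mollify (pot ψ) 1 x - mollify (pot ψ) ρ x + a with hX2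
    set X3 := mollify (pot ψ) 1 x - m * c0 - inner ℝ b x - inner ℝ (Q x) x / 2 with hX3
    set X4 := ‖(m⁻¹ • Q) x‖ ^ 2 / 8 with hX4
    have e1 : pot ψ x - (c0 + m⁻¹ * a) - inner ℝ (m⁻¹ • b) x
        - inner ℝ ((m⁻¹ • Q) x) x / 2 - X4 = m⁻¹ * X1 - m⁻¹ * X2 + m⁻¹ * X3 - X4 := by
      rw [_root_.smul_apply, real_inner_smul_left, real_inner_smul_left, hX1, hX2, hX3]
      field_simp
      ring
    rw [e1]
    exact approx_alg hm h1 h2' h40 h4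
  calc _ ≤ ∫⁻ x in ball (0 : Ed d) (4 * ϑ),
        (ENNReal.ofReal (4 / m ^ 2) * ENNReal.ofReal ((m * pot ψ x - mollify (pot ψ) ρ x) ^ 2)
        + ENNReal.ofReal (4 / m ^ 2 * W ^ 2 + 4 / m ^ 2 * Tc ^ 2 + 4 * (C2 * e) ^ 4)) :=
        setLIntegral_mono' measurableSet_ball hpt
    _ = ENNReal.ofReal (4 / m ^ 2) * (∫⁻ x in ball (0 : Ed d) (4 * ϑ),
          ENNReal.ofReal ((m * pot ψ x - mollify (pot ψ) ρ x) ^ 2))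
        + ENNReal.ofReal (4 / m ^ 2 * W ^ 2 + 4 / m ^ 2 * Tc ^ 2 + 4 * (C2 * e) ^ 4)
          * volume (ball (0 : Ed d) (4 * ϑ)) := by
        rw [lintegral_add_right _ measurable_const, lintegral_const_mul' _ _ ENNReal.ofReal_ne_top,
          setLIntegral_const]
    _ ≤ ENNReal.ofReal (4 / m ^ 2) * ENNReal.ofReal (V1 ^ 2 * 6 * ρ ^ 2 * E)
        + ENNReal.ofReal (4 / m ^ 2 * W ^ 2 + 4 / m ^ 2 * Tc ^ 2 + 4 * (C2 * e) ^ 4)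
          * ENNReal.ofReal ((4 * ϑ) ^ d * V1) := by
        have hv : volume (ball (0 : Ed d) (4 * ϑ)) = ENNReal.ofReal ((4 * ϑ) ^ d * V1) := by
          rw [addHaar_ball_of_pos _ _ (by positivity), finrank_euclideanSpace_fin,
            ENNReal.ofReal_mul (by positivity), hV1def, ofReal_measureReal measure_ball_lt_top.ne]
        rw [hv]
        gcongr
        exact (lintegral_mono_set hball).trans (h.moll_close hρ hρ1)
    _ = ENNReal.ofReal (K1 * ρ ^ 2 * E + K2 * (4 * ϑ) ^ d / (ρ ^ (d + 1)) ^ 2 * (E + γ) ^ 2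
          + K3 * ϑ ^ (d + 6) * E + K4 * (4 * ϑ) ^ d * E ^ 2) := by
        rw [← ENNReal.ofReal_mul (by positivity), ← ENNReal.ofReal_mul (by positivity),
          ← ENNReal.ofReal_add (by positivity) (by positivity)]
        congr 1
        rw [hW, hTc, hK1, hK2, hK3, hK4, ← heE]
        field_simp
        ring
    _ ≤ _ := by
        apply ENNReal.ofReal_le_ofReal
        have hϑd : (4 * ϑ) ^ d ≤ 1 := pow_le_one₀ (by positivity) (by linarith)
        have hρd : (ρ ^ (d + 1)) ^ 2 ≤ 1 := pow_le_one₀ (by positivity) (pow_le_one₀ hρ.le hρ1)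
        have hρd0 : 0 < (ρ ^ (d + 1)) ^ 2 := by positivity
        have t1 : K2 * (4 * ϑ) ^ d / (ρ ^ (d + 1)) ^ 2 * (E + γ) ^ 2
            ≤ K2 / (ρ ^ (d + 1)) ^ 2 * (E + γ) ^ 2 := by
          gcongr
          exact mul_le_of_le_one_right hK2p hϑd
        have t2 : K4 * (4 * ϑ) ^ d * E ^ 2 ≤ K4 / (ρ ^ (d + 1)) ^ 2 * (E + γ) ^ 2 := by
          gcongr
          · calc K4 * (4 * ϑ) ^ d ≤ K4 := mul_le_of_le_one_right hK4p hϑd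
              _ ≤ _ := by rw [le_div_iff₀ hρd0]; exact mul_le_of_le_one_right hK4p hρd
          · linarith
        have t3 : K1 * ρ ^ 2 * E + K3 * ϑ ^ (d + 6) * E ≤ CC * (ρ ^ 2 + ϑ ^ (d + 6)) * E := by
          have : K1 ≤ CC := by linarith
          have : K3 ≤ CC := by linarith
          calc _ ≤ CC * ρ ^ 2 * E + CC * ϑ ^ (d + 6) * E := by gcongr
            _ = _ := by ring
        have t4 : (K2 + K4) / (ρ ^ (d + 1)) ^ 2 * (E + γ) ^ 2
            ≤ CC / (ρ ^ (d + 1)) ^ 2 * (E + γ) ^ 2 := by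
          gcongr
          linarith
        have t5 : (K2 + K4) / (ρ ^ (d + 1)) ^ 2 * (E + γ) ^ 2
          = K2 / (ρ ^ (d + 1)) ^ 2 * (E + γ) ^ 2 + K4 / (ρ ^ (d + 1)) ^ 2 * (E + γ) ^ 2 := by ring
        linarith

end

/-! ### The pointwise energy inequality -/

/-- `N` is a symmetric matrix and `b` a vector, both at distance at most `r` from the identity and
from zero respectively, and `B` is the inverse of `N`. The bound `r` is at most `1 / 8`. -/
structure Near {d : ℕ} (N B : Ed d →L[ℝ] Ed d) (b : Ed d) (r : ℝ) : Prop where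
  BN : ∀ x, B (N x) = x
  NB : ∀ x, N (B x) = x
  symN : ∀ x y, inner ℝ (N x) y = inner ℝ x (N y)
  nN : ‖N - 1‖ ≤ r
  nB : ‖B - 1‖ ≤ 2 * r
  nb : ‖b‖ ≤ r
  r0 : 0 ≤ r
  r1 : r ≤ 1 / 8

/-- The difference of the convex potential and the quadratic polynomial whose gradient is
`x ↦ N (N x) + b`. -/
def gq {d : ℕ} (ψ : Ed d → ℝ) (N : Ed d →L[ℝ] Ed d) (b : Ed d) (c : ℝ) (x : Ed d) : ℝ :=
  ψ x - ‖N x‖ ^ 2 / 2 - inner ℝ b x - c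

/-- A Lipschitz cutoff function between the balls of radius `2 * ϑ` and `3 * ϑ`. -/
def cut {d : ℕ} (ϑ : ℝ) (x : Ed d) : ℝ := max 0 (min 1 (3 - ‖x‖ / ϑ))

lemma cut_nonneg {d : ℕ} (ϑ : ℝ) (x : Ed d) : 0 ≤ cut ϑ x := le_max_left _ _

lemma cut_le_one {d : ℕ} (ϑ : ℝ) (x : Ed d) : cut ϑ x ≤ 1 :=
  max_le zero_le_one (min_le_left _ _)

lemma cut_eq_one {d : ℕ} {ϑ : ℝ} (hϑ : 0 < ϑ) {x : Ed d} (hx : ‖x‖ ≤ 2 * ϑ) : cut ϑ x = 1 := by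
  unfold cut
  have : ‖x‖ / ϑ ≤ 2 := by rwa [div_le_iff₀ hϑ]
  rw [min_eq_left (by linarith), max_eq_right zero_le_one]

lemma cut_eq_zero {d : ℕ} {ϑ : ℝ} (hϑ : 0 < ϑ) {x : Ed d} (hx : 3 * ϑ ≤ ‖x‖) : cut ϑ x = 0 := by
  unfold cut
  have : 3 ≤ ‖x‖ / ϑ := by rwa [le_div_iff₀ hϑ]
  rw [min_eq_right (by linarith), max_eq_left (by linarith)]

lemma cut_cont {d : ℕ} (ϑ : ℝ) : Continuous (cut ϑ : Ed d → ℝ) := by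
  unfold cut; fun_prop

lemma cut_lip {d : ℕ} {ϑ : ℝ} (hϑ : 0 < ϑ) (x y : Ed d) :
    |cut ϑ x - cut ϑ y| ≤ ‖x - y‖ / ϑ := by
  unfold cut
  rw [max_comm 0, max_comm 0, min_comm 1, min_comm 1]
  refine (abs_max_sub_max_le_abs _ _ _).trans ?_
  refine (abs_min_sub_min_le_max _ _ _ _).trans ?_
  rw [sub_self, abs_zero, max_eq_left (abs_nonneg _)]
  have e : 3 - ‖x‖ / ϑ - (3 - ‖y‖ / ϑ) = - ((‖x‖ - ‖y‖) / ϑ) := by ring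
  rw [e, abs_neg, abs_div, abs_of_pos hϑ]
  gcongr
  exact abs_norm_sub_norm_le x y

section
variable {d : ℕ} {N B : Ed d →L[ℝ] Ed d} {b : Ed d} {r : ℝ}

lemma Near.symB (n : Near N B b r) (x y : Ed d) : inner ℝ (B x) y = inner ℝ x (B y) := by
  conv_lhs => rw [← n.NB y]
  rw [← n.symN, n.NB]

lemma Near.normB (n : Near N B b r) (x : Ed d) : ‖B x‖ ≤ 2 * ‖x‖ := by
  have h1 : B x = (B - 1) x + x := by simp
  rw [h1]
  have h2 := (B - 1).le_of_opNorm_le n.nB x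
  have h3 := norm_add_le ((B - 1) x) x
  have h4 := n.r1
  nlinarith [norm_nonneg x]

lemma Near.normN (n : Near N B b r) (x : Ed d) : ‖N x - x‖ ≤ r * ‖x‖ := by
  have h1 : N x - x = (N - 1) x := by simp
  rw [h1]
  exact (N - 1).le_of_opNorm_le n.nN x

lemma Near.normNN (n : Near N B b r) (x : Ed d) : ‖N (N x) - x‖ ≤ 3 * r * ‖x‖ := by
  have h1 := n.normN x
  have h2 := n.normN (N x)
  have h3 : N (N x) - x = (N (N x) - N x) + (N x - x) := by abel
  have h4 : ‖N x‖ ≤ 2 * ‖x‖ := by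
    have : N x = (N x - x) + x := by abel
    have h5 := norm_add_le (N x - x) x
    rw [← this] at h5
    have := n.r1
    nlinarith [norm_nonneg x]
  rw [h3]
  refine (norm_add_le _ _).trans ?_
  nlinarith [n.r0, mul_le_mul_of_nonneg_left h4 n.r0]

variable {T : Ed d → Ed d} {ψ : Ed d → ℝ} {G A : Set (Ed d)}
    {P : Measure (Ed d × Ed d)} {κ E D : ℝ}

/-- Convexity of `ψ`, compared with the quadratic polynomial of Hessian `N ^ 2`. -/
lemma Cfg.gq_sub (h : Cfg T ψ G A P κ E D) (n : Near N B b r) (c : ℝ) {z : Ed d} (hz : z ∈ G)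
    (x : Ed d) :
    ‖B (T z - N (N z) - b)‖ ^ 2 / 2 ≤ ‖B (x - T z)‖ ^ 2 / 2
      + gq ψ N b c (B (B (x - b))) - gq ψ N b c z := by
  set w := T z - N (N z) - b with hw
  set e := x - T z with he
  set X := B (B (x - b)) with hX
  have h1 := h.sub z hz X
  have h2 : N (X - z) = B (e + w) := by
    have h3 : e + w = x - b - N (N z) := by rw [he, hw]; abel
    rw [h3, map_sub, map_sub, n.BN, hX, n.NB]
  have h4 : T z = N (N z) + b + w := by rw [hw]; abel
  have h5 : inner ℝ w (X - z) = inner ℝ (B w) (B e + B w) := by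
    rw [← map_add, ← h2, n.symB, n.BN]
  have h6 : ‖N X‖ ^ 2 = ‖N z‖ ^ 2 + 2 * inner ℝ (N z) (N (X - z)) + ‖N (X - z)‖ ^ 2 := by
    have := norm_add_sq_real (N z) (N (X - z))
    rwa [← map_add, add_sub_cancel] at this
  have h7 : ‖N (X - z)‖ ^ 2 = ‖B e‖ ^ 2 + 2 * inner ℝ (B e) (B w) + ‖B w‖ ^ 2 := by
    rw [h2, map_add, norm_add_sq_real]
  have h8 : inner ℝ (T z) (X - z) = inner ℝ (N z) (N (X - z)) + (inner ℝ b X - inner ℝ b z)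
      + inner ℝ w (X - z) := by
    conv_lhs => rw [h4]
    rw [inner_add_left, inner_add_left, n.symN, inner_sub_right b]
  have h9 : inner ℝ (B w) (B e + B w) = inner ℝ (B e) (B w) + ‖B w‖ ^ 2 := by
    rw [inner_add_right, real_inner_self_eq_norm_sq, real_inner_comm]
  unfold gq
  linarith

/-- The arithmetic of the cutoff: `ηz`, `ηX` stand for the values of the cutoff function, `gz`, `gX`
for those of `g`, `u` for `|B w|` and `ε` for `|B (x - T z)|`. -/
lemma energy_alg {ηz ηX gz gX u ε s ϑ : ℝ} (hz0 : 0 ≤ ηz) (hz1 : ηz ≤ 1)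
    (hε : 0 ≤ ε) (hϑ : 0 < ϑ) (hϑ1 : ϑ ≤ 1) (hg : |gX| ≤ s) (hs : s ≤ 1)
    (hlip : |ηz - ηX| ≤ 2 * (ε + u) / ϑ) (hK : u ^ 2 / 2 ≤ ε ^ 2 / 2 + gX - gz) :
    ηz ^ 2 * u ^ 2 / 4 ≤ ηX ^ 2 * gX - ηz ^ 2 * gz + 32 / ϑ ^ 2 * ε ^ 2
      + 36 / ϑ ^ 2 * gX ^ 2 + 8 * s / ϑ ^ 2 * u ^ 2 := by
  set δ := |ηz - ηX| with hδ
  have hδ0 : 0 ≤ δ := abs_nonneg _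
  have k1 : ηz ^ 2 * (u ^ 2 / 2) ≤ ηz ^ 2 * (ε ^ 2 / 2 + gX - gz) := by gcongr
  have k2 : (ηz ^ 2 - ηX ^ 2) * gX ≤ 2 * ηz * δ * |gX| + δ ^ 2 * |gX| := by
    calc (ηz ^ 2 - ηX ^ 2) * gX ≤ |(ηz ^ 2 - ηX ^ 2) * gX| := le_abs_self _
      _ = |2 * ηz * (ηz - ηX) - (ηz - ηX) ^ 2| * |gX| := by rw [abs_mul]; ring_nf
      _ ≤ (|2 * ηz * (ηz - ηX)| + |(ηz - ηX) ^ 2|) * |gX| := by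
          gcongr; exact abs_sub _ _
      _ = _ := by
          rw [abs_mul, abs_pow, abs_of_nonneg (by positivity : 0 ≤ 2 * ηz)]; ring
  have k3 : 2 * ηz * δ * |gX| ≤ ηz ^ 2 * u ^ 2 / 4 + ε ^ 2 + 20 / ϑ ^ 2 * gX ^ 2 := by
    calc 2 * ηz * δ * |gX| ≤ 2 * ηz * (2 * (ε + u) / ϑ) * |gX| := by gcongr
      _ = 4 * (ηz * ε) * (|gX| / ϑ) + 4 * (ηz * u) * (|gX| / ϑ) := by ring
      _ ≤ 4 * (1 * ε) * (|gX| / ϑ) + 4 * (ηz * u) * (|gX| / ϑ) := by gcongr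
      _ ≤ ηz ^ 2 * u ^ 2 / 4 + ε ^ 2 + 20 * (|gX| / ϑ) ^ 2 := by
          nlinarith [sq_nonneg (ε - 2 * (|gX| / ϑ)), sq_nonneg (ηz * u / 2 - 4 * (|gX| / ϑ))]
      _ = _ := by rw [div_pow, sq_abs]; ring
  have k4 : δ ^ 2 * |gX| ≤ 8 / ϑ ^ 2 * ε ^ 2 + 8 * s / ϑ ^ 2 * u ^ 2 := by
    have hs0 : 0 ≤ s := (abs_nonneg _).trans hg
    calc δ ^ 2 * |gX| ≤ (2 * (ε + u) / ϑ) ^ 2 * s := by gcongr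
      _ = 4 * (ε + u) ^ 2 * s / ϑ ^ 2 := by ring
      _ ≤ (4 * (2 * (ε ^ 2 + u ^ 2))) * s / ϑ ^ 2 := by
          gcongr; nlinarith [sq_nonneg (ε - u)]
      _ = 8 * s / ϑ ^ 2 * ε ^ 2 + 8 * s / ϑ ^ 2 * u ^ 2 := by ring
      _ ≤ 8 * 1 / ϑ ^ 2 * ε ^ 2 + 8 * s / ϑ ^ 2 * u ^ 2 := by gcongr
      _ = _ := by ring
  have k5 : ηz ^ 2 * (ε ^ 2 / 2) ≤ 1 * (ε ^ 2 / 2) := by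
    gcongr; exact pow_le_one₀ hz0 hz1
  have k6 : ε ^ 2 ≤ 1 / ϑ ^ 2 * ε ^ 2 := by
    have : 1 ≤ 1 / ϑ ^ 2 := by
      rw [le_div_iff₀ (by positivity), one_mul]; exact pow_le_one₀ hϑ.le hϑ1
    nlinarith [sq_nonneg ε]
  have k7 : 0 ≤ 1 / ϑ ^ 2 * gX ^ 2 := by positivity
  have e1 : (32 : ℝ) / ϑ ^ 2 * ε ^ 2 = 32 * (1 / ϑ ^ 2 * ε ^ 2) := by ring
  have e2 : (8 : ℝ) / ϑ ^ 2 * ε ^ 2 = 8 * (1 / ϑ ^ 2 * ε ^ 2) := by ring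
  have e3 : (36 : ℝ) / ϑ ^ 2 * gX ^ 2 = 36 * (1 / ϑ ^ 2 * gX ^ 2) := by ring
  have e4 : (20 : ℝ) / ϑ ^ 2 * gX ^ 2 = 20 * (1 / ϑ ^ 2 * gX ^ 2) := by ring
  rw [e1, e3]
  rw [e4] at k3
  rw [e2] at k4
  have k8 : 0 ≤ 1 / ϑ ^ 2 * ε ^ 2 := by positivity
  nlinarith

lemma Near.bw_le (n : Near N B b r) (T : Ed d → Ed d) {z : Ed d} (hz : ‖z‖ ≤ 4) :
    ‖B (T z - N (N z) - b)‖ ≤ 2 * (‖T z - z‖ + 13 * r) := by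
  refine (n.normB _).trans ?_
  gcongr
  have e : T z - N (N z) - b = (T z - z) - (N (N z) - z) - b := by abel
  rw [e]
  have h1 := norm_sub_le ((T z - z) - (N (N z) - z)) b
  have h2 := norm_sub_le (T z - z) (N (N z) - z)
  have h3 := n.normNN z
  have h4 : 3 * r * ‖z‖ ≤ 3 * r * 4 := by have := n.r0; gcongr
  linarith [n.nb]

/-- The energy inequality before integration. -/
lemma Cfg.energy_pt (h : Cfg T ψ G A P κ E D) (n : Near N B b r) {c s ϑ t : ℝ}
    (hs : ∀ z ∈ G, (‖z‖ < 3 ∨ ‖T z‖ < 3) → ‖T z - z‖ ≤ s) (hϑ : 0 < ϑ) (hϑ1 : ϑ ≤ 1 / 4)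
    (hsϑ : s ≤ ϑ / 32) (hrϑ : 13 * r ≤ ϑ / 32) (ht1 : t ≤ 1)
    (hg : ∀ x ∈ ball (0 : Ed d) (4 * ϑ), |gq ψ N b c x| ≤ t) {z : Ed d} (hz : z ∈ G) (x : Ed d) :
    cut ϑ z ^ 2 * ‖B (T z - N (N z) - b)‖ ^ 2 / 4
      ≤ cut ϑ (B (B (x - b))) ^ 2 * gq ψ N b c (B (B (x - b))) - cut ϑ z ^ 2 * gq ψ N b c z
        + 128 / ϑ ^ 2 * ‖T z - x‖ ^ 2
        + 36 / ϑ ^ 2 * (ball (0 : Ed d) (4 * ϑ)).indicator (fun y => gq ψ N b c y ^ 2) (B (B (x - b)))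
        + 8 * t / ϑ ^ 2 * (ball (0 : Ed d) (4 * ϑ)).indicator
            (fun z => ‖B (T z - N (N z) - b)‖ ^ 2) z := by
  have ht0 : 0 ≤ t := (abs_nonneg _).trans (hg 0 (by rw [mem_ball_zero_iff, norm_zero]; positivity))
  set X := B (B (x - b)) with hX
  set u := ‖B (T z - N (N z) - b)‖ with hu
  set ε := ‖B (x - T z)‖ with hε
  have hu0 : 0 ≤ u := norm_nonneg _
  have hε0 : 0 ≤ ε := norm_nonneg _
  have hεe : ε ≤ 2 * ‖T z - x‖ := by rw [norm_sub_rev]; exact n.normB _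
  have hXz : ‖X - z‖ ≤ 2 * (ε + u) := by
    have e1 : X - z = B (B (x - T z) + B (T z - N (N z) - b)) := by
      rw [← map_add]
      have : x - T z + (T z - N (N z) - b) = x - b - N (N z) := by abel
      rw [this, map_sub, map_sub, n.BN, n.BN]
    rw [e1]
    refine (n.normB _).trans ?_
    gcongr
    exact norm_add_le _ _
  have huz : ‖z‖ ≤ 4 → ‖T z - z‖ ≤ s → u ≤ ϑ / 8 := fun h1 h2 => by
    have := n.bw_le T h1
    linarith
  -- whenever `X` and `z` are separated, the distance of `T z` and `x` is not small
  have hfar : ‖z‖ ≤ 4 → ‖T z - z‖ ≤ s → ϑ ≤ ‖X - z‖ → 2 ≤ 128 / ϑ ^ 2 * ‖T z - x‖ ^ 2 := by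
    intro h1 h2 h3
    have h4 := huz h1 h2
    have h5 : ϑ / 8 ≤ ‖T z - x‖ := by linarith
    calc (2 : ℝ) = 128 / ϑ ^ 2 * (ϑ / 8) ^ 2 := by field_simp; norm_num
      _ ≤ _ := by gcongr
  have hKz : 0 ≤ 128 / ϑ ^ 2 * ‖T z - x‖ ^ 2 := by positivity
  have hI1 : 0 ≤ 36 / ϑ ^ 2 * (ball (0 : Ed d) (4 * ϑ)).indicator
      (fun y => gq ψ N b c y ^ 2) X :=
    mul_nonneg (by positivity) (indicator_nonneg (fun _ _ => sq_nonneg _) _)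
  have hI2 : 0 ≤ 8 * t / ϑ ^ 2 * (ball (0 : Ed d) (4 * ϑ)).indicator
      (fun z => ‖B (T z - N (N z) - b)‖ ^ 2) z :=
    mul_nonneg (by positivity) (indicator_nonneg (fun _ _ => sq_nonneg _) _)
  have hc0 := cut_nonneg ϑ z
  have hc1 := cut_le_one ϑ z
  have hcX0 := cut_nonneg ϑ X
  have hcX1 := cut_le_one ϑ X
  by_cases hzb : z ∈ ball (0 : Ed d) (4 * ϑ) <;> by_cases hXb : X ∈ ball (0 : Ed d) (4 * ϑ)
  · have hlip : |cut ϑ z - cut ϑ X| ≤ 2 * (ε + u) / ϑ := by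
      refine (cut_lip hϑ z X).trans ?_
      rw [norm_sub_rev]; gcongr
    have k := energy_alg hc0 hc1 hε0 hϑ (by linarith) (hg X hXb) ht1 hlip
      (h.gq_sub n c hz x)
    rw [indicator_of_mem hzb, indicator_of_mem hXb]
    have : 32 / ϑ ^ 2 * ε ^ 2 ≤ 128 / ϑ ^ 2 * ‖T z - x‖ ^ 2 := by
      calc 32 / ϑ ^ 2 * ε ^ 2 ≤ 32 / ϑ ^ 2 * (2 * ‖T z - x‖) ^ 2 := by gcongr
        _ = _ := by ring
    linarith
  · rw [mem_ball_zero_iff] at hzb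
    have hXb' := hXb
    rw [mem_ball_zero_iff, not_lt] at hXb'
    rw [cut_eq_zero hϑ (x := X) (by linarith)]
    by_cases hz3 : ‖z‖ < 3 * ϑ
    · have h2 : ‖T z - z‖ ≤ s := hs z hz (Or.inl (by linarith))
      have h3 := hfar (by linarith) h2 (by linarith [norm_sub_norm_le X z])
      have h4 := huz (by linarith) h2
      have h5 : u ^ 2 ≤ 1 := pow_le_one₀ hu0 (by linarith)
      have h6 := (abs_le.1 (hg z (by rwa [mem_ball_zero_iff]))).1
      have h7 : cut ϑ z ^ 2 ≤ 1 := pow_le_one₀ hc0 hc1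
      have h8 : cut ϑ z ^ 2 * u ^ 2 ≤ 1 := mul_le_one₀ h7 (sq_nonneg _) h5
      have h9 : cut ϑ z ^ 2 * gq ψ N b c z ≥ -1 ∧ cut ϑ z ^ 2 * gq ψ N b c z ≤ 1 := by
        have h10 := hg z (by rwa [mem_ball_zero_iff])
        have h11 : |cut ϑ z ^ 2 * gq ψ N b c z| ≤ 1 := by
          rw [abs_mul, abs_of_nonneg (sq_nonneg _)]
          exact mul_le_one₀ h7 (abs_nonneg _) (h10.trans ht1)
        exact abs_le.1 h11
      nlinarith
    · rw [cut_eq_zero hϑ (x := z) (by linarith)]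
      nlinarith
  · have hzb' := hzb
    rw [mem_ball_zero_iff, not_lt] at hzb'
    rw [cut_eq_zero hϑ (x := z) (by linarith)]
    by_cases hX3 : ‖X‖ < 3 * ϑ
    · have h9 : -1 ≤ cut ϑ X ^ 2 * gq ψ N b c X := by
        have h10 := hg X hXb
        have h7 : cut ϑ X ^ 2 ≤ 1 := pow_le_one₀ hcX0 hcX1
        have h11 : |cut ϑ X ^ 2 * gq ψ N b c X| ≤ 1 := by
          rw [abs_mul, abs_of_nonneg (sq_nonneg _)]
          exact mul_le_one₀ h7 (abs_nonneg _) (h10.trans ht1)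
        exact (abs_le.1 h11).1
      have h3 : 2 ≤ 128 / ϑ ^ 2 * ‖T z - x‖ ^ 2 := by
        by_cases hT3 : ‖T z‖ < 3
        · have h2 := hs z hz (Or.inr hT3)
          refine hfar ?_ h2 ?_
          · have := norm_sub_norm_le z (T z)
            rw [norm_sub_rev] at this
            linarith
          · have := norm_sub_norm_le z X
            rw [norm_sub_rev] at this
            linarith
        · have hx : ‖x‖ ≤ 2 := by
            have e1 : x = (N (N X) - X) + X + b := by rw [hX, n.NB, n.NB]; abel
            have h1 := n.normNN X
            have h2 : 3 * r * ‖X‖ ≤ 3 * r * 1 := by have := n.r0; gcongr; linarith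
            have h4 := norm_add_le ((N (N X) - X) + X) b
            have h5 := norm_add_le (N (N X) - X) X
            have := n.r1
            rw [e1]
            linarith [n.nb]
          have h1 : ϑ / 8 ≤ ‖T z - x‖ := by
            have := norm_sub_norm_le (T z) x
            linarith
          calc (2 : ℝ) = 128 / ϑ ^ 2 * (ϑ / 8) ^ 2 := by field_simp; norm_num
            _ ≤ _ := by gcongr
      nlinarith
    · rw [cut_eq_zero hϑ (x := X) (by linarith)]
      nlinarith
  · rw [mem_ball_zero_iff, not_lt] at hzb hXb
    rw [cut_eq_zero hϑ (x := z) (by linarith), cut_eq_zero hϑ (x := X) (by linarith)]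
    nlinarith

end

/-! ### The energy inequality -/

lemma abs_det_le {d : ℕ} (M : Ed d →L[ℝ] Ed d) : |M.det| ≤ ‖M‖ ^ d := by
  have h1 := addHaar_image_continuousLinearMap (volume : Measure (Ed d)) M (ball 0 1)
  have h2 : M '' ball 0 1 ⊆ closedBall 0 ‖M‖ := by
    rintro _ ⟨x, hx, rfl⟩
    rw [mem_ball_zero_iff] at hx
    rw [mem_closedBall_zero_iff]
    calc ‖M x‖ ≤ ‖M‖ * ‖x‖ := M.le_opNorm x
      _ ≤ ‖M‖ * 1 := by gcongr
      _ = _ := mul_one _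
  have h3 := measure_mono (μ := volume) h2
  rw [h1, addHaar_closedBall _ _ (norm_nonneg _), finrank_euclideanSpace_fin] at h3
  rw [ENNReal.mul_le_mul_iff_left (measure_ball_pos _ _ one_pos).ne' measure_ball_lt_top.ne,
    ENNReal.ofReal_le_ofReal_iff (by positivity)] at h3
  exact h3

lemma one_add_pow_le (n : ℕ) {x : ℝ} (hx0 : 0 ≤ x) (hx1 : x ≤ 1) :
    (1 + x) ^ n ≤ 1 + (2 ^ n - 1) * x := by
  induction n with
  | zero => simp
  | succ n ih =>
    have h1 : (1 : ℝ) ≤ 2 ^ n := one_le_pow₀ (by norm_num)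
    have h2 : x * x ≤ x := by nlinarith
    have h3 := mul_le_mul_of_nonneg_left h2 (by linarith : (0 : ℝ) ≤ 2 ^ n - 1)
    calc (1 + x) ^ (n + 1) = (1 + x) ^ n * (1 + x) := pow_succ _ _
      _ ≤ (1 + (2 ^ n - 1) * x) * (1 + x) := by gcongr
      _ = 1 + x + (2 ^ n - 1) * x + (2 ^ n - 1) * (x * x) := by ring
      _ ≤ 1 + x + (2 ^ n - 1) * x + (2 ^ n - 1) * x := by linarith
      _ = _ := by ring

section
variable {d : ℕ} {N B : Ed d →L[ℝ] Ed d} {b : Ed d} {r : ℝ}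

/-- Integration after the affine change of variables `x ↦ B (B (x - b))`; the Jacobian is close
to `1`. -/
lemma Near.jac (n : Near N B b r) : ∃ j : ℝ, 0 ≤ j ∧ |j - 1| ≤ 2 * 4 ^ d * r ∧
    ∀ F : Ed d → ℝ, Measurable F → ∫ x, F (B (B (x - b))) = j * ∫ x, F x := by
  have hBN : (B.comp N : Ed d →L[ℝ] Ed d) = ContinuousLinearMap.id ℝ _ := by
    ext1 x; exact n.BN x
  have hdet : B.det * N.det = 1 := by
    have h1 : LinearMap.det ((B : Ed d →ₗ[ℝ] Ed d) * (N : Ed d →ₗ[ℝ] Ed d)) = 1 := by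
      have : (B : Ed d →ₗ[ℝ] Ed d) * (N : Ed d →ₗ[ℝ] Ed d) = 1 := by
        ext1 x; exact n.BN x
      rw [this, map_one]
    rw [map_mul] at h1
    exact h1
  have hB0 : B.det ≠ 0 := left_ne_zero_of_mul_eq_one hdet
  have hN1 : |N.det| ≤ (1 + 2 * r) ^ d := by
    refine (abs_det_le N).trans ?_
    gcongr
    have : N = (N - 1) + 1 := by abel
    have h2 := norm_add_le (N - 1) (1 : Ed d →L[ℝ] Ed d)
    rw [← this] at h2
    have h3 : ‖(1 : Ed d →L[ℝ] Ed d)‖ ≤ 1 := ContinuousLinearMap.norm_id_le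
    linarith [n.nN, n.r0]
  have hB1 : |B.det| ≤ (1 + 2 * r) ^ d := by
    refine (abs_det_le B).trans ?_
    gcongr
    have : B = (B - 1) + 1 := by abel
    have h2 := norm_add_le (B - 1) (1 : Ed d →L[ℝ] Ed d)
    rw [← this] at h2
    have h3 : ‖(1 : Ed d →L[ℝ] Ed d)‖ ≤ 1 := ContinuousLinearMap.norm_id_le
    linarith [n.nB]
  have hr0 := n.r0
  have hr1 := n.r1
  set y := (1 + 2 * r) ^ (2 * d) with hy
  have hy1 : y - 1 ≤ 2 * 4 ^ d * r := by
    have := one_add_pow_le (2 * d) (x := 2 * r) (by linarith) (by linarith)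
    rw [pow_mul 2 2 d] at this
    norm_num at this
    nlinarith
  have hN2 : |N.det| ^ 2 ≤ y := by
    rw [hy, mul_comm 2 d, pow_mul]; gcongr
  have hB2 : |B.det| ^ 2 ≤ y := by
    rw [hy, mul_comm 2 d, pow_mul]; gcongr
  have hBN2 : |B.det| ^ 2 * |N.det| ^ 2 = 1 := by
    rw [← mul_pow, ← abs_mul, hdet]; simp
  refine ⟨|N.det| ^ 2, by positivity, ?_, ?_⟩
  · rw [abs_le]
    refine ⟨?_, by linarith⟩
    have h1 : 1 ≤ y * |N.det| ^ 2 := by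
      rw [← hBN2]; gcongr
    have h2 : 1 ≤ y := one_le_pow₀ (by linarith)
    nlinarith [sq_nonneg (y - 1), sq_nonneg |N.det|]
  · intro F hF
    have e0 : ∫ x, F (B (B (x - b))) = ∫ x, F (B (B x)) :=
      integral_sub_right_eq_self (fun x => F (B (B x))) b
    have key : ∀ F : Ed d → ℝ, Measurable F → ∫ x, F (B x) = |N.det| * ∫ x, F x := by
      intro F hF
      have h1 := map_linearMap_addHaar_eq_smul_addHaar (volume : Measure (Ed d))
        (f := (B : Ed d →ₗ[ℝ] Ed d)) hB0
      have h2 : ∫ x, F x ∂(Measure.map B volume) = ∫ x, F (B x) :=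
        integral_map B.continuous.measurable.aemeasurable hF.aestronglyMeasurable
      have h3 : Measure.map B (volume : Measure (Ed d))
        = ENNReal.ofReal |(LinearMap.det (B : Ed d →ₗ[ℝ] Ed d))⁻¹| • volume := h1
      rw [← h2, h3, integral_smul_measure, ENNReal.toReal_ofReal (abs_nonneg _), smul_eq_mul]
      congr 2
      exact inv_eq_of_mul_eq_one_right hdet
    rw [e0, key (fun x => F (B x)) (hF.comp B.continuous.measurable), key F hF]
    ring

lemma Near.norm_le_two (n : Near N B b r) {x : Ed d} (hx : ‖B (B (x - b))‖ ≤ 1) : ‖x‖ ≤ 2 := by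
  set X := B (B (x - b)) with hX
  have e1 : x = (N (N X) - X) + X + b := by rw [hX, n.NB, n.NB]; abel
  have h1 := n.normNN X
  have h2 : 3 * r * ‖X‖ ≤ 3 * r * 1 := by have := n.r0; gcongr
  have h4 := norm_add_le ((N (N X) - X) + X) b
  have h5 := norm_add_le (N (N X) - X) X
  have := n.r1
  rw [e1]
  linarith [n.nb]

variable {T : Ed d → Ed d} {ψ : Ed d → ℝ} {G A : Set (Ed d)}
    {P : Measure (Ed d × Ed d)} {κ E D : ℝ}

set_option maxHeartbeats 1000000 in
/-- The Caccioppoli inequality: `Cfg.energy_pt` integrated with respect to `P`. -/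
lemma Cfg.energy_int (h : Cfg T ψ G A P κ E D) (n : Near N B b r) {c s ϑ t j : ℝ}
    (hs : ∀ z ∈ G, (‖z‖ < 3 ∨ ‖T z‖ < 3) → ‖T z - z‖ ≤ s) (hϑ : 0 < ϑ) (hϑ1 : ϑ ≤ 1 / 4)
    (hsϑ : s ≤ ϑ / 32) (hrϑ : 13 * r ≤ ϑ / 32) (ht1 : t ≤ 1)
    (hg : ∀ x ∈ ball (0 : Ed d) (4 * ϑ), |gq ψ N b c x| ≤ t)
    (hj : ∀ F : Ed d → ℝ, Measurable F → ∫ x, F (B (B (x - b))) = j * ∫ x, F x) :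
    ∫ z, cut ϑ z ^ 2 * ‖B (T z - N (N z) - b)‖ ^ 2 / 4
      ≤ (κ * j - 1) * (∫ x, cut ϑ x ^ 2 * gq ψ N b c x) + 128 / ϑ ^ 2 * D
        + 36 / ϑ ^ 2 * (κ * j) * (∫ x, (ball (0 : Ed d) (4 * ϑ)).indicator
            (fun y => gq ψ N b c y ^ 2) x)
        + 8 * t / ϑ ^ 2 * ∫ z, (ball (0 : Ed d) (4 * ϑ)).indicator
            (fun z => ‖B (T z - N (N z) - b)‖ ^ 2) z := by
  have := h.fin
  have hT := h.meas
  have hs1 : s ≤ 1 / 2 := by linarith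
  have hgc : Continuous (gq ψ N b c) := by
    have := h.cont
    unfold gq; fun_prop
  have hcc := cut_cont (d := d) ϑ
  have hum : Measurable fun z => ‖B (T z - N (N z) - b)‖ ^ 2 := by fun_prop
  set Gi : Ed d → ℝ := (ball (0 : Ed d) (4 * ϑ)).indicator (fun y => gq ψ N b c y ^ 2) with hGi
  set U : Ed d → ℝ := (ball (0 : Ed d) (4 * ϑ)).indicator
    (fun z => ‖B (T z - N (N z) - b)‖ ^ 2) with hU
  set L : Ed d → ℝ := fun z => cut ϑ z ^ 2 * ‖B (T z - N (N z) - b)‖ ^ 2 / 4 with hL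
  set F : Ed d → ℝ := fun x => cut ϑ x ^ 2 * gq ψ N b c x with hF
  have hGim : Measurable Gi := (hgc.pow 2).measurable.indicator measurableSet_ball
  have hUm : Measurable U := hum.indicator measurableSet_ball
  have hLm : Measurable L := ((hcc.pow 2).measurable.mul hum).div_const 4
  have hFc : Continuous F := (hcc.pow 2).mul hgc
  have hFm : Measurable F := hFc.measurable
  have hcut0 : ∀ x : Ed d, x ∉ ball (0 : Ed d) (4 * ϑ) → cut ϑ x = 0 := fun x hx => by
    rw [mem_ball_zero_iff, not_lt] at hx
    exact cut_eq_zero hϑ (by linarith)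
  have hF0 : ∀ x, x ∉ ball (0 : Ed d) (4 * ϑ) → F x = 0 := fun x hx => by
    simp only [hF]; rw [hcut0 x hx]; ring
  have hL0 : ∀ x, x ∉ ball (0 : Ed d) (4 * ϑ) → L x = 0 := fun x hx => by
    simp only [hL]; rw [hcut0 x hx]; ring
  have hG0 : ∀ x, x ∉ ball (0 : Ed d) (4 * ϑ) → Gi x = 0 := fun x hx => indicator_of_notMem hx _
  have hU0 : ∀ x, x ∉ ball (0 : Ed d) (4 * ϑ) → U x = 0 := fun x hx => indicator_of_notMem hx _
  have hb3 : ∀ x : Ed d, x ∉ ball (0 : Ed d) 3 → x ∉ ball (0 : Ed d) (4 * ϑ) := fun x hx h' =>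
    hx (ball_subset_ball (by linarith) h')
  have hb4 : ∀ x : Ed d, x ∉ ball (0 : Ed d) 4 → B (B (x - b)) ∉ ball (0 : Ed d) (4 * ϑ) := by
    intro x hx h'
    rw [mem_ball_zero_iff] at h' hx
    have := n.norm_le_two (x := x) (by linarith)
    linarith
  have hcutsq : ∀ x : Ed d, cut ϑ x ^ 2 ≤ 1 := fun x => pow_le_one₀ (cut_nonneg _ _) (cut_le_one _ _)
  have hF1 : ∀ x, |F x| ≤ 1 := by
    intro x
    by_cases hx : x ∈ ball (0 : Ed d) (4 * ϑ)
    · simp only [hF]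
      rw [abs_mul, abs_of_nonneg (sq_nonneg _)]
      exact mul_le_one₀ (hcutsq x) (abs_nonneg _) ((hg x hx).trans ht1)
    · rw [hF0 x hx]; simp
  have hG1 : ∀ x, |Gi x| ≤ 1 := by
    intro x
    by_cases hx : x ∈ ball (0 : Ed d) (4 * ϑ)
    · rw [hGi, indicator_of_mem hx, abs_pow]
      exact pow_le_one₀ (abs_nonneg _) ((hg x hx).trans ht1)
    · rw [hG0 x hx]; simp
  have hu1 : ∀ z ∈ G, z ∈ ball (0 : Ed d) (4 * ϑ) → ‖B (T z - N (N z) - b)‖ ^ 2 ≤ 1 := by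
    intro z hz hzb
    rw [mem_ball_zero_iff] at hzb
    have h1 := hs z hz (Or.inl (by linarith))
    have h2 := n.bw_le T (z := z) (by linarith)
    exact pow_le_one₀ (norm_nonneg _) (by linarith)
  have hU1 : ∀ z ∈ G, |U z| ≤ 1 := by
    intro z hz
    by_cases hx : z ∈ ball (0 : Ed d) (4 * ϑ)
    · rw [hU, indicator_of_mem hx, abs_of_nonneg (sq_nonneg _)]
      exact hu1 z hz hx
    · rw [hU0 z hx]; simp
  have hL1 : ∀ z ∈ G, |L z| ≤ 1 := by
    intro z hz
    by_cases hx : z ∈ ball (0 : Ed d) (4 * ϑ)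
    · simp only [hL]
      rw [abs_of_nonneg (by positivity)]
      have := mul_le_one₀ (hcutsq z) (sq_nonneg _) (hu1 z hz hx)
      linarith
    · rw [hL0 z hx]; simp
  set Xm : Ed d → Ed d := fun x => B (B (x - b)) with hXm
  have hXmm : Measurable Xm := by fun_prop
  have iL : Integrable (fun p => L p.1) P := by
    refine Integrable.mono' (integrable_const (1 : ℝ)) (hLm.comp measurable_fst).aestronglyMeasurable ?_
    filter_upwards [h.PG] with p hp using hL1 _ hp
  have iU : Integrable (fun p => U p.1) P := by
    refine Integrable.mono' (integrable_const (1 : ℝ)) (hUm.comp measurable_fst).aestronglyMeasurable ?_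
    filter_upwards [h.PG] with p hp using hU1 _ hp
  have iF1 : Integrable (fun p => F p.1) P :=
    Integrable.mono' (integrable_const (1 : ℝ)) (hFm.comp measurable_fst).aestronglyMeasurable
      (ae_of_all _ fun p => hF1 _)
  have iF2 : Integrable (fun p => F (Xm p.2)) P :=
    Integrable.mono' (integrable_const (1 : ℝ))
      ((hFm.comp hXmm).comp measurable_snd).aestronglyMeasurable (ae_of_all _ fun p => hF1 _)
  have iG : Integrable (fun p => Gi (Xm p.2)) P :=
    Integrable.mono' (integrable_const (1 : ℝ))
      ((hGim.comp hXmm).comp measurable_snd).aestronglyMeasurable (ae_of_all _ fun p => hG1 _)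
  have mC : Measurable (fun p : Ed d × Ed d => ‖T p.1 - p.2‖ ^ 2) := by fun_prop
  have iC : Integrable (fun p => ‖T p.1 - p.2‖ ^ 2) P := by
    refine ⟨mC.aestronglyMeasurable, ?_⟩
    rw [hasFiniteIntegral_iff_ofReal (ae_of_all _ fun p => by positivity)]
    exact h.cost.trans_lt ENNReal.ofReal_lt_top
  have cC : ∫ p, ‖T p.1 - p.2‖ ^ 2 ∂P ≤ D := by
    rw [integral_eq_lintegral_of_nonneg_ae (ae_of_all _ fun p => by positivity)
      mC.aestronglyMeasurable]
    exact ENNReal.toReal_le_of_le_ofReal h.hD h.cost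
  have hpt : ∀ᵐ p ∂P, L p.1 ≤ F (Xm p.2) - F p.1 + 128 / ϑ ^ 2 * ‖T p.1 - p.2‖ ^ 2
      + 36 / ϑ ^ 2 * Gi (Xm p.2) + 8 * t / ϑ ^ 2 * U p.1 := by
    filter_upwards [h.PG] with p hp
    exact h.energy_pt n hs hϑ hϑ1 hsϑ hrϑ ht1 hg hp p.2
  have i1 : Integrable (fun p => F (Xm p.2) - F p.1) P := iF2.sub iF1
  have i2 : Integrable (fun p => 128 / ϑ ^ 2 * ‖T p.1 - p.2‖ ^ 2) P := iC.const_mul _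
  have i3 : Integrable (fun p => 36 / ϑ ^ 2 * Gi (Xm p.2)) P := iG.const_mul _
  have i4 : Integrable (fun p => 8 * t / ϑ ^ 2 * U p.1) P := iU.const_mul _
  have i12 : Integrable (fun p => F (Xm p.2) - F p.1 + 128 / ϑ ^ 2 * ‖T p.1 - p.2‖ ^ 2) P := i1.add i2
  have i123 : Integrable (fun p => F (Xm p.2) - F p.1 + 128 / ϑ ^ 2 * ‖T p.1 - p.2‖ ^ 2
      + 36 / ϑ ^ 2 * Gi (Xm p.2)) P := i12.add i3
  have i1234 : Integrable (fun p => F (Xm p.2) - F p.1 + 128 / ϑ ^ 2 * ‖T p.1 - p.2‖ ^ 2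
      + 36 / ϑ ^ 2 * Gi (Xm p.2) + 8 * t / ϑ ^ 2 * U p.1) P := i123.add i4
  have hmain := integral_mono_ae iL i1234 hpt
  rw [integral_add i123 i4, integral_add i12 i3, integral_add i1 i2, integral_sub iF2 iF1,
    integral_const_mul, integral_const_mul, integral_const_mul,
    h.int_fst hs1 hs hLm (fun x hx => hL0 x (hb3 x hx)),
    h.int_fst hs1 hs hFm (fun x hx => hF0 x (hb3 x hx)),
    h.int_fst hs1 hs hUm (fun x hx => hU0 x (hb3 x hx)),
    h.int_snd (g := fun x => F (Xm x)) (hFm.comp hXmm) (fun x hx => hF0 _ (hb4 x hx)),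
    h.int_snd (g := fun x => Gi (Xm x)) (hGim.comp hXmm) (fun x hx => hG0 _ (hb4 x hx))] at hmain
  have j1 : ∫ x, F (Xm x) = j * ∫ x, F x := hj F hFm
  have j2 : ∫ x, Gi (Xm x) = j * ∫ x, Gi x := hj Gi hGim
  rw [j1, j2] at hmain
  have hcost : 128 / ϑ ^ 2 * ∫ p, ‖T p.1 - p.2‖ ^ 2 ∂P ≤ 128 / ϑ ^ 2 * D := by gcongr
  nlinarith [hmain, hcost]

end

/-! ### Decay of the energy -/

/-- Inverting `1 + Q / 2` for a small symmetric `Q`. -/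
lemma exists_near {d : ℕ} {Q : Ed d →L[ℝ] Ed d} (hQ : IsSelfAdjoint Q) {b : Ed d} {r : ℝ}
    (hr1 : r ≤ 1 / 8) (hQr : ‖Q‖ ≤ r) (hb : ‖b‖ ≤ r) :
    ∃ B : Ed d ≃L[ℝ] Ed d, IsSelfAdjoint (B : Ed d →L[ℝ] Ed d) ∧
      Near (1 + (1 / 2 : ℝ) • Q) (B : Ed d →L[ℝ] Ed d) b r := by
  have hr0 : 0 ≤ r := (norm_nonneg _).trans hb
  set t : Ed d →L[ℝ] Ed d := -((1 / 2 : ℝ) • Q) with ht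
  have htn : ‖t‖ ≤ r / 2 := by
    rw [ht, norm_neg, norm_smul, Real.norm_of_nonneg (by norm_num)]; linarith
  set U : (Ed d →L[ℝ] Ed d)ˣ := Units.oneSub t (by linarith) with hU
  have hUN : (U : Ed d →L[ℝ] Ed d) = 1 + (1 / 2 : ℝ) • Q := by
    rw [hU, Units.val_oneSub, ht, sub_neg_eq_add]
  set N := 1 + (1 / 2 : ℝ) • Q with hN
  set B := ContinuousLinearEquiv.unitsEquiv ℝ (Ed d) U⁻¹ with hB
  have hBc : (B : Ed d →L[ℝ] Ed d) = (U⁻¹ : (Ed d →L[ℝ] Ed d)ˣ) := by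
    ext1 x; rfl
  have hBN : ∀ x, (B : Ed d →L[ℝ] Ed d) (N x) = x := by
    intro x
    rw [hBc, ← hUN]
    have : ((U⁻¹ : (Ed d →L[ℝ] Ed d)ˣ) : Ed d →L[ℝ] Ed d) * U = 1 := U.inv_mul
    exact congrArg (fun f : Ed d →L[ℝ] Ed d => f x) this
  have hNB : ∀ x, N ((B : Ed d →L[ℝ] Ed d) x) = x := by
    intro x
    rw [hBc, ← hUN]
    have : (U : Ed d →L[ℝ] Ed d) * (U⁻¹ : (Ed d →L[ℝ] Ed d)ˣ) = 1 := U.mul_inv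
    exact congrArg (fun f : Ed d →L[ℝ] Ed d => f x) this
  have hQsym : ∀ x y, inner ℝ (Q x) y = inner ℝ x (Q y) :=
    ContinuousLinearMap.isSelfAdjoint_iff_isSymmetric.1 hQ
  have hNsym : ∀ x y, inner ℝ (N x) y = inner ℝ x (N y) := by
    intro x y
    have e : ∀ x, N x = x + (1 / 2 : ℝ) • Q x := fun x => by simp [hN]
    rw [e, e, inner_add_left, inner_add_right, real_inner_smul_left, real_inner_smul_right, hQsym]
  have hNn : ‖N - 1‖ ≤ r := by
    rw [hN, add_sub_cancel_left, norm_smul, Real.norm_of_nonneg (by norm_num)]; linarith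
  have hBn : ‖(B : Ed d →L[ℝ] Ed d) - 1‖ ≤ 2 * r := by
    apply ContinuousLinearMap.opNorm_le_bound _ (by positivity)
    intro x
    have e1 : ((B : Ed d →L[ℝ] Ed d) - 1) x = - (N - 1) ((B : Ed d →L[ℝ] Ed d) x) := by
      simp only [_root_.sub_apply, hNB, one_apply_eq_self]
      abel
    have e2 : ‖((B : Ed d →L[ℝ] Ed d) - 1) x‖ ≤ r * ‖(B : Ed d →L[ℝ] Ed d) x‖ := by
      rw [e1, norm_neg]
      exact (N - 1).le_of_opNorm_le hNn _
    have e3 : ‖(B : Ed d →L[ℝ] Ed d) x‖ ≤ 2 * ‖x‖ := by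
      have h1 : (B : Ed d →L[ℝ] Ed d) x = ((B : Ed d →L[ℝ] Ed d) - 1) x + x := by
        simp
      have h2 := norm_add_le (((B : Ed d →L[ℝ] Ed d) - 1) x) x
      rw [← h1] at h2
      nlinarith [norm_nonneg x, norm_nonneg ((B : Ed d →L[ℝ] Ed d) x)]
    nlinarith
  have near : Near N (B : Ed d →L[ℝ] Ed d) b r :=
    ⟨hBN, hNB, hNsym, hNn, hBn, hb, hr0, hr1⟩
  refine ⟨B, ?_, near⟩
  rw [ContinuousLinearMap.isSelfAdjoint_iff_isSymmetric]
  exact near.symB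

lemma gq_eq {d : ℕ} (ψ : Ed d → ℝ) (Q : Ed d →L[ℝ] Ed d) (b : Ed d) (c : ℝ) (x : Ed d) :
    gq ψ (1 + (1 / 2 : ℝ) • Q) b c x
      = pot ψ x - c - inner ℝ b x - inner ℝ (Q x) x / 2 - ‖Q x‖ ^ 2 / 8 := by
  unfold gq pot
  have e : (1 + (1 / 2 : ℝ) • Q) x = x + (1 / 2 : ℝ) • Q x := by simp
  rw [e, norm_add_sq_real, real_inner_smul_right, norm_smul, Real.norm_of_nonneg (by norm_num),
    real_inner_comm]
  ring

section
variable {d : ℕ} {N B : Ed d →L[ℝ] Ed d} {b : Ed d} {r : ℝ}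

/-- Change of variables in the energy of the transformed map. -/
lemma Near.lint_le (n : Near N B b r) (hr : 2 * 4 ^ d * r ≤ 1) {F : Ed d → ℝ≥0∞}
    (hF : Measurable F) (ϑ : ℝ) :
    ∫⁻ y in ball (0 : Ed d) ϑ, F (B y) ≤ 2 * ∫⁻ z in ball (0 : Ed d) (2 * ϑ), F z := by
  have hdet : B.det * N.det = 1 := by
    have h1 : LinearMap.det ((B : Ed d →ₗ[ℝ] Ed d) * (N : Ed d →ₗ[ℝ] Ed d)) = 1 := by
      have : (B : Ed d →ₗ[ℝ] Ed d) * (N : Ed d →ₗ[ℝ] Ed d) = 1 := by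
        ext1 x; exact n.BN x
      rw [this, map_one]
    rw [map_mul] at h1
    exact h1
  have hB0 : B.det ≠ 0 := left_ne_zero_of_mul_eq_one hdet
  have hN1 : |N.det| ≤ 2 := by
    refine (abs_det_le N).trans ?_
    have : N = (N - 1) + 1 := by abel
    have h2 := norm_add_le (N - 1) (1 : Ed d →L[ℝ] Ed d)
    rw [← this] at h2
    have h3 : ‖(1 : Ed d →L[ℝ] Ed d)‖ ≤ 1 := ContinuousLinearMap.norm_id_le
    have h4 : ‖N‖ ≤ 1 + r := by linarith [n.nN]
    have h5 := one_add_pow_le d n.r0 (by linarith [n.r1])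
    have h6 : (2 : ℝ) ^ d ≤ 4 ^ d := by gcongr; norm_num
    have h7 : (2 : ℝ) ^ d * r ≤ 4 ^ d * r := by have := n.r0; gcongr
    calc ‖N‖ ^ d ≤ (1 + r) ^ d := by gcongr
      _ ≤ 2 := by nlinarith [n.r0]
  have h1 : Measure.map B (volume : Measure (Ed d))
      = ENNReal.ofReal |(LinearMap.det (B : Ed d →ₗ[ℝ] Ed d))⁻¹| • volume :=
    map_linearMap_addHaar_eq_smul_addHaar (volume : Measure (Ed d))
      (f := (B : Ed d →ₗ[ℝ] Ed d)) hB0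
  have e0 : (LinearMap.det (B : Ed d →ₗ[ℝ] Ed d))⁻¹ = N.det := inv_eq_of_mul_eq_one_right hdet
  rw [e0] at h1
  have hm : Measurable ((ball (0 : Ed d) (2 * ϑ)).indicator F) := hF.indicator measurableSet_ball
  calc ∫⁻ y in ball (0 : Ed d) ϑ, F (B y)
      ≤ ∫⁻ y, (ball (0 : Ed d) (2 * ϑ)).indicator F (B y) := by
        rw [← lintegral_indicator measurableSet_ball]
        apply lintegral_mono
        intro y
        by_cases hy : y ∈ ball (0 : Ed d) ϑ
        · simp only
          rw [indicator_of_mem hy, indicator_of_mem]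
          rw [mem_ball_zero_iff] at hy ⊢
          linarith [n.normB y]
        · simp only
          rw [indicator_of_notMem hy]; exact zero_le
    _ = ∫⁻ z, (ball (0 : Ed d) (2 * ϑ)).indicator F z ∂(Measure.map B volume) :=
        (lintegral_map hm B.continuous.measurable).symm
    _ = ENNReal.ofReal |N.det| * ∫⁻ z in ball (0 : Ed d) (2 * ϑ), F z := by
        rw [h1, lintegral_smul_measure, lintegral_indicator measurableSet_ball, smul_eq_mul]
    _ ≤ _ := by
        gcongr
        rw [ENNReal.ofReal_le_iff_le_toReal (by norm_num)]
        simpa using hN1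

variable {T : Ed d → Ed d} {ψ : Ed d → ℝ} {G A : Set (Ed d)}
    {P : Measure (Ed d × Ed d)} {κ E D : ℝ}

/-- Smallness in `L²` and a Lipschitz bound imply smallness in the supremum norm. -/
lemma Cfg.sup_g (h : Cfg T ψ G A P κ E D) {Q : Ed d →L[ℝ] Ed d} {c s ϑ t M : ℝ} (hM0 : 0 ≤ M)
    (hs : ∀ z ∈ G, (‖z‖ < 3 ∨ ‖T z‖ < 3) → ‖T z - z‖ ≤ s) (hϑ1 : ϑ ≤ 1 / 4)
    (hr1 : r ≤ 1 / 8) (hQr : ‖Q‖ ≤ r) (hb : ‖b‖ ≤ r) (hst : s ≤ t / 16) (hrt : r ≤ t / 64)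
    (hM : ∫⁻ x in ball (0 : Ed d) (4 * ϑ), ENNReal.ofReal (gq ψ (1 + (1 / 2 : ℝ) • Q) b c x ^ 2)
      ≤ ENNReal.ofReal M)
    (hMt : M < (t / 2) ^ 2 * volume.real (ball (0 : Ed d) (4 * ϑ))) :
    ∀ x ∈ ball (0 : Ed d) (4 * ϑ), |gq ψ (1 + (1 / 2 : ℝ) • Q) b c x| ≤ t := by
  have hr0 : 0 ≤ r := (norm_nonneg _).trans hb
  have ht0 : 0 ≤ t := by linarith
  set g := gq ψ (1 + (1 / 2 : ℝ) • Q) b c with hg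
  obtain ⟨x0, hx0, hgx0⟩ : ∃ x0 ∈ ball (0 : Ed d) (4 * ϑ), |g x0| < t / 2 := by
    by_contra hcon
    push Not at hcon
    have h1 : ENNReal.ofReal ((t / 2) ^ 2 * volume.real (ball (0 : Ed d) (4 * ϑ)))
        ≤ ENNReal.ofReal M := by
      rw [ENNReal.ofReal_mul (by positivity), ofReal_measureReal measure_ball_lt_top.ne]
      refine le_trans ?_ hM
      rw [← setLIntegral_const]
      apply setLIntegral_mono' measurableSet_ball
      intro x hx
      apply ENNReal.ofReal_le_ofReal
      rw [← sq_abs (g x)]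
      have := hcon x hx
      gcongr
    rw [ENNReal.ofReal_le_ofReal_iff hM0] at h1
    linarith
  intro x hx
  have hb3 : ball (0 : Ed d) (4 * ϑ) ⊆ ball (0 : Ed d) 3 := ball_subset_ball (by linarith)
  have hlip := h.pot_lip (fun z hz hz3 => hs z hz (Or.inl hz3)) (hb3 hx0) (hb3 hx)
  have hsm : ∀ y ∈ ball (0 : Ed d) (4 * ϑ),
      |inner ℝ b y + inner ℝ (Q y) y / 2 + ‖Q y‖ ^ 2 / 8| ≤ 2 * r := by
    intro y hy
    rw [mem_ball_zero_iff] at hy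
    have hy1 : ‖y‖ ≤ 1 := by linarith
    have hQy : ‖Q y‖ ≤ r := by
      calc ‖Q y‖ ≤ ‖Q‖ * ‖y‖ := Q.le_opNorm y
        _ ≤ r * 1 := by gcongr
        _ = r := mul_one r
    have k1 : |inner ℝ b y| ≤ r := by
      calc _ ≤ ‖b‖ * ‖y‖ := abs_real_inner_le_norm _ _
        _ ≤ r * 1 := by gcongr
        _ = r := mul_one r
    have k2 : |inner ℝ (Q y) y| ≤ r := by
      calc _ ≤ ‖Q y‖ * ‖y‖ := abs_real_inner_le_norm _ _
        _ ≤ r * 1 := by gcongr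
        _ = r := mul_one r
    have k3 : ‖Q y‖ ^ 2 ≤ r ^ 2 := by gcongr
    have k4 := sq_nonneg ‖Q y‖
    rw [abs_le] at k1 k2 ⊢
    constructor <;> nlinarith
  have h1 := hsm x hx
  have h2 := hsm x0 hx0
  have hxx : ‖x - x0‖ ≤ 2 := by
    rw [mem_ball_zero_iff] at hx hx0
    linarith [norm_sub_le x x0]
  have hs2 : s * ‖x - x0‖ ≤ t / 8 := by
    calc s * ‖x - x0‖ ≤ t / 16 * ‖x - x0‖ := by gcongr
      _ ≤ t / 16 * 2 := by gcongr
      _ = _ := by ring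
  have e1 := gq_eq ψ Q b c x
  have e2 := gq_eq ψ Q b c x0
  rw [abs_le] at h1 h2 hlip ⊢
  rw [abs_lt] at hgx0
  simp only [hg] at hgx0 ⊢
  rw [e2] at hgx0
  rw [e1]
  constructor <;> linarith [hlip.1, hlip.2]

end

section
variable {d : ℕ} {N B : Ed d →L[ℝ] Ed d} {b : Ed d} {r : ℝ}
  {T : Ed d → Ed d} {ψ : Ed d → ℝ} {G A : Set (Ed d)}
  {P : Measure (Ed d × Ed d)} {κ E D : ℝ}

lemma Cfg.bw_energy (h : Cfg T ψ G A P κ E D) (n : Near N B b r) {ϑ : ℝ} (hϑ1 : ϑ ≤ 1 / 4) :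
    ∫⁻ z in ball (0 : Ed d) (4 * ϑ), ENNReal.ofReal (‖B (T z - N (N z) - b)‖ ^ 2)
      ≤ ENNReal.ofReal (8 * E + 1352 * r ^ 2 * volume.real (ball (0 : Ed d) 1)) := by
  have hT := h.meas
  have hE := h.hE
  have hb1 : ball (0 : Ed d) (4 * ϑ) ⊆ ball (0 : Ed d) 1 := ball_subset_ball (by linarith)
  have hb4 : ball (0 : Ed d) 1 ⊆ ball (0 : Ed d) 4 := ball_subset_ball (by norm_num)
  calc _ ≤ ∫⁻ z in ball (0 : Ed d) 1, ENNReal.ofReal (‖B (T z - N (N z) - b)‖ ^ 2) :=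
        lintegral_mono_set hb1
    _ ≤ ∫⁻ z in ball (0 : Ed d) 1, (ENNReal.ofReal 8 * ENNReal.ofReal (‖T z - z‖ ^ 2)
          + ENNReal.ofReal (1352 * r ^ 2)) := by
        apply setLIntegral_mono' measurableSet_ball
        intro z hz
        rw [mem_ball_zero_iff] at hz
        rw [← ENNReal.ofReal_mul (by norm_num), ← ENNReal.ofReal_add (by positivity) (by positivity)]
        apply ENNReal.ofReal_le_ofReal
        have h1 := n.bw_le T (z := z) (by linarith)
        calc ‖B (T z - N (N z) - b)‖ ^ 2 ≤ (2 * (‖T z - z‖ + 13 * r)) ^ 2 := by gcongr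
          _ ≤ _ := by nlinarith [sq_nonneg (‖T z - z‖ - 13 * r)]
    _ = ENNReal.ofReal 8 * (∫⁻ z in ball (0 : Ed d) 1, ENNReal.ofReal (‖T z - z‖ ^ 2))
          + ENNReal.ofReal (1352 * r ^ 2) * volume (ball (0 : Ed d) 1) := by
        rw [lintegral_add_right _ measurable_const, lintegral_const_mul' _ _ ENNReal.ofReal_ne_top,
          setLIntegral_const]
    _ ≤ ENNReal.ofReal 8 * ENNReal.ofReal E
          + ENNReal.ofReal (1352 * r ^ 2) * ENNReal.ofReal (volume.real (ball (0 : Ed d) 1)) := by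
        rw [ofReal_measureReal measure_ball_lt_top.ne, ← h.energy]
        gcongr
    _ = _ := by
        rw [← ENNReal.ofReal_mul (by norm_num), ← ENNReal.ofReal_mul (by positivity),
          ← ENNReal.ofReal_add (by positivity) (by positivity)]

lemma integral_indicator_sq_le {F : Ed d → ℝ} (hF : Measurable F) (hF0 : ∀ x, 0 ≤ F x) {S : Set (Ed d)}
    (hS : MeasurableSet S) {M : ℝ} (hM0 : 0 ≤ M)
    (hM : ∫⁻ x in S, ENNReal.ofReal (F x) ≤ ENNReal.ofReal M) :
    Integrable (S.indicator F) ∧ ∫ x, S.indicator F x ≤ M := by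
  have e : ∫⁻ x, ENNReal.ofReal (S.indicator F x) = ∫⁻ x in S, ENNReal.ofReal (F x) := by
    rw [← lintegral_indicator hS]
    congr 1
    ext x
    by_cases hx : x ∈ S
    · rw [indicator_of_mem hx, indicator_of_mem hx]
    · rw [indicator_of_notMem hx, indicator_of_notMem hx, ENNReal.ofReal_zero]
  have hm : AEStronglyMeasurable (S.indicator F) volume := (hF.indicator hS).aestronglyMeasurable
  have h0 : 0 ≤ᵐ[volume] S.indicator F :=
    ae_of_all _ fun x => indicator_nonneg (fun y _ => hF0 y) x
  constructor
  · refine ⟨hm, ?_⟩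
    rw [hasFiniteIntegral_iff_ofReal h0, e]
    exact hM.trans_lt ENNReal.ofReal_lt_top
  · rw [integral_eq_lintegral_of_nonneg_ae h0 hm, e]
    exact ENNReal.toReal_le_of_le_ofReal hM0 hM

set_option maxHeartbeats 1000000 in
/-- The energy inequality for the transformed map, in terms of the `L²` distance `M` of the
potential to the quadratic polynomial. -/
lemma Cfg.decay (h : Cfg T ψ G A P κ E D) (n : Near N B b r) (hr : 2 * 4 ^ d * r ≤ 1)
    (hκ : |κ - 1| ≤ r) {c s ϑ t M : ℝ} (hM0 : 0 ≤ M)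
    (hs : ∀ z ∈ G, (‖z‖ < 3 ∨ ‖T z‖ < 3) → ‖T z - z‖ ≤ s) (hϑ : 0 < ϑ) (hϑ1 : ϑ ≤ 1 / 4)
    (hsϑ : s ≤ ϑ / 32) (hrϑ : 13 * r ≤ ϑ / 32) (ht1 : t ≤ 1)
    (hg : ∀ x ∈ ball (0 : Ed d) (4 * ϑ), |gq ψ N b c x| ≤ t)
    (hM : ∫⁻ x in ball (0 : Ed d) (4 * ϑ), ENNReal.ofReal (gq ψ N b c x ^ 2)
      ≤ ENNReal.ofReal M) :
    ∫⁻ y in ball (0 : Ed d) ϑ, ENNReal.ofReal (‖B (T (B y) - b) - y‖ ^ 2)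
      ≤ ENNReal.ofReal (8 * ((2 + 2 * 4 ^ d) ^ 2 * r ^ 2 * ϑ ^ 3
          * volume.real (ball (0 : Ed d) (4 * ϑ)) + M / ϑ ^ 3 + 128 / ϑ ^ 2 * D + 144 / ϑ ^ 2 * M
          + 8 * t / ϑ ^ 2 * (8 * E + 1352 * r ^ 2 * volume.real (ball (0 : Ed d) 1)))) := by
  obtain ⟨j, hj0, hj1, hj⟩ := n.jac
  have hT := h.meas
  have hE := h.hE
  have hD := h.hD
  have hr0 := n.r0
  have hr1 := n.r1
  have ht0 : 0 ≤ t := (abs_nonneg _).trans (hg 0 (by rw [mem_ball_zero_iff, norm_zero]; positivity))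
  have hgc : Continuous (gq ψ N b c) := by
    have := h.cont
    unfold gq; fun_prop
  have hum : Measurable fun z => ‖B (T z - N (N z) - b)‖ ^ 2 := by fun_prop
  have hk0 := h.energy_int n hs hϑ hϑ1 hsϑ hrϑ ht1 hg hj
  obtain ⟨iG, cG⟩ := integral_indicator_sq_le (F := fun y => gq ψ N b c y ^ 2)
    (hgc.pow 2).measurable (fun _ => sq_nonneg _) measurableSet_ball hM0 hM
  obtain ⟨iU, cU⟩ := integral_indicator_sq_le (F := fun z => ‖B (T z - N (N z) - b)‖ ^ 2)
    hum (fun _ => sq_nonneg _) measurableSet_ball (by positivity) (h.bw_energy n hϑ1)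
  set IG := ∫ x, (ball (0 : Ed d) (4 * ϑ)).indicator (fun y => gq ψ N b c y ^ 2) x with hIG
  set IU := ∫ z, (ball (0 : Ed d) (4 * ϑ)).indicator
    (fun z => ‖B (T z - N (N z) - b)‖ ^ 2) z with hIU
  set V4 := volume.real (ball (0 : Ed d) (4 * ϑ)) with hV4
  set V1 := volume.real (ball (0 : Ed d) 1) with hV1
  have hV40 : 0 ≤ V4 := measureReal_nonneg
  have hV10 : 0 ≤ V1 := measureReal_nonneg
  set k : ℝ := 2 + 2 * 4 ^ d with hk
  have hkk : 0 ≤ k := by positivity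
  have hj2 : j ≤ 2 := by linarith [(abs_le.1 hj1).2]
  have hκ2 : κ ≤ 2 := by linarith [(abs_le.1 hκ).2]
  have hκj : |κ * j - 1| ≤ k * r := by
    have e1 : κ * j - 1 = (κ - 1) * j + (j - 1) := by ring
    rw [e1]
    calc |(κ - 1) * j + (j - 1)| ≤ |(κ - 1) * j| + |j - 1| := abs_add_le _ _
      _ ≤ r * 2 + 2 * 4 ^ d * r := by
          rw [abs_mul, abs_of_nonneg hj0]; gcongr
      _ = k * r := by rw [hk]; ring
  have hcc := cut_cont (d := d) ϑ
  have iF : Integrable fun x => cut ϑ x ^ 2 * gq ψ N b c x :=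
    integrable_of_ball (r := 4 * ϑ) (by fun_prop) (fun x hx => by
      rw [mem_ball_zero_iff, not_lt] at hx
      rw [cut_eq_zero hϑ (by linarith)]; ring)
  have i1 : Integrable ((ball (0 : Ed d) (4 * ϑ)).indicator fun _ => k ^ 2 * r ^ 2 * ϑ ^ 3) :=
    (integrable_indicator_iff measurableSet_ball).2 (integrableOn_const measure_ball_lt_top.ne)
  have t1 : (κ * j - 1) * (∫ x, cut ϑ x ^ 2 * gq ψ N b c x)
      ≤ k ^ 2 * r ^ 2 * ϑ ^ 3 * V4 + M / ϑ ^ 3 := by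
    calc (κ * j - 1) * (∫ x, cut ϑ x ^ 2 * gq ψ N b c x)
        = ∫ x, (κ * j - 1) * (cut ϑ x ^ 2 * gq ψ N b c x) := (integral_const_mul _ _).symm
      _ ≤ ∫ x, ((ball (0 : Ed d) (4 * ϑ)).indicator (fun _ => k ^ 2 * r ^ 2 * ϑ ^ 3) x
            + 1 / ϑ ^ 3 * (ball (0 : Ed d) (4 * ϑ)).indicator (fun y => gq ψ N b c y ^ 2) x) := by
          have i12 : Integrable fun x =>
              (ball (0 : Ed d) (4 * ϑ)).indicator (fun _ => k ^ 2 * r ^ 2 * ϑ ^ 3) x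
              + 1 / ϑ ^ 3 * (ball (0 : Ed d) (4 * ϑ)).indicator (fun y => gq ψ N b c y ^ 2) x :=
            i1.add (iG.const_mul _)
          apply integral_mono (iF.const_mul _) i12
          intro x
          simp only
          by_cases hx : x ∈ ball (0 : Ed d) (4 * ϑ)
          · rw [indicator_of_mem hx, indicator_of_mem hx]
            have hc1 : cut ϑ x ^ 2 ≤ 1 := pow_le_one₀ (cut_nonneg _ _) (cut_le_one _ _)
            calc (κ * j - 1) * (cut ϑ x ^ 2 * gq ψ N b c x)
                ≤ |(κ * j - 1) * (cut ϑ x ^ 2 * gq ψ N b c x)| := le_abs_self _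
              _ = |κ * j - 1| * (cut ϑ x ^ 2 * |gq ψ N b c x|) := by
                  rw [abs_mul, abs_mul, abs_of_nonneg (sq_nonneg (cut ϑ x))]
              _ ≤ (k * r) * (1 * |gq ψ N b c x|) := by gcongr
              _ ≤ k ^ 2 * r ^ 2 * ϑ ^ 3 + 1 / ϑ ^ 3 * gq ψ N b c x ^ 2 := by
                  set a := |gq ψ N b c x| with ha
                  have ha2 : gq ψ N b c x ^ 2 = a ^ 2 := (sq_abs _).symm
                  rw [ha2]
                  have e3 : k ^ 2 * r ^ 2 * ϑ ^ 3 + 1 / ϑ ^ 3 * a ^ 2 - k * r * (1 * a)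
                    = ((k * r * ϑ ^ 3 - a / 2) ^ 2 + 3 / 4 * a ^ 2) / ϑ ^ 3 := by
                    field_simp; ring
                  have e4 : 0 ≤ ((k * r * ϑ ^ 3 - a / 2) ^ 2 + 3 / 4 * a ^ 2) / ϑ ^ 3 := by
                    positivity
                  linarith
          · rw [indicator_of_notMem hx, indicator_of_notMem hx]
            rw [mem_ball_zero_iff, not_lt] at hx
            rw [cut_eq_zero hϑ (x := x) (by linarith)]
            simp
      _ = k ^ 2 * r ^ 2 * ϑ ^ 3 * V4 + 1 / ϑ ^ 3 * IG := by
          rw [integral_add i1 (iG.const_mul _), integral_const_mul,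
            integral_indicator measurableSet_ball, setIntegral_const, smul_eq_mul]
          ring
      _ ≤ k ^ 2 * r ^ 2 * ϑ ^ 3 * V4 + 1 / ϑ ^ 3 * M := by gcongr
      _ = _ := by ring
  have t3 : 36 / ϑ ^ 2 * (κ * j) * IG ≤ 144 / ϑ ^ 2 * M := by
    have hIG0 : 0 ≤ IG := integral_nonneg fun x => indicator_nonneg (fun y _ => sq_nonneg _) x
    have hκj2 : κ * j ≤ 2 * 2 := mul_le_mul hκ2 hj2 hj0 (by norm_num)
    calc 36 / ϑ ^ 2 * (κ * j) * IG ≤ 36 / ϑ ^ 2 * (2 * 2) * M := by gcongr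
      _ = _ := by ring
  have t4 : 8 * t / ϑ ^ 2 * IU ≤ 8 * t / ϑ ^ 2 * (8 * E + 1352 * r ^ 2 * V1) := by gcongr
  set S := k ^ 2 * r ^ 2 * ϑ ^ 3 * V4 + M / ϑ ^ 3 + 128 / ϑ ^ 2 * D + 144 / ϑ ^ 2 * M
          + 8 * t / ϑ ^ 2 * (8 * E + 1352 * r ^ 2 * V1) with hS
  have hS0 : 0 ≤ S := by positivity
  have hmain : ∫ z, cut ϑ z ^ 2 * ‖B (T z - N (N z) - b)‖ ^ 2 / 4 ≤ S := by
    rw [hS]; linarith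
  have hLm : Measurable fun z => cut ϑ z ^ 2 * ‖B (T z - N (N z) - b)‖ ^ 2 / 4 :=
    ((hcc.pow 2).measurable.mul hum).div_const 4
  have iL : Integrable fun z => cut ϑ z ^ 2 * ‖B (T z - N (N z) - b)‖ ^ 2 / 4 := by
    refine Integrable.mono' iU hLm.aestronglyMeasurable (ae_of_all _ fun z => ?_)
    rw [Real.norm_of_nonneg (by positivity)]
    have hc1 : cut ϑ z ^ 2 ≤ 1 := pow_le_one₀ (cut_nonneg _ _) (cut_le_one _ _)
    by_cases hx : z ∈ ball (0 : Ed d) (4 * ϑ)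
    · rw [indicator_of_mem hx]
      nlinarith [sq_nonneg ‖B (T z - N (N z) - b)‖]
    · rw [indicator_of_notMem hx]
      rw [mem_ball_zero_iff, not_lt] at hx
      rw [cut_eq_zero hϑ (x := z) (by linarith)]
      simp
  have hfin : ∫⁻ z in ball (0 : Ed d) (2 * ϑ), ENNReal.ofReal (‖B (T z - N (N z) - b)‖ ^ 2)
      ≤ ENNReal.ofReal 4 * ENNReal.ofReal S := by
    calc _ ≤ ∫⁻ z in ball (0 : Ed d) (2 * ϑ), ENNReal.ofReal 4
          * ENNReal.ofReal (cut ϑ z ^ 2 * ‖B (T z - N (N z) - b)‖ ^ 2 / 4) := by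
          apply setLIntegral_mono' measurableSet_ball
          intro z hz
          rw [mem_ball_zero_iff] at hz
          rw [cut_eq_one hϑ hz.le, ← ENNReal.ofReal_mul (by norm_num)]
          apply le_of_eq
          congr 1
          ring
      _ ≤ ∫⁻ z, ENNReal.ofReal 4
          * ENNReal.ofReal (cut ϑ z ^ 2 * ‖B (T z - N (N z) - b)‖ ^ 2 / 4) :=
          setLIntegral_le_lintegral _ _
      _ = ENNReal.ofReal 4 * ENNReal.ofReal (∫ z, cut ϑ z ^ 2 * ‖B (T z - N (N z) - b)‖ ^ 2 / 4) := by
          rw [lintegral_const_mul' _ _ ENNReal.ofReal_ne_top,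
            ofReal_integral_eq_lintegral_ofReal iL (ae_of_all _ fun z => by positivity)]
      _ ≤ _ := by gcongr
  have hFm : Measurable fun z => ENNReal.ofReal (‖B (T z - N (N z) - b)‖ ^ 2) := hum.ennreal_ofReal
  calc ∫⁻ y in ball (0 : Ed d) ϑ, ENNReal.ofReal (‖B (T (B y) - b) - y‖ ^ 2)
      = ∫⁻ y in ball (0 : Ed d) ϑ, ENNReal.ofReal (‖B (T (B y) - N (N (B y)) - b)‖ ^ 2) := by
        congr 1
        ext y
        have : B (T (B y) - N (N (B y)) - b) = B (T (B y) - b) - y := by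
          rw [n.NB, sub_right_comm, map_sub, n.BN]
        rw [this]
    _ ≤ 2 * ∫⁻ z in ball (0 : Ed d) (2 * ϑ), ENNReal.ofReal (‖B (T z - N (N z) - b)‖ ^ 2) :=
        n.lint_le hr hFm ϑ
    _ ≤ ENNReal.ofReal 2 * (ENNReal.ofReal 4 * ENNReal.ofReal S) := by
        rw [ENNReal.ofReal_ofNat]
        gcongr
    _ = _ := by
        rw [← ENNReal.ofReal_mul (by norm_num), ← ENNReal.ofReal_mul (by norm_num)]
        congr 1
        ring

end

/-! ### Choice of the parameters -/

set_option maxHeartbeats 1000000 in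
/-- The one-step improvement in the normalized setting, in the regime where the data term is much
smaller than the energy. -/
lemma core (d : ℕ) : ∃ Cd : ℝ, 0 < Cd ∧ ∀ τ : ℝ, 0 < τ → ∃ ϑ δ ε : ℝ, 0 < ϑ ∧ ϑ ≤ 1 / 4 ∧
    0 < δ ∧ 0 < ε ∧ ∀ {T : Ed d → Ed d} {ψ : Ed d → ℝ} {G A : Set (Ed d)}
    {P : Measure (Ed d × Ed d)} {κ E D : ℝ} (_ : Cfg T ψ G A P κ E D), E ≤ ε → D ≤ δ * E →
    ∃ (B : Ed d ≃L[ℝ] Ed d) (b : Ed d), IsSelfAdjoint (B : Ed d →L[ℝ] Ed d) ∧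
      ‖(B : Ed d →L[ℝ] Ed d) - 1‖ ^ 2 + ‖b‖ ^ 2 ≤ Cd * E ∧
      ∫⁻ y in ball (0 : Ed d) ϑ, ENNReal.ofReal (‖B (T (B y) - b) - y‖ ^ 2)
        ≤ ENNReal.ofReal (τ * ϑ ^ (d + 2) * E) := by
  obtain ⟨C, hC, happ⟩ := approx d
  have hV1 := volB_pos d (r := 1) one_pos
  set V1 := volume.real (ball (0 : Ed d) 1) with hV1def
  refine ⟨5 * C ^ 2, by positivity, fun τ hτ => ?_⟩
  set k : ℝ := 2 + 2 * 4 ^ d with hk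
  set K : ℝ := k ^ 2 * C ^ 2 * 4 ^ d * V1 + 435 * C + 128 + 8 * (8 + 1352 * C ^ 2 * V1) with hK
  have hKp : 0 < K := by positivity
  obtain ⟨ϑ, hϑ, hϑ1, hϑK⟩ : ∃ ϑ : ℝ, 0 < ϑ ∧ ϑ ≤ 1 / 4 ∧ 8 * K * ϑ ≤ τ := by
    refine ⟨min (1 / 4) (τ / (8 * K)), by positivity, min_le_left _ _, ?_⟩
    calc 8 * K * min (1 / 4) (τ / (8 * K)) ≤ 8 * K * (τ / (8 * K)) := by
          gcongr; exact min_le_right _ _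
      _ = τ := by field_simp
  have hϑ1' : ϑ ≤ 1 := by linarith
  set ρ := ϑ ^ (d + 6) with hρ
  have hρ0 : 0 < ρ := by positivity
  have hρ1 : ρ ≤ 1 := pow_le_one₀ hϑ.le hϑ1'
  set t := ϑ ^ (d + 5) with ht
  have ht0 : 0 < t := by positivity
  have htϑ : t ≤ ϑ := pow_le_of_le_one hϑ.le hϑ1' (by omega)
  set q := (ρ ^ (d + 1)) ^ 2 * ϑ ^ (d + 6) with hq
  have hq0 : 0 < q := by positivity
  have hqt : q ≤ t := by
    have a1 : (ρ ^ (d + 1)) ^ 2 ≤ 1 := pow_le_one₀ (by positivity) (pow_le_one₀ hρ0.le hρ1)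
    have a2 : ϑ ^ (d + 6) ≤ t := pow_le_pow_of_le_one hϑ.le hϑ1' (by omega)
    calc q ≤ 1 * t := by rw [hq]; gcongr
      _ = t := one_mul _
  set s := t / 32 with hs
  have hs0 : 0 < s := by positivity
  have hVs := volB_pos d (r := s / 8) (by positivity)
  have hV4 := volB_pos d (r := 4 * ϑ) (by positivity)
  have hV4e : volume.real (ball (0 : Ed d) (4 * ϑ)) = 4 ^ d * ϑ ^ d * V1 := by
    rw [measureReal_def, addHaar_ball_of_pos _ _ (by positivity), finrank_euclideanSpace_fin,
      ENNReal.toReal_mul, ENNReal.toReal_ofReal (by positivity), mul_pow, hV1def, measureReal_def]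
  have h4d : (1 : ℝ) ≤ 4 ^ d := one_le_pow₀ (by norm_num)
  refine ⟨ϑ, q / 4, min (min ((t / (512 * 4 ^ d * C)) ^ 2)
    ((s / 8) ^ 2 * volume.real (ball (0 : Ed d) (s / 8)) / 2)) (min (min (q / 4) 1)
    ((t / 2) ^ 2 * volume.real (ball (0 : Ed d) (4 * ϑ)) / (6 * C * ϑ ^ (d + 6)))),
    hϑ, hϑ1, by positivity, by positivity, ?_⟩
  intro T ψ G A P κ E D h hEε hDδ
  simp only [le_min_iff] at hEε
  obtain ⟨⟨e1, e2⟩, ⟨e3, e4⟩, e5⟩ := hEε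
  have hE := h.hE
  have hD := h.hD
  have hsup : ∀ z ∈ G, (‖z‖ < 3 ∨ ‖T z‖ < 3) → ‖T z - z‖ ≤ s := fun z hz hz3 =>
    h.sup_bound hs0 (by linarith) (lt_of_le_of_lt e2 (half_lt_self (by positivity))) hz hz3
  have hγ2 : √(q / 4 * E) ^ 2 = q / 4 * E := Real.sq_sqrt (by positivity)
  have hq41 : q / 4 ≤ 1 := by linarith
  obtain ⟨hκ, b, Q, c, hQ, hb, hQn, hM⟩ := happ h (s := s) (by linarith) hsup
    (γ := √(q / 4 * E)) (by positivity) (by rw [hγ2]; exact hDδ)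
    (by rw [hγ2]; exact mul_le_of_le_one_left hE.le hq41) e4 hρ0 hρ1 hϑ hϑ1
  set r := C * √E with hr
  have hr2 : r ^ 2 = C ^ 2 * E := by rw [hr, mul_pow, Real.sq_sqrt hE.le]
  have hr0 : 0 ≤ r := by positivity
  have hrt' : 512 * 4 ^ d * r ≤ t := by
    have : √E ≤ t / (512 * 4 ^ d * C) := by
      rw [Real.sqrt_le_left (by positivity)]; exact e1
    calc 512 * 4 ^ d * r ≤ 512 * 4 ^ d * (C * (t / (512 * 4 ^ d * C))) := by rw [hr]; gcongr
      _ = t := by field_simp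
  have hrt : 512 * r ≤ t := by
    refine le_trans ?_ hrt'
    have : r ≤ 4 ^ d * r := le_mul_of_one_le_left hr0 h4d
    linarith
  have hr1 : r ≤ 1 / 8 := by linarith
  obtain ⟨B, hBs, n⟩ := exists_near hQ hr1 hQn hb
  refine ⟨B, b, hBs, ?_, ?_⟩
  · have a1 := n.nB
    have a2 : ‖(B : Ed d →L[ℝ] Ed d) - 1‖ ^ 2 ≤ (2 * r) ^ 2 := by gcongr
    have a3 : ‖b‖ ^ 2 ≤ r ^ 2 := by gcongr
    have : (2 * r) ^ 2 = 4 * r ^ 2 := by ring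
    rw [mul_assoc, ← hr2]; linarith
  set M := 3 * C * ϑ ^ (d + 6) * E with hMdef
  have hM0 : 0 ≤ M := by positivity
  have hM' : ∫⁻ x in ball (0 : Ed d) (4 * ϑ),
      ENNReal.ofReal (gq ψ (1 + (1 / 2 : ℝ) • Q) b c x ^ 2) ≤ ENNReal.ofReal M := by
    simp_rw [gq_eq]
    refine hM.trans (ENNReal.ofReal_le_ofReal ?_)
    have a1 : ρ ^ 2 ≤ ϑ ^ (d + 6) := by
      rw [← hρ, sq]; exact mul_le_of_le_one_left hρ0.le hρ1
    have a2 : (E + √(q / 4 * E)) ^ 2 ≤ q * E := by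
      have : (E + √(q / 4 * E)) ^ 2 ≤ 2 * E * E + 2 * √(q / 4 * E) ^ 2 := by
        nlinarith [sq_nonneg (E - √(q / 4 * E))]
      rw [hγ2] at this
      nlinarith
    calc C * (ρ ^ 2 + ϑ ^ (d + 6)) * E + C / (ρ ^ (d + 1)) ^ 2 * (E + √(q / 4 * E)) ^ 2
        ≤ C * (ϑ ^ (d + 6) + ϑ ^ (d + 6)) * E + C / (ρ ^ (d + 1)) ^ 2 * (q * E) := by gcongr
      _ = M := by
          have : C / (ρ ^ (d + 1)) ^ 2 * (q * E) = C * ϑ ^ (d + 6) * E := by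
            have : (ρ ^ (d + 1)) ^ 2 ≠ 0 := by positivity
            rw [hq]; generalize (ρ ^ (d + 1)) ^ 2 = a at *; field_simp
          rw [this, hMdef]; ring
  have hMt : M < (t / 2) ^ 2 * volume.real (ball (0 : Ed d) (4 * ϑ)) := by
    have hp : 0 < (t / 2) ^ 2 * volume.real (ball (0 : Ed d) (4 * ϑ)) := by positivity
    have : 2 * M ≤ (t / 2) ^ 2 * volume.real (ball (0 : Ed d) (4 * ϑ)) := by
      rw [le_div_iff₀ (by positivity)] at e5
      calc 2 * M = E * (6 * C * ϑ ^ (d + 6)) := by rw [hMdef]; ring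
        _ ≤ _ := e5
    linarith
  have hg := h.sup_g hM0 hsup hϑ1 hr1 hQn hb (t := t) (by linarith) (by linarith) hM' hMt
  refine (h.decay n (by nlinarith) hκ hM0 hsup hϑ hϑ1 (by linarith) (by linarith)
    (by linarith) hg hM').trans (ENNReal.ofReal_le_ofReal ?_)
  rw [hV4e, hr2]
  have b2 : 128 / ϑ ^ 2 * D ≤ 128 * ϑ ^ (d + 3) * E := by
    calc 128 / ϑ ^ 2 * D ≤ 128 / ϑ ^ 2 * (t * E) := by
          gcongr
          refine hDδ.trans ?_
          gcongr
          linarith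
      _ = _ := by rw [ht]; field_simp; ring
  have b3 : 144 / ϑ ^ 2 * M ≤ 432 * C * ϑ ^ (d + 3) * E := by
    calc 144 / ϑ ^ 2 * M = ϑ * (432 * C * ϑ ^ (d + 3) * E) := by rw [hMdef]; field_simp; ring
      _ ≤ 1 * (432 * C * ϑ ^ (d + 3) * E) := by gcongr
      _ = _ := one_mul _
  have b1 : M / ϑ ^ 3 = 3 * C * ϑ ^ (d + 3) * E := by rw [hMdef]; field_simp; ring
  have b4 : 8 * t / ϑ ^ 2 * (8 * E + 1352 * (C ^ 2 * E) * V1)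
      = 8 * (8 + 1352 * C ^ 2 * V1) * ϑ ^ (d + 3) * E := by rw [ht]; field_simp; ring
  have b5 : k ^ 2 * (C ^ 2 * E) * ϑ ^ 3 * (4 ^ d * ϑ ^ d * V1)
      = k ^ 2 * C ^ 2 * 4 ^ d * V1 * ϑ ^ (d + 3) * E := by ring
  rw [b1, b4, b5]
  calc _ ≤ 8 * (k ^ 2 * C ^ 2 * 4 ^ d * V1 * ϑ ^ (d + 3) * E + 3 * C * ϑ ^ (d + 3) * E
        + 128 * ϑ ^ (d + 3) * E + 432 * C * ϑ ^ (d + 3) * E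
        + 8 * (8 + 1352 * C ^ 2 * V1) * ϑ ^ (d + 3) * E) := by gcongr
    _ = (8 * K * ϑ) * ϑ ^ (d + 2) * E := by rw [hK]; ring
    _ ≤ _ := by gcongr

/-! ### Cyclical monotonicity of an optimal map -/

section
variable {d : ℕ}

/-- Two sets of positive measure overlap in positive measure after a translation that can be
chosen outside any given null set. -/
lemma exists_translate {C A N : Set (Ed d)} (hC : MeasurableSet C) (hA : MeasurableSet A)
    (hC0 : 0 < volume C) (hA0 : 0 < volume A) (hN : volume N = 0) :
    ∃ v, v ∉ N ∧ 0 < volume (C ∩ {y | y + v ∈ A}) := by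
  by_contra hcon
  push Not at hcon
  have hm : Measurable (Function.uncurry fun v y : Ed d =>
      C.indicator (fun _ => (1 : ℝ≥0∞)) y * A.indicator (fun _ => (1 : ℝ≥0∞)) (y + v)) := by
    have h1 : Measurable (C.indicator fun _ : Ed d => (1 : ℝ≥0∞)) := measurable_const.indicator hC
    have h2 : Measurable (A.indicator fun _ : Ed d => (1 : ℝ≥0∞)) := measurable_const.indicator hA
    exact (h1.comp measurable_snd).mul (h2.comp (measurable_snd.add measurable_fst))
  have e1 : ∫⁻ v, ∫⁻ y, C.indicator (fun _ => (1 : ℝ≥0∞)) y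
      * A.indicator (fun _ => (1 : ℝ≥0∞)) (y + v) = volume A * volume C := by
    rw [lintegral_lintegral_swap hm.aemeasurable]
    have : ∀ y : Ed d, ∫⁻ v, C.indicator (fun _ => (1 : ℝ≥0∞)) y
        * A.indicator (fun _ => (1 : ℝ≥0∞)) (y + v)
        = volume A * C.indicator (fun _ => (1 : ℝ≥0∞)) y := by
      intro y
      rw [lintegral_const_mul _ (by
          have h2 : Measurable (A.indicator fun _ : Ed d => (1 : ℝ≥0∞)) :=
            measurable_const.indicator hA
          exact h2.comp (measurable_const.add measurable_id)),
        lintegral_add_left_eq_self (fun v => A.indicator (fun _ => (1 : ℝ≥0∞)) v) y,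
        lintegral_indicator_const hA, one_mul, mul_comm]
    simp_rw [this]
    rw [lintegral_const_mul _ (measurable_const.indicator hC), lintegral_indicator_const hC,
      one_mul]
  have e2 : ∫⁻ v, ∫⁻ y, C.indicator (fun _ => (1 : ℝ≥0∞)) y
      * A.indicator (fun _ => (1 : ℝ≥0∞)) (y + v) = 0 := by
    refine (lintegral_congr_ae ?_).trans lintegral_zero
    have hNae : ∀ᵐ v ∂(volume : Measure (Ed d)), v ∉ N := by
      rw [ae_iff]; simpa using hN
    filter_upwards [hNae] with v hv
    have h0 := nonpos_iff_eq_zero.1 (hcon v hv)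
    have hms : MeasurableSet (C ∩ {y | y + v ∈ A}) :=
      hC.inter ((measurable_id.add measurable_const) hA)
    calc ∫⁻ y, C.indicator (fun _ => (1 : ℝ≥0∞)) y * A.indicator (fun _ => (1 : ℝ≥0∞)) (y + v)
        = ∫⁻ y, (C ∩ {y | y + v ∈ A}).indicator (fun _ => (1 : ℝ≥0∞)) y := by
          congr 1
          ext y
          by_cases h1 : y ∈ C <;> by_cases h2 : y + v ∈ A <;> simp [indicator, h1, h2]
      _ = 0 := by rw [lintegral_indicator_const hms, h0, mul_zero]
  rw [e2] at e1
  exact (ENNReal.mul_pos hA0.ne' hC0.ne').ne e1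

/-- Finitely many sets of positive measure contain distinct translates of one set of positive
measure. -/
lemma exists_common_translate (hd : 0 < d) : ∀ (n : ℕ) (A : Fin n → Set (Ed d)),
    (∀ i, MeasurableSet (A i)) → (∀ i, 0 < volume (A i)) →
    ∃ (v : Fin n → Ed d) (C : Set (Ed d)), Function.Injective v ∧ MeasurableSet C ∧ 0 < volume C ∧
      ∀ i, ∀ y ∈ C, y + v i ∈ A i := by
  have : Nonempty (Fin d) := ⟨⟨0, hd⟩⟩
  intro n
  induction n with
  | zero =>
    intro A _ _
    refine ⟨fun i => i.elim0, univ, fun i => i.elim0, MeasurableSet.univ, ?_, fun i => i.elim0⟩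
    exact isOpen_univ.measure_pos _ univ_nonempty
  | succ n ih =>
    intro A hA hA0
    obtain ⟨v, C, hv, hC, hC0, hvC⟩ := ih (fun i => A i.succ) (fun i => hA _) (fun i => hA0 _)
    obtain ⟨w, hw, hCw⟩ := exists_translate hC (hA 0) hC0 (hA0 0)
      ((finite_range v).measure_zero volume)
    refine ⟨Fin.cons w v, C ∩ {y | y + w ∈ A 0}, Fin.cons_injective_iff.2 ⟨hw, hv⟩,
      hC.inter ((measurable_id.add measurable_const) (hA 0)), hCw, ?_⟩
    intro i y hy
    refine Fin.cases ?_ (fun j => ?_) i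
    · simpa using hy.2
    · simpa using hvC j y hy.1

/-- Decomposition of an integral over `Ω` along disjoint translates of a set `C`. -/
lemma lintegral_split {n : ℕ} {v : Fin n → Ed d} {C Ω : Set (Ed d)} (hC : MeasurableSet C)
    (hdis : Pairwise fun i j => Disjoint {x | x - v i ∈ C} {x | x - v j ∈ C})
    (hsub : ∀ i, ∀ y ∈ C, y + v i ∈ Ω) {g : Ed d → ℝ≥0∞} (hg : Measurable g) :
    ∫⁻ x in Ω, g x = (∫⁻ x in Ω \ ⋃ i, {x | x - v i ∈ C}, g x) + ∫⁻ y in C, ∑ i, g (y + v i) := by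
  have hD : ∀ i, MeasurableSet {x | x - v i ∈ C} := fun i =>
    (measurable_id.sub measurable_const) hC
  have hU : (⋃ i, {x | x - v i ∈ C}) ⊆ Ω := by
    refine iUnion_subset fun i x hx => ?_
    have := hsub i _ hx
    rwa [sub_add_cancel] at this
  have hgv : ∀ i, Measurable fun y => g (y + v i) := fun i =>
    hg.comp (measurable_id.add measurable_const)
  rw [← lintegral_inter_add_sdiff g Ω (MeasurableSet.iUnion hD), inter_eq_right.2 hU, add_comm,
    lintegral_iUnion hD hdis, tsum_fintype,
    lintegral_finsetSum _ (fun i _ => hgv i)]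
  congr 1
  refine Finset.sum_congr rfl fun i _ => ?_
  rw [← lintegral_indicator (hD i), ← lintegral_indicator hC,
    ← lintegral_add_right_eq_self _ (v i)]
  congr 1
  ext y
  by_cases hy : y ∈ C <;> simp [indicator, hy]

set_option maxHeartbeats 1000000 in
/-- Cyclical monotonicity, in the form of a permutation inequality: if it failed at some points
of the support of the graph of `T`, permuting small congruent pieces of `Ω` near these points
before applying `T` would decrease the cost. -/
lemma perm_mono (hd : 0 < d) {Ω : Set (Ed d)} (hΩ : MeasurableSet Ω) {T : Ed d → Ed d}
    (hT : Measurable T)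
    (hopt : ∀ S : Ed d → Ed d, Measurable S →
      Measure.map S (volume.restrict Ω) = Measure.map T (volume.restrict Ω) →
      ∫⁻ x in Ω, ENNReal.ofReal (‖T x - x‖ ^ 2) ≤ ∫⁻ x in Ω, ENNReal.ofReal (‖S x - x‖ ^ 2))
    (hfin : ∫⁻ x in Ω, ENNReal.ofReal (‖T x - x‖ ^ 2) ≠ ⊤) {n : ℕ} {z : Fin n → Ed d}
    (hz : ∀ i, (z i, T (z i)) ∈ (Measure.map (fun x => (x, T x)) (volume.restrict Ω)).support)
    (σ : Equiv.Perm (Fin n)) :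
    ∑ i, ‖T (z i) - z i‖ ^ 2 ≤ ∑ i, ‖T (z i) - z (σ i)‖ ^ 2 := by
  by_contra hcon
  push Not at hcon
  have hgm : Measurable fun x => (x, T x) := measurable_id.prodMk hT
  -- neighbourhoods on which the strict inequality persists
  set F : (Fin n → Ed d × Ed d) → ℝ := fun p =>
    ∑ i, ‖(p i).2 - (p i).1‖ ^ 2 - ∑ i, ‖(p i).2 - (p (σ i)).1‖ ^ 2 with hF
  have hFc : Continuous F := by rw [hF]; fun_prop
  have hF0 : 0 < F fun i => (z i, T (z i)) := by simpa [hF] using hcon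
  obtain ⟨r, hr, hball⟩ := Metric.isOpen_iff.1 (isOpen_lt continuous_const hFc) _ hF0
  set A : Fin n → Set (Ed d) := fun i =>
    Ω ∩ (fun x => (x, T x)) ⁻¹' ball (z i, T (z i)) r with hA
  have hAm : ∀ i, MeasurableSet (A i) := fun i => hΩ.inter (hgm measurableSet_ball)
  have hA0 : ∀ i, 0 < volume (A i) := by
    intro i
    have := (Measure.mem_support_iff_forall _).1 (hz i) _ (ball_mem_nhds _ hr)
    rwa [Measure.map_apply hgm measurableSet_ball, Measure.restrict_apply (hgm measurableSet_ball),
      inter_comm] at this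
  obtain ⟨v, C', hv, hC', hC'0, hvC'⟩ := exists_common_translate hd n A hAm hA0
  -- shrink the common piece so that its translates are disjoint
  obtain ⟨ε, hε, hεv⟩ : ∃ ε > 0, ∀ i j, i ≠ j → ε ≤ dist (v i) (v j) := by
    have h1 : ∀ i j, ∀ᶠ ε in 𝓝[>] (0 : ℝ), i ≠ j → ε ≤ dist (v i) (v j) := by
      intro i j
      by_cases hij : i = j
      · simp [hij]
      · have : 0 < dist (v i) (v j) := dist_pos.2 (hv.ne hij)
        filter_upwards [Ioo_mem_nhdsGT this] with ε hε _ using hε.2.le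
    have h2 : ∀ᶠ ε in 𝓝[>] (0 : ℝ), ∀ i j, i ≠ j → ε ≤ dist (v i) (v j) :=
      Filter.eventually_all.2 fun i => Filter.eventually_all.2 fun j => h1 i j
    obtain ⟨ε, h3, h4⟩ := (h2.and self_mem_nhdsWithin).exists
    exact ⟨ε, h4, h3⟩
  obtain ⟨x0, -, hx0⟩ := exists_mem_forall_mem_nhdsWithin_pos_measure hC'0.ne'
  set C := ball x0 (ε / 2) ∩ C' with hCdef
  have hC : MeasurableSet C := measurableSet_ball.inter hC'
  have hC0 : 0 < volume C := hx0 _ (Filter.inter_mem (mem_nhdsWithin_of_mem_nhds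
    (ball_mem_nhds _ (by positivity))) self_mem_nhdsWithin)
  have hvA : ∀ i, ∀ y ∈ C, y + v i ∈ A i := fun i y hy => hvC' i y hy.2
  have hsub : ∀ i, ∀ y ∈ C, y + v i ∈ Ω := fun i y hy => (hvA i y hy).1
  have hdis : Pairwise fun i j => Disjoint {x | x - v i ∈ C} {x | x - v j ∈ C} := by
    intro i j hij
    rw [disjoint_left]
    intro x hx hx'
    have h1 := mem_ball.1 hx.1
    have h2 := mem_ball.1 hx'.1
    have h3 := hεv i j hij
    have h4 : dist (x - v i) (x - v j) = dist (v i) (v j) := dist_sub_left _ _ _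
    have h5 := dist_triangle_right (x - v i) (x - v j) x0
    linarith
  set D : Fin n → Set (Ed d) := fun i => {x | x - v i ∈ C} with hD
  have hDm : ∀ i, MeasurableSet (D i) := fun i => (measurable_id.sub measurable_const) hC
  -- the rearrangement of `Ω`
  set w : Ed d → Ed d := fun x =>
    ∑ i, (D (σ i)).indicator (fun _ => v i - v (σ i)) x with hw
  have hwm : Measurable w := by
    refine Finset.measurable_sum _ fun i _ => measurable_const.indicator (hDm _)
  have hw1 : ∀ i, ∀ y ∈ C, y + v (σ i) + w (y + v (σ i)) = y + v i := by
    intro i y hy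
    have hyD : y + v (σ i) ∈ D (σ i) := by simpa [hD] using hy
    have : w (y + v (σ i)) = v i - v (σ i) := by
      rw [hw]
      simp only
      rw [Finset.sum_eq_single i]
      · rw [indicator_of_mem hyD]
      · intro j _ hj
        apply indicator_of_notMem
        intro hj'
        exact disjoint_left.1 (hdis (fun h => hj (σ.injective h) : σ j ≠ σ i)) hj' hyD
      · simp
    rw [this]; abel
  have hw0 : ∀ x, x ∉ ⋃ i, D i → w x = 0 := by
    intro x hx
    rw [hw]
    refine Finset.sum_eq_zero fun i _ => indicator_of_notMem (fun h => hx ?_) _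
    exact mem_iUnion.2 ⟨_, h⟩
  have hΦm : Measurable fun x => x + w x := measurable_id.add hwm
  have hUm : MeasurableSet (Ω \ ⋃ i, D i) := hΩ.diff (MeasurableSet.iUnion hDm)
  have hsplit : ∀ k : Ed d → Ed d → ℝ≥0∞,
      Measurable (Function.uncurry k) →
      ∫⁻ x in Ω, k (x + w x) x = (∫⁻ x in Ω \ ⋃ i, D i, k x x)
        + ∫⁻ y in C, ∑ i, k (y + v i) (y + v (σ i)) := by
    intro k hk
    have hkm : Measurable fun x => k (x + w x) x := hk.comp (hΦm.prodMk measurable_id)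
    rw [lintegral_split hC hdis hsub hkm]
    congr 1
    · apply setLIntegral_congr_fun hUm
      intro x hx
      simp only
      rw [hw0 x hx.2, add_zero]
    · apply setLIntegral_congr_fun hC
      intro y hy
      simp only
      rw [← Equiv.sum_comp σ]
      refine Finset.sum_congr rfl fun i _ => ?_
      rw [hw1 i y hy]
  have hmap : Measure.map (fun x => x + w x) (volume.restrict Ω) = volume.restrict Ω := by
    refine Measure.ext_of_lintegral _ fun f hf => ?_
    rw [lintegral_map hf hΦm]
    rw [hsplit (fun a _ => f a) (hf.comp measurable_fst), lintegral_split hC hdis hsub hf]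
  have hcostm : Measurable (Function.uncurry fun a x : Ed d => ENNReal.ofReal (‖T a - x‖ ^ 2)) := by
    apply Measurable.ennreal_ofReal
    exact (((hT.comp measurable_fst).sub measurable_snd).norm).pow_const 2
  have hcost1 : Measurable fun x => ENNReal.ofReal (‖T x - x‖ ^ 2) := by fun_prop
  have hSle := hopt (fun x => T (x + w x)) (hT.comp hΦm) (by
    have e := Measure.map_map (μ := volume.restrict Ω) hT hΦm
    rw [hmap] at e
    exact e.symm)
  rw [hsplit (fun a x => ENNReal.ofReal (‖T a - x‖ ^ 2)) hcostm] at hSle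
  rw [lintegral_split hC hdis hsub hcost1] at hSle hfin
  have hle := (ENNReal.add_le_add_iff_left (ENNReal.add_ne_top.1 hfin).1).1 hSle
  refine absurd hle (not_le.2 ?_)
  have hpt : ∀ y ∈ C, ∑ i, ENNReal.ofReal (‖T (y + v i) - (y + v (σ i))‖ ^ 2)
      < ∑ i, ENNReal.ofReal (‖T (y + v i) - (y + v i)‖ ^ 2) := by
    intro y hy
    have hmem : (fun i => (y + v i, T (y + v i))) ∈ ball (fun i => (z i, T (z i))) r := by
      rw [mem_ball, dist_pi_lt_iff hr]
      exact fun i => (hvA i y hy).2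
    have h1 : 0 < F fun i => (y + v i, T (y + v i)) := hball hmem
    simp only [hF, sub_pos] at h1
    rw [← ENNReal.ofReal_sum_of_nonneg (fun _ _ => sq_nonneg _),
      ← ENNReal.ofReal_sum_of_nonneg (fun _ _ => sq_nonneg _)]
    exact ENNReal.ofReal_lt_ofReal_iff_of_nonneg (Finset.sum_nonneg fun _ _ => sq_nonneg _) |>.2 h1
  have hmeas2 : Measurable fun y => ∑ i, ENNReal.ofReal (‖T (y + v i) - (y + v i)‖ ^ 2) := by
    fun_prop
  refine setLIntegral_strict_mono hC hC0.ne' hmeas2 ?_ (ae_of_all _ hpt)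
  exact ((setLIntegral_mono' hC fun y hy => (hpt y hy).le).trans_lt
    (ENNReal.add_ne_top.1 hfin).2.lt_top).ne

end

/-! ### Rockafellar's potential -/

section
variable {d : ℕ}

lemma perm_inner {T : Ed d → Ed d} {n : ℕ} {z : Fin n → Ed d} {σ : Equiv.Perm (Fin n)}
    (h : ∑ i, ‖T (z i) - z i‖ ^ 2 ≤ ∑ i, ‖T (z i) - z (σ i)‖ ^ 2) :
    ∑ i, inner ℝ (T (z i)) (z (σ i) - z i) ≤ 0 := by
  simp only [norm_sub_sq_real, Finset.sum_add_distrib, Finset.sum_sub_distrib] at h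
  rw [Equiv.sum_comp σ fun i => ‖z i‖ ^ 2, ← Finset.mul_sum, ← Finset.mul_sum] at h
  simp only [inner_sub_right, Finset.sum_sub_distrib]
  linarith

/-- Chains of points of `G` starting at `z₀`, recorded through their end point `z` and the
accumulated increment `a = ∑ ⟨T zᵢ, zᵢ₊₁ - zᵢ⟩`. -/
inductive Chain (T : Ed d → Ed d) (G : Set (Ed d)) (z₀ : Ed d) : Ed d → ℝ → Prop
  | base : Chain T G z₀ z₀ 0
  | step {z : Ed d} {a : ℝ} (w : Ed d) (hw : w ∈ G) (h : Chain T G z₀ z a) :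
      Chain T G z₀ w (a + inner ℝ (T z) (w - z))

lemma Chain.exists_seq {T : Ed d → Ed d} {G : Set (Ed d)} {z₀ z : Ed d} {a : ℝ} (hz₀ : z₀ ∈ G)
    (h : Chain T G z₀ z a) :
    ∃ (n : ℕ) (f : Fin (n + 1) → Ed d), (∀ i, f i ∈ G) ∧ f 0 = z₀ ∧ f (Fin.last n) = z ∧
      a = ∑ i : Fin n, inner ℝ (T (f i.castSucc)) (f i.succ - f i.castSucc) := by
  induction h with
  | base => exact ⟨0, fun _ => z₀, fun _ => hz₀, rfl, rfl, by simp⟩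
  | @step z a w hw h ih =>
    obtain ⟨n, f, hf, f0, fl, fa⟩ := ih
    refine ⟨n + 1, Fin.snoc (α := fun _ => Ed d) f w, ?_, ?_, ?_, ?_⟩
    · intro i
      refine Fin.lastCases ?_ (fun j => ?_) i
      · simpa using hw
      · simpa using hf j
    · rw [← Fin.castSucc_zero, Fin.snoc_castSucc, f0]
    · simp
    · rw [Fin.sum_univ_castSucc]
      simp only [Fin.snoc_castSucc, Fin.succ_castSucc, Fin.succ_last, Fin.snoc_last]
      rw [fl, fa]

/-- Closing a chain to a cycle: cyclical monotonicity bounds the accumulated increment. -/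
lemma Chain.le {T : Ed d → Ed d} {G : Set (Ed d)} {z₀ z : Ed d} {a : ℝ} (hz₀ : z₀ ∈ G)
    (hcyc : ∀ (n : ℕ) (z : Fin n → Ed d), (∀ i, z i ∈ G) → ∀ σ : Equiv.Perm (Fin n),
      ∑ i, ‖T (z i) - z i‖ ^ 2 ≤ ∑ i, ‖T (z i) - z (σ i)‖ ^ 2)
    (h : Chain T G z₀ z a) : a + inner ℝ (T z) (z₀ - z) ≤ 0 := by
  obtain ⟨n, f, hf, f0, fl, fa⟩ := h.exists_seq hz₀
  have h1 := perm_inner (hcyc (n + 1) f hf (finRotate (n + 1)))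
  rw [Fin.sum_univ_castSucc, finRotate_last] at h1
  simp only [finRotate_apply, Fin.coeSucc_eq_succ] at h1
  rw [fa, ← f0, ← fl]
  exact h1

/-- A map that is bounded and cyclically monotone on `G` is a selection of the subdifferential
of a continuous function, namely the supremum over chains of their affine continuations. -/
lemma exists_potential {T : Ed d → Ed d} {G : Set (Ed d)} {K : ℝ} (hK : ∀ z ∈ G, ‖T z‖ ≤ K)
    (hcyc : ∀ (n : ℕ) (z : Fin n → Ed d), (∀ i, z i ∈ G) → ∀ σ : Equiv.Perm (Fin n),
      ∑ i, ‖T (z i) - z i‖ ^ 2 ≤ ∑ i, ‖T (z i) - z (σ i)‖ ^ 2) :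
    ∃ ψ : Ed d → ℝ, Continuous ψ ∧ ∀ z ∈ G, ∀ x, ψ z + inner ℝ (T z) (x - z) ≤ ψ x := by
  rcases G.eq_empty_or_nonempty with rfl | ⟨z₀, hz₀⟩
  · exact ⟨fun _ => 0, continuous_const, fun z hz => hz.elim⟩
  have hK0 : 0 ≤ K := (norm_nonneg _).trans (hK z₀ hz₀)
  have hG : ∀ {z a}, Chain T G z₀ z a → z ∈ G := by
    intro z a h
    cases h with
    | base => exact hz₀
    | step w hw h => exact hw
  set S : Ed d → Set ℝ := fun x => {y | ∃ z a, Chain T G z₀ z a ∧ y = a + inner ℝ (T z) (x - z)}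
    with hS
  have hne : ∀ x, (S x).Nonempty := fun x => ⟨_, z₀, 0, Chain.base, rfl⟩
  have hbd : ∀ x, BddAbove (S x) := by
    intro x
    refine ⟨K * ‖x - z₀‖, ?_⟩
    rintro y ⟨z, a, hc, rfl⟩
    have h1 := hc.le hz₀ hcyc
    have h2 : inner ℝ (T z) (x - z) = inner ℝ (T z) (z₀ - z) + inner ℝ (T z) (x - z₀) := by
      rw [← inner_add_right]; congr 1; abel
    have h3 : inner ℝ (T z) (x - z₀) ≤ K * ‖x - z₀‖ :=
      (real_inner_le_norm _ _).trans (by gcongr; exact hK z (hG hc))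
    linarith
  have hlip : ∀ x y, sSup (S x) ≤ sSup (S y) + K * ‖x - y‖ := by
    intro x y
    apply csSup_le (hne x)
    rintro _ ⟨z, a, hc, rfl⟩
    have h1 : a + inner ℝ (T z) (y - z) ≤ sSup (S y) := le_csSup (hbd y) ⟨z, a, hc, rfl⟩
    have h2 : inner ℝ (T z) (x - z) = inner ℝ (T z) (y - z) + inner ℝ (T z) (x - y) := by
      rw [← inner_add_right]; congr 1; abel
    have h3 : inner ℝ (T z) (x - y) ≤ K * ‖x - y‖ :=
      (real_inner_le_norm _ _).trans (by gcongr; exact hK z (hG hc))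
    linarith
  refine ⟨fun x => sSup (S x), ?_, ?_⟩
  · have : LipschitzWith K.toNNReal fun x => sSup (S x) := by
      apply LipschitzWith.of_dist_le_mul
      intro x y
      rw [Real.dist_eq, dist_eq_norm, abs_le]
      have h1 := hlip x y
      have h2 := hlip y x
      rw [norm_sub_rev] at h2
      rw [Real.coe_toNNReal K hK0]
      constructor <;> linarith
    exact this.continuous
  · intro z hz x
    have : sSup (S z) ≤ sSup (S x) - inner ℝ (T z) (x - z) := by
      apply csSup_le (hne z)
      rintro _ ⟨w, a, hc, rfl⟩
      have := le_csSup (hbd x) ⟨z, _, Chain.step z hz hc, rfl⟩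
      linarith
    simp only
    linarith

end

/-! ### Affine changes of variables preserve optimality -/

section
variable {d : ℕ}

lemma volume_restrict_image (B : Ed d ≃L[ℝ] Ed d) {Ω : Set (Ed d)} (hΩ : MeasurableSet Ω) :
    ∃ c : ℝ≥0∞, c ≠ 0 ∧ c ≠ ⊤ ∧ (volume : Measure (Ed d)).restrict (B.symm '' Ω)
      = c • Measure.map B.symm (volume.restrict Ω) := by
  have hB : Measurable B.symm := B.symm.continuous.measurable
  have : IsAddHaarMeasure (Measure.map B.symm (volume : Measure (Ed d))) :=
    B.symm.isAddHaarMeasure_map volume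
  have hc : (volume : Measure (Ed d))
      = ((addHaarScalarFactor volume (Measure.map B.symm (volume : Measure (Ed d))) : ℝ≥0) : ℝ≥0∞)
        • Measure.map B.symm (volume : Measure (Ed d)) := isAddLeftInvariant_eq_smul _ _
  have h0 := (addHaarScalarFactor_pos_of_isAddHaarMeasure (volume : Measure (Ed d))
    (Measure.map B.symm (volume : Measure (Ed d)))).ne'
  generalize addHaarScalarFactor volume (Measure.map B.symm (volume : Measure (Ed d))) = c at hc h0
  have hm : MeasurableSet (B.symm '' Ω) := by
    rw [B.symm.image_eq_preimage_symm]
    exact B.symm.symm.continuous.measurable hΩ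
  refine ⟨c, by simpa using h0, ENNReal.coe_ne_top, ?_⟩
  conv_lhs => rw [hc]
  rw [Measure.restrict_smul, Measure.restrict_map hB hm, preimage_image_eq _ B.symm.injective]

/-- Up to terms depending on `x` alone or on `p` alone, the cost of moving `B⁻¹ x` to `p` equals
the cost of moving `x` to `B⁻¹ p + b`; this uses the symmetry of `B`. -/
lemma hat_identity (B : Ed d ≃L[ℝ] Ed d) (hB : IsSelfAdjoint (B : Ed d →L[ℝ] Ed d)) (b x p : Ed d) :
    ‖p - B.symm x‖ ^ 2 + (‖B.symm p + b‖ ^ 2 + (2 * ‖x‖ ^ 2 + ‖b‖ ^ 2))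
      = ‖B.symm p + b - x‖ ^ 2 + (‖p‖ ^ 2 + (‖B.symm x‖ ^ 2 + ‖b + x‖ ^ 2)) := by
  have h1 : inner ℝ (B.symm p) x = inner ℝ p (B.symm x) := by
    have h := (ContinuousLinearMap.isSelfAdjoint_iff_isSymmetric.1 hB) (B.symm p) (B.symm x)
    simpa using h.symm
  rw [norm_sub_sq_real p, norm_sub_sq_real (B.symm p + b), norm_add_sq_real b x, inner_add_left, h1]
  ring

/-- The transformed map is optimal: competitors correspond to competitors for `T`, and by
`hat_identity` the costs differ by quantities depending on the marginals only. -/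
lemma IsOptMap.hat {Ω : Set (Ed d)} {μ : Measure (Ed d)} {T : Ed d → Ed d}
    (hΩm : MeasurableSet Ω) (hΩ : Bornology.IsBounded Ω)
    (hK : ∃ K : Set (Ed d), IsCompact K ∧ μ Kᶜ = 0) (hT : IsOptMap Ω μ T)
    (B : Ed d ≃L[ℝ] Ed d) (hB : IsSelfAdjoint (B : Ed d →L[ℝ] Ed d)) (b : Ed d) :
    IsOptMap (B.symm '' Ω) (Measure.map (fun y => B (T (B y) - b))
      (volume.restrict (B.symm '' Ω))) (fun y => B (T (B y) - b)) := by
  obtain ⟨hTm, hTμ, hopt⟩ := hT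
  have hBm : Measurable B := B.continuous.measurable
  have hBsm : Measurable B.symm := B.symm.continuous.measurable
  have hThm : Measurable fun y => B (T (B y) - b) := by fun_prop
  refine ⟨hThm, rfl, ?_⟩
  intro S hS hSmap
  obtain ⟨c, hc0, hc1, hc⟩ := volume_restrict_image B hΩm
  have hmapc : ∀ F : Ed d → Ed d, Measurable F → Measure.map F (volume.restrict (B.symm '' Ω))
      = c • Measure.map (fun x => F (B.symm x)) (volume.restrict Ω) := by
    intro F hF
    rw [hc, Measure.map_smul, Measure.map_map hF hBsm]; rfl
  have hintc : ∀ F : Ed d → ℝ≥0∞, Measurable F → ∫⁻ y in B.symm '' Ω, F y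
      = c * ∫⁻ x in Ω, F (B.symm x) := by
    intro F hF
    rw [hc, lintegral_smul_measure, lintegral_map hF hBsm, smul_eq_mul]
  -- equality of the laws of the pulled back maps
  have hlaw : Measure.map (fun x => S (B.symm x)) (volume.restrict Ω)
      = Measure.map (fun x => B (T x - b)) (volume.restrict Ω) := by
    rw [hmapc S hS, hmapc _ hThm] at hSmap
    simp only [ContinuousLinearEquiv.apply_symm_apply] at hSmap
    have := congrArg (fun m => c⁻¹ • m) hSmap
    simpa [smul_smul, ENNReal.inv_mul_cancel hc0 hc1] using this
  have hSm : Measurable fun x => S (B.symm x) := hS.comp hBsm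
  have hTm' : Measurable fun x => B (T x - b) := by fun_prop
  have hlawf : ∀ f : Ed d → ℝ≥0∞, Measurable f →
      ∫⁻ x in Ω, f (S (B.symm x)) = ∫⁻ x in Ω, f (B (T x - b)) := by
    intro f hf
    rw [← lintegral_map hf hSm, ← lintegral_map hf hTm', hlaw]
  have hA : Measurable fun p : Ed d => B.symm p + b := by fun_prop
  have hS'map : Measure.map (fun x => B.symm (S (B.symm x)) + b) (volume.restrict Ω) = μ := by
    have e1 := Measure.map_map (μ := volume.restrict Ω) hA hSm
    have e2 := Measure.map_map (μ := volume.restrict Ω) hA hTm'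
    rw [hlaw, e2] at e1
    rw [← hTμ]
    refine e1.symm.trans ?_
    congr 1
    ext1 x
    simp
  have hle := hopt _ (hA.comp hSm) hS'map
  -- finiteness of second moments
  have hΩf : volume Ω ≠ ⊤ := hΩ.measure_lt_top.ne
  have hTfin : ∫⁻ x in Ω, ENNReal.ofReal (‖T x‖ ^ 2) ≠ ⊤ := by
    obtain ⟨K, hKc, hK0⟩ := hK
    obtain ⟨k, hk⟩ := hKc.isBounded.exists_norm_le
    have e : ∫⁻ x in Ω, ENNReal.ofReal (‖T x‖ ^ 2) = ∫⁻ p, ENNReal.ofReal (‖p‖ ^ 2) ∂μ := by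
      rw [← hTμ, lintegral_map (by fun_prop) hTm]
    have hμf : μ univ ≠ ⊤ := by
      rw [← hTμ, Measure.map_apply hTm MeasurableSet.univ]; simpa using hΩf
    rw [e]
    refine ((lintegral_mono_ae (g := fun _ => ENNReal.ofReal (k ^ 2)) ?_).trans_lt ?_).ne
    · have : ∀ᵐ p ∂μ, p ∈ K := hK0
      filter_upwards [this] with p hp
      have := hk p hp
      gcongr
    · rw [lintegral_const]
      exact ENNReal.mul_lt_top ENNReal.ofReal_lt_top hμf.lt_top
  obtain ⟨k, hk⟩ := hΩ.exists_norm_le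
  have hxfin : ∫⁻ x in Ω, ENNReal.ofReal (2 * ‖x‖ ^ 2 + ‖b‖ ^ 2) ≠ ⊤ := by
    refine ((setLIntegral_mono' (g := fun _ => ENNReal.ofReal (2 * k ^ 2 + ‖b‖ ^ 2)) hΩm
      fun x hx => ?_).trans_lt ?_).ne
    · have := hk x hx
      gcongr
    · rw [setLIntegral_const]
      exact ENNReal.mul_lt_top ENNReal.ofReal_lt_top hΩf.lt_top
  -- integrated form of the identity
  have key : ∀ p : Ed d → Ed d, Measurable p →
      (∫⁻ x in Ω, ENNReal.ofReal (‖p x - B.symm x‖ ^ 2))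
        + ((∫⁻ x in Ω, ENNReal.ofReal (‖B.symm (p x) + b‖ ^ 2))
          + ∫⁻ x in Ω, ENNReal.ofReal (2 * ‖x‖ ^ 2 + ‖b‖ ^ 2))
      = (∫⁻ x in Ω, ENNReal.ofReal (‖B.symm (p x) + b - x‖ ^ 2))
        + ((∫⁻ x in Ω, ENNReal.ofReal (‖p x‖ ^ 2))
          + ∫⁻ x in Ω, ENNReal.ofReal (‖B.symm x‖ ^ 2 + ‖b + x‖ ^ 2)) := by
    intro p hp
    rw [← lintegral_add_left (by fun_prop), ← lintegral_add_left (by fun_prop),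
      ← lintegral_add_left (by fun_prop), ← lintegral_add_left (by fun_prop)]
    congr 1
    ext x
    rw [← ENNReal.ofReal_add (by positivity) (by positivity),
      ← ENNReal.ofReal_add (by positivity) (by positivity),
      ← ENNReal.ofReal_add (by positivity) (by positivity),
      ← ENNReal.ofReal_add (by positivity) (by positivity), hat_identity B hB]
  have kS := key _ hSm
  have kT := key _ hTm'
  rw [hlawf (fun p => ENNReal.ofReal (‖B.symm p + b‖ ^ 2)) (by fun_prop),
    hlawf (fun p => ENNReal.ofReal (‖p‖ ^ 2)) (by fun_prop)] at kS
  simp only [ContinuousLinearEquiv.symm_apply_apply, sub_add_cancel] at kS kT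
  have hfin := ENNReal.add_ne_top.2 ⟨hTfin, hxfin⟩
  rw [hintc _ (by fun_prop), hintc _ (by fun_prop)]
  simp only [ContinuousLinearEquiv.apply_symm_apply]
  gcongr c * ?_
  rw [← ENNReal.add_le_add_iff_right hfin, kS, kT]
  exact add_le_add hle le_rfl

end

/-! ### Lifting a coupling through the transport map -/

section
open ProbabilityTheory

/-- A coupling `π` of `T#α` with another measure lifts to a coupling `P` of `α` with it, such that
`π` is the image of `P` under `(z, x') ↦ (T z, x')`. -/
lemma glue {d : ℕ} (α : Measure (Ed d)) [IsFiniteMeasure α] {T : Ed d → Ed d} (hT : Measurable T)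
    (π : Measure (Ed d × Ed d)) (hπ : π.map Prod.fst = α.map T) :
    ∃ P : Measure (Ed d × Ed d), IsFiniteMeasure P ∧ P.map Prod.fst = α ∧
      P.map (fun p => (T p.1, p.2)) = π := by
  have : IsFiniteMeasure π := by
    have h : IsFiniteMeasure (π.map Prod.fst) := by rw [hπ]; infer_instance
    refine ⟨?_⟩
    have := measure_lt_top (π.map Prod.fst) univ
    rwa [Measure.map_apply measurable_fst MeasurableSet.univ, preimage_univ] at this
  refine ⟨α ⊗ₘ (π.condKernel.comap T hT), inferInstance, ?_, ?_⟩
  · exact Measure.fst_compProd _ _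
  · have hm : Measurable fun p : Ed d × Ed d => (T p.1, p.2) := by fun_prop
    refine Measure.ext_of_lintegral _ fun f hf => ?_
    have hfm : Measurable fun p : Ed d × Ed d => f (T p.1, p.2) := hf.comp hm
    rw [lintegral_map hf hm, Measure.lintegral_compProd hfm]
    simp only [Kernel.comap_apply]
    have h2 : Measurable fun y => ∫⁻ b, f (y, b) ∂(π.condKernel y) :=
      hf.lintegral_kernel_prod_right'
    rw [← lintegral_map (g := T) h2 hT, ← hπ]
    conv_rhs => rw [← π.disintegrate π.condKernel]
    rw [Measure.lintegral_compProd hf]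
    rfl

end

/-! ### Rescaling to the unit configuration -/

section
variable {d : ℕ}

lemma map_smul_volume {l : ℝ} (hl : 0 < l) :
    Measure.map (fun x : Ed d => l⁻¹ • x) volume = ENNReal.ofReal (l ^ d) • volume := by
  have h := Measure.map_addHaar_smul (volume : Measure (Ed d)) (inv_ne_zero hl.ne')
  rw [finrank_euclideanSpace_fin, inv_pow, inv_inv, abs_of_pos (by positivity)] at h
  exact h

lemma setLIntegral_scale {l : ℝ} (hl : 0 < l) {s : Set (Ed d)} (hs : MeasurableSet s)
    {F : Ed d → ℝ≥0∞} (hF : Measurable F) :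
    ENNReal.ofReal (l ^ d) * ∫⁻ x in s, F (l • x) = ∫⁻ x in (fun x => l⁻¹ • x) ⁻¹' s, F x := by
  have hF' : Measurable fun x => F (l • x) := by fun_prop
  have hm : Measurable fun x : Ed d => l⁻¹ • x := by fun_prop
  rw [← smul_eq_mul, ← lintegral_smul_measure, ← Measure.restrict_smul, ← map_smul_volume hl,
    Measure.restrict_map hm hs, lintegral_map hF' hm]
  simp [smul_smul, hl.ne']

lemma preimage_inv_smul_ball {l : ℝ} (hl : 0 < l) (r : ℝ) :
    (fun x : Ed d => l⁻¹ • x) ⁻¹' ball 0 r = ball 0 (l * r) := by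
  ext x
  simp only [mem_preimage, mem_ball_zero_iff, norm_smul, norm_inv, Real.norm_eq_abs, abs_of_pos hl]
  rw [inv_mul_lt_iff₀ hl]

lemma smul_mem_ball {l : ℝ} (hl : 0 < l) {r : ℝ} {x : Ed d} (hx : x ∈ ball (0 : Ed d) r) :
    l • x ∈ ball (0 : Ed d) (l * r) := by
  simp only [mem_ball_zero_iff, norm_smul, Real.norm_eq_abs, abs_of_pos hl] at *
  gcongr

/-- Rescaling by `l` turns data on the ball of radius `4 l` into a configuration on `B₄`. -/
lemma Cfg.of_scale {T : Ed d → Ed d} {ψ : Ed d → ℝ} {G A : Set (Ed d)}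
    {P : Measure (Ed d × Ed d)} {κ E D l : ℝ} (hl : 0 < l)
    (meas : Measurable T) (cont : Continuous ψ)
    (sub : ∀ z ∈ G, ∀ x, ψ z + inner ℝ (T z) (x - z) ≤ ψ x)
    (aeG : ∀ᵐ z ∂(volume : Measure (Ed d)), z ∈ ball (0 : Ed d) (l * 4) → z ∈ G)
    (fin : IsFiniteMeasure P) (measA : MeasurableSet A)
    (fst : P.map Prod.fst = volume.restrict A) (PG : ∀ᵐ p ∂P, p.1 ∈ G)
    (inA : ∀ z ∈ ball (0 : Ed d) (l * 4), T z ∈ ball (0 : Ed d) (l * 4) → z ∈ A) (hκ : 0 ≤ κ)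
    (snd : (P.map Prod.snd).restrict (ball (0 : Ed d) (l * 4))
      = ENNReal.ofReal κ • volume.restrict (ball (0 : Ed d) (l * 4)))
    (energy : ∫⁻ x in ball (0 : Ed d) (l * 4), ENNReal.ofReal (‖T x - x‖ ^ 2) = ENNReal.ofReal E)
    (cost : ∫⁻ p, ENNReal.ofReal (‖T p.1 - p.2‖ ^ 2) ∂P ≤ ENNReal.ofReal D)
    (hE : 0 < E) (hD : 0 ≤ D) :
    Cfg (fun x => l⁻¹ • T (l • x)) (fun x => ψ (l • x) / l ^ 2) ((fun x => l • x) ⁻¹' G)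
      ((fun x => l • x) ⁻¹' A)
      ((ENNReal.ofReal (l ^ d))⁻¹ • P.map (fun p => (l⁻¹ • p.1, l⁻¹ • p.2)))
      κ (E / l ^ (d + 2)) (D / l ^ (d + 2)) := by
  have hld : ENNReal.ofReal (l ^ d) ≠ 0 := by simp only [ne_eq, ENNReal.ofReal_eq_zero, not_le]; positivity
  have hlt : ENNReal.ofReal (l ^ d) ≠ ⊤ := ENNReal.ofReal_ne_top
  have hinv : (ENNReal.ofReal (l ^ d))⁻¹ ≠ ⊤ := by simpa using hld
  have hm : Measurable fun p : Ed d × Ed d => (l⁻¹ • p.1, l⁻¹ • p.2) := by fun_prop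
  have hmi : Measurable fun x : Ed d => l⁻¹ • x := by fun_prop
  have hml : Measurable fun x : Ed d => l • x := by fun_prop
  have hvol := map_smul_volume (d := d) hl
  have hpre : ∀ s : Set (Ed d), (fun x : Ed d => l⁻¹ • x) ⁻¹' ((fun x => l • x) ⁻¹' s) = s := by
    intro s; ext x; simp [smul_smul, hl.ne']
  have hcost0 : ∀ x y : Ed d, ENNReal.ofReal (‖l⁻¹ • x - l⁻¹ • y‖ ^ 2)
      = ENNReal.ofReal (l ^ 2)⁻¹ * ENNReal.ofReal (‖x - y‖ ^ 2) := by
    intro x y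
    rw [← ENNReal.ofReal_mul (by positivity), ← smul_sub, norm_smul, norm_inv, Real.norm_eq_abs,
      abs_of_pos hl, mul_pow, inv_pow]
  have hconst : ∀ t : ℝ, (ENNReal.ofReal (l ^ d))⁻¹ * (ENNReal.ofReal (l ^ 2)⁻¹ * ENNReal.ofReal t)
      = ENNReal.ofReal (t / l ^ (d + 2)) := by
    intro t
    rw [← ENNReal.ofReal_inv_of_pos (by positivity), ← ENNReal.ofReal_mul (by positivity),
      ← ENNReal.ofReal_mul (by positivity)]
    congr 1
    field_simp
    ring
  refine ⟨by fun_prop, by fun_prop, ?_, ?_, ?_, hml measA, ?_, ?_, ?_, hκ, ?_, ?_, ?_,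
    by positivity, by positivity⟩
  · intro z hz x
    have h := sub _ hz (l • x)
    rw [← smul_sub, inner_smul_right] at h
    rw [inner_smul_left, RCLike.conj_to_real, ← sub_nonneg]
    have : ψ (l • x) / l ^ 2 - (ψ (l • z) / l ^ 2 + l⁻¹ * inner ℝ (T (l • z)) (x - z))
        = (ψ (l • x) - (ψ (l • z) + l * inner ℝ (T (l • z)) (x - z))) / l ^ 2 := by
      field_simp
    rw [this]
    exact div_nonneg (sub_nonneg.2 h) (by positivity)
  · have h : ∀ᵐ z ∂(volume : Measure (Ed d)), l • z ∈ ball (0 : Ed d) (l * 4) → l • z ∈ G := by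
      rw [ae_iff] at aeG ⊢
      have := Measure.addHaar_preimage_smul (volume : Measure (Ed d)) hl.ne'
        {a | ¬(a ∈ ball (0 : Ed d) (l * 4) → a ∈ G)}
      rw [aeG, mul_zero] at this
      exact this
    filter_upwards [h] with z hz hz4
    exact hz (smul_mem_ball hl hz4)
  · exact Measure.smul_finite _ hinv
  · have e := Measure.map_map (μ := P) measurable_fst hm
    have e2 := Measure.map_map (μ := P) hmi measurable_fst
    rw [Measure.map_smul, e]
    change (ENNReal.ofReal (l ^ d))⁻¹ • Measure.map ((fun x => l⁻¹ • x) ∘ Prod.fst) P = _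
    rw [← e2, fst]
    conv_lhs => rw [← hpre A]
    rw [← Measure.restrict_map hmi (hml measA), hvol, Measure.restrict_smul, smul_smul,
      ENNReal.inv_mul_cancel hld hlt, one_smul]
  · refine Measure.ae_smul_measure ?_ _
    rw [ae_iff] at PG ⊢
    refine le_antisymm ?_ bot_le
    obtain ⟨s, hs, hsm, hs0⟩ := exists_measurable_superset_of_null PG
    have hms : Measurable fun p : Ed d × Ed d => (l • p.1, l • p.2) := by fun_prop
    calc _ ≤ Measure.map (fun p : Ed d × Ed d => (l⁻¹ • p.1, l⁻¹ • p.2)) P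
            ((fun p => (l • p.1, l • p.2)) ⁻¹' s) := by
          apply measure_mono
          intro p hp
          exact hs hp
      _ = P s := by
          rw [Measure.map_apply hm (hms hsm)]
          congr 1
          ext p
          simp [smul_smul, hl.ne']
      _ = ⊥ := hs0
  · intro z hz hTz
    refine inA _ (smul_mem_ball hl hz) ?_
    have := smul_mem_ball hl hTz
    simpa [smul_smul, hl.ne'] using this
  · have e := Measure.map_map (μ := P) measurable_snd hm
    have e2 := Measure.map_map (μ := P) hmi measurable_snd
    rw [Measure.map_smul, e]
    change ((ENNReal.ofReal (l ^ d))⁻¹ • Measure.map ((fun x => l⁻¹ • x) ∘ Prod.snd) P).restrict _ = _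
    rw [← e2, Measure.restrict_smul, Measure.restrict_map hmi measurableSet_ball,
      preimage_inv_smul_ball hl, snd, ← preimage_inv_smul_ball hl, Measure.map_smul,
      ← Measure.restrict_map hmi measurableSet_ball, hvol, Measure.restrict_smul, smul_smul, smul_smul]
    congr 1
    rw [mul_comm, ← mul_assoc, ENNReal.mul_inv_cancel hld hlt, one_mul]
  · have hF : Measurable fun x => ENNReal.ofReal (‖T x - x‖ ^ 2) := by fun_prop
    have h := setLIntegral_scale hl (measurableSet_ball (x := (0 : Ed d)) (ε := 4)) hF
    rw [preimage_inv_smul_ball hl, energy] at h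
    have h2 : ∀ x : Ed d, ENNReal.ofReal (‖l⁻¹ • T (l • x) - x‖ ^ 2)
        = ENNReal.ofReal (l ^ 2)⁻¹ * ENNReal.ofReal (‖T (l • x) - l • x‖ ^ 2) := by
      intro x
      rw [← hcost0]
      simp [smul_smul, hl.ne']
    simp_rw [h2]
    rw [lintegral_const_mul _ (by fun_prop), ← hconst, ← h]
    rw [mul_left_comm, ← mul_assoc (ENNReal.ofReal (l ^ d))⁻¹, ENNReal.inv_mul_cancel hld hlt, one_mul]
  · rw [lintegral_smul_measure, lintegral_map (by fun_prop) hm, smul_eq_mul, ← hconst]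
    simp only [smul_smul, mul_inv_cancel₀ hl.ne', one_smul, hcost0]
    rw [lintegral_const_mul _ (by fun_prop)]
    gcongr

end

/-! ### From optimal maps to configurations -/

section
variable {d : ℕ}

/-- An optimal map whose data term is `< D` yields, after rescaling by `R / 2`, a configuration. -/
lemma exists_cfg (hd : 0 < d) {R : ℝ} (hR : 0 < R) {Ω O : Set (Ed d)} {μ : Measure (Ed d)}
    {T : Ed d → Ed d} (hΩ : Bornology.IsBounded Ω) (hΩm : MeasurableSet Ω)
    (hBΩ : ball (0 : Ed d) (2 * R) ⊆ Ω) (hO : IsOpen O) (hBO : ball (0 : Ed d) (2 * R) ⊆ O)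
    (hK : ∃ K : Set (Ed d), IsCompact K ∧ μ Kᶜ = 0) (hμ : μ univ = volume Ω)
    (hT : IsOptMap Ω μ T) {E D : ℝ} (hE : 0 < E) (hEE : ElinR T R = ENNReal.ofReal E) (hD : 0 ≤ D)
    (hDD : Dlin μ O < ENNReal.ofReal D) :
    ∃ ψ G A P κ, Cfg (fun x => (R / 2)⁻¹ • T ((R / 2) • x)) ψ G A P κ
      (E / (R / 2) ^ (d + 2)) (D / (R / 2) ^ (d + 2)) := by
  obtain ⟨hTm, hTμ, hopt⟩ := hT
  obtain ⟨K, hKc, hK0⟩ := hK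
  obtain ⟨k, hk⟩ := hKc.isBounded.exists_norm_le
  obtain ⟨k', hk'⟩ := hΩ.exists_norm_le
  have hΩf : volume Ω ≠ ⊤ := hΩ.measure_lt_top.ne
  have hfinΩ : IsFiniteMeasure (volume.restrict Ω) := ⟨by simpa using hΩf.lt_top⟩
  have hgm : Measurable fun x => (x, T x) := measurable_id.prodMk hTm
  have haeK : ∀ᵐ z ∂(volume.restrict Ω), T z ∈ K := by
    have : ∀ᵐ p ∂μ, p ∈ K := hK0
    rw [← hTμ] at this
    exact ae_of_ae_map hTm.aemeasurable this
  have haeS : ∀ᵐ z ∂(volume.restrict Ω),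
      (z, T z) ∈ (Measure.map (fun x => (x, T x)) (volume.restrict Ω)).support := by
    have : ∀ᵐ p ∂(Measure.map (fun x => (x, T x)) (volume.restrict Ω)),
        p ∈ (Measure.map (fun x => (x, T x)) (volume.restrict Ω)).support := support_mem_ae
    exact ae_of_ae_map hgm.aemeasurable this
  set G : Set (Ed d) := {z | (z, T z) ∈ (Measure.map (fun x => (x, T x))
    (volume.restrict Ω)).support ∧ T z ∈ K} with hG
  have haeG : ∀ᵐ z ∂(volume.restrict Ω), z ∈ G := by
    filter_upwards [haeK, haeS] with z h1 h2 using ⟨h2, h1⟩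
  have hfin : ∫⁻ x in Ω, ENNReal.ofReal (‖T x - x‖ ^ 2) ≠ ⊤ := by
    refine ((lintegral_mono_ae (g := fun _ => ENNReal.ofReal ((k + k') ^ 2)) ?_).trans_lt ?_).ne
    · filter_upwards [haeK, ae_restrict_mem hΩm] with x h1 h2
      have := (norm_sub_le (T x) x).trans (add_le_add (hk _ h1) (hk' _ h2))
      gcongr
    · rw [setLIntegral_const]
      exact ENNReal.mul_lt_top ENNReal.ofReal_lt_top hΩf.lt_top
  obtain ⟨ψ, hψ, hsub⟩ := exists_potential (T := T) (G := G) (K := k) (fun z hz => hk _ hz.2)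
    fun n z hz σ => perm_mono hd hΩm hTm (by rw [hTμ]; exact hopt) hfin (fun i => (hz i).1) σ
  -- the coupling
  obtain ⟨c, ⟨π, hπ1, hπ2, rfl⟩, hc⟩ := sInf_lt_iff.1 hDD
  set A : Set (Ed d) := Ω ∩ T ⁻¹' O with hA
  have hAm : MeasurableSet A := hΩm.inter (hTm hO.measurableSet)
  have hfinA : IsFiniteMeasure (volume.restrict A) :=
    ⟨by simpa using (measure_mono inter_subset_left).trans_lt hΩf.lt_top⟩
  have hπ1' : π.map Prod.fst = (volume.restrict A).map T := by
    rw [hπ1, ← hTμ, Measure.restrict_map hTm hO.measurableSet,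
      Measure.restrict_restrict (hTm hO.measurableSet), inter_comm]
  obtain ⟨P, hPf, hP1, hP2⟩ := glue (volume.restrict A) hTm π hπ1'
  have hm2 : Measurable fun p : Ed d × Ed d => (T p.1, p.2) := by fun_prop
  have hPs : P.map Prod.snd = (μ O / volume O) • volume.restrict O := by
    rw [← hπ2, ← hP2]
    exact (Measure.map_map measurable_snd hm2).symm
  have hball : R / 2 * 4 = 2 * R := by ring
  have hOpos : volume O ≠ 0 :=
    ((measure_ball_pos volume (0 : Ed d) (by positivity : 0 < 2 * R)).trans_le
      (measure_mono hBO)).ne'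
  have hκt : μ O / volume O ≠ ⊤ :=
    (ENNReal.div_lt_top (((measure_mono (subset_univ O)).trans hμ.le).trans_lt hΩf.lt_top).ne
      hOpos).ne
  refine ⟨_, _, _, _, (μ O / volume O).toReal, Cfg.of_scale (l := R / 2) (G := G) (A := A) (P := P)
    (by positivity) hTm hψ hsub ?_ hPf hAm hP1 ?_ ?_ ENNReal.toReal_nonneg ?_ ?_ ?_ hE hD⟩
  · rw [hball]
    filter_upwards [(ae_restrict_iff' hΩm).1 haeG] with z hz hzb using hz (hBΩ hzb)
  · refine ae_of_ae_map (p := fun z => z ∈ G) measurable_fst.aemeasurable ?_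
    rw [hP1]
    exact ae_restrict_of_ae_restrict_of_subset inter_subset_left haeG
  · rw [hball]
    exact fun z hz hTz => ⟨hBΩ hz, hBO hTz⟩
  · rw [hball, hPs, Measure.restrict_smul, Measure.restrict_restrict measurableSet_ball,
      inter_eq_left.2 hBO, ENNReal.ofReal_toReal hκt]
  · rw [hball]; exact hEE
  · rw [← hP2, lintegral_map (by fun_prop) hm2] at hc
    exact hc.le

end

/-- One step of the Campanato iteration for the Monge–Ampère equation with
rough data: under a smallness condition on the normalized excess energy and data at scale `R`,
there are a symmetric change of variables `B` and a shift `b`, controlled by the energy, such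
that the transformed optimal map has an improved normalized excess energy at scale `θR`. -/
theorem one_step_improvement (d : ℕ) (hd : 2 ≤ d) :
    ∃ Cd τ₀ : ℝ, 0 < Cd ∧ 0 < τ₀ ∧
    ∀ τ : ℝ, 0 < τ → τ < τ₀ →
    ∃ ε C θ : ℝ, 0 < ε ∧ 0 < C ∧ 0 < θ ∧ θ < 1 ∧
    ∀ (R : ℝ) (Ω O : Set (Ed d)) (μ : Measure (Ed d)) (T : Ed d → Ed d),
      0 < R →
      Bornology.IsBounded Ω → MeasurableSet Ω → ball (0 : Ed d) (2 * R) ⊆ Ω →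
      IsOpen O → ball (0 : Ed d) (2 * R) ⊆ O →
      (∃ K : Set (Ed d), IsCompact K ∧ μ Kᶜ = 0) → μ Set.univ = volume Ω →
      IsOptMap Ω μ T →
      -- smallness: `E(R)/R^{d+2} + D(R)/R^{d+2} ≤ ε(τ)`
      ElinR T R + Dlin μ O ≤ ENNReal.ofReal (ε * R ^ (d + 2)) →
      ∃ B : Ed d ≃L[ℝ] Ed d, ∃ b : Ed d,
        IsSelfAdjoint (B : Ed d →L[ℝ] Ed d) ∧
        -- `|B − Id|² + |b|²/R² ≲ E(R)/R^{d+2}`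
        ENNReal.ofReal ((‖(B : Ed d →L[ℝ] Ed d) - 1‖ ^ 2 + ‖b‖ ^ 2 / R ^ 2)
              * R ^ (d + 2))
          ≤ ENNReal.ofReal Cd * ElinR T R ∧
        -- the transformed map is again an optimal transport map, and it satisfies the
        -- one-step decay `E(θR)/(θR)^{d+2} ≤ τ E(R)/R^{d+2} + C(τ) D(R)/R^{d+2}`:
        (let That : Ed d → Ed d := fun y => B (T (B y) - b)
         let Ωhat : Set (Ed d) := (⇑B.symm) '' Ω
         IsOptMap Ωhat (Measure.map That (volume.restrict Ωhat)) That ∧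
         ENNReal.ofReal (R ^ (d + 2)) * ElinR That (θ * R)
           ≤ ENNReal.ofReal ((θ * R) ^ (d + 2)) *
              (ENNReal.ofReal τ * ElinR T R + ENNReal.ofReal C * Dlin μ O)) := by
  obtain ⟨Cd, hCd, hcore⟩ := core d
  refine ⟨Cd * 2 ^ (d + 2), 1, by positivity, one_pos, fun τ hτ _ => ?_⟩
  obtain ⟨ϑ, δ, ε, hϑ, hϑ4, hδ, hε, hcore⟩ := hcore (τ / 4 ^ (d + 2)) (by positivity)
  refine ⟨ε / 2 ^ (d + 2), ((ϑ / 4) ^ (d + 2))⁻¹ / δ, ϑ / 4, by positivity, by positivity,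
    by positivity, by linarith, ?_⟩
  intro R Ω O μ T hR hΩ hΩm hBΩ hO hBO hK hμ hT hsmall
  rcases le_or_gt (ENNReal.ofReal δ * ElinR T R) (Dlin μ O) with hreg | hreg
  · -- the data term dominates: no change of variables is needed
    have hself : IsSelfAdjoint
        ((ContinuousLinearEquiv.refl ℝ (Ed d) : Ed d ≃L[ℝ] Ed d) : Ed d →L[ℝ] Ed d) :=
      IsSelfAdjoint.one (Ed d →L[ℝ] Ed d)
    refine ⟨ContinuousLinearEquiv.refl ℝ (Ed d), 0, hself, ?_, ?_⟩
    · have : ((ContinuousLinearEquiv.refl ℝ (Ed d) : Ed d ≃L[ℝ] Ed d) : Ed d →L[ℝ] Ed d) - 1 = 0 :=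
        sub_self _
      rw [this]
      simp
    · refine ⟨hT.hat hΩm hΩ hK _ hself 0, ?_⟩
      have e : (fun y => (ContinuousLinearEquiv.refl ℝ (Ed d))
          (T ((ContinuousLinearEquiv.refl ℝ (Ed d)) y) - 0)) = T := by
        ext1 y; simp
      rw [e]
      have h1 : ElinR T (ϑ / 4 * R) ≤ ElinR T R := by
        refine lintegral_mono_set (ball_subset_ball ?_)
        have : ϑ / 4 * R ≤ 1 * R := by gcongr; linarith
        linarith
      calc ENNReal.ofReal (R ^ (d + 2)) * ElinR T (ϑ / 4 * R)
          ≤ ENNReal.ofReal (R ^ (d + 2)) * ElinR T R := by gcongr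
        _ = ENNReal.ofReal ((ϑ / 4 * R) ^ (d + 2)) *
            (ENNReal.ofReal (((ϑ / 4) ^ (d + 2))⁻¹ / δ) * (ENNReal.ofReal δ * ElinR T R)) := by
          rw [← mul_assoc, ← mul_assoc, ← ENNReal.ofReal_mul (by positivity),
            ← ENNReal.ofReal_mul (by positivity)]
          congr 2
          rw [mul_pow]
          field_simp
        _ ≤ _ := by
          gcongr
          exact le_add_left (by gcongr)
  · -- the energy dominates: the core estimate applies to the rescaled configuration
    have hEt : ElinR T R ≠ ⊤ :=
      ((le_add_right le_rfl).trans hsmall |>.trans_lt ENNReal.ofReal_lt_top).ne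
    set E := (ElinR T R).toReal with hEdef
    have hEE : ElinR T R = ENNReal.ofReal E := (ENNReal.ofReal_toReal hEt).symm
    have hE0 : 0 ≤ E := ENNReal.toReal_nonneg
    rw [hEE, ← ENNReal.ofReal_mul hδ.le] at hreg
    have hE : 0 < E := by
      have := ENNReal.ofReal_pos.1 (bot_le.trans_lt hreg)
      exact pos_of_mul_pos_right this hδ.le
    obtain ⟨ψ, G, A, P, κ, hcfg⟩ := exists_cfg (by omega) hR hΩ hΩm hBΩ hO hBO hK hμ hT hE hEE
      (by positivity : 0 ≤ δ * E) hreg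
    have hEle : E ≤ ε / 2 ^ (d + 2) * R ^ (d + 2) := by
      have := (le_add_right le_rfl).trans hsmall
      rw [hEE] at this
      exact (ENNReal.ofReal_le_ofReal_iff (by positivity)).1 this
    obtain ⟨B, b, hB, hBb, hdec⟩ := hcore hcfg
      (by
        rw [div_pow, div_le_iff₀ (by positivity)]
        calc E ≤ _ := hEle
          _ = _ := by ring)
      (by rw [mul_div_assoc])
    set l := R / 2 with hl
    have hl0 : 0 < l := by positivity
    have hRl : R = 2 * l := by rw [hl]; ring
    refine ⟨B, l • b, hB, ?_, hT.hat hΩm hΩ hK B hB _, ?_⟩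
    · rw [hEE, ← ENNReal.ofReal_mul (by positivity)]
      refine ENNReal.ofReal_le_ofReal ?_
      have h1 : ‖l • b‖ ^ 2 / R ^ 2 ≤ ‖b‖ ^ 2 := by
        rw [norm_smul, Real.norm_eq_abs, abs_of_pos hl0, hRl, div_le_iff₀ (by positivity)]
        nlinarith [sq_nonneg (‖b‖ * l)]
      calc _ ≤ (‖(B : Ed d →L[ℝ] Ed d) - 1‖ ^ 2 + ‖b‖ ^ 2) * R ^ (d + 2) := by gcongr
        _ ≤ Cd * (E / l ^ (d + 2)) * R ^ (d + 2) := by gcongr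
        _ = Cd * 2 ^ (d + 2) * E := by
          rw [hRl, mul_pow]
          field_simp
    · have hTm := hT.1
      have hThm : Measurable fun y => B (T (B y) - l • b) := by
        have := B.continuous.measurable
        fun_prop
      have hscale := setLIntegral_scale hl0 (measurableSet_ball (x := (0 : Ed d)) (ε := ϑ))
        (F := fun y => ENNReal.ofReal (‖B (T (B y) - l • b) - y‖ ^ 2)) (by fun_prop)
      rw [preimage_inv_smul_ball hl0] at hscale
      have hpt : ∀ y : Ed d, ENNReal.ofReal (‖B (T (B (l • y)) - l • b) - l • y‖ ^ 2)
          = ENNReal.ofReal (l ^ 2) *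
            ENNReal.ofReal (‖B (l⁻¹ • T (l • B y) - b) - y‖ ^ 2) := by
        intro y
        have : B (T (B (l • y)) - l • b) - l • y = l • (B (l⁻¹ • T (l • B y) - b) - y) := by
          rw [smul_sub, ← map_smul, smul_sub, smul_smul, mul_inv_cancel₀ hl0.ne', one_smul,
            map_smul B l y]
        rw [this, norm_smul, Real.norm_eq_abs, abs_of_pos hl0, mul_pow,
          ENNReal.ofReal_mul (by positivity)]
      have hEl : ElinR (fun y => B (T (B y) - l • b)) (ϑ / 4 * R)
          ≤ ENNReal.ofReal (τ / 4 ^ (d + 2) * ϑ ^ (d + 2) * E) := by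
        have er : 2 * (ϑ / 4 * R) = l * ϑ := by rw [hRl]; ring
        rw [ElinR, er, ← hscale]
        simp_rw [hpt]
        rw [lintegral_const_mul' _ _ ENNReal.ofReal_ne_top, ← mul_assoc]
        calc _ ≤ ENNReal.ofReal (l ^ d) * ENNReal.ofReal (l ^ 2) * ENNReal.ofReal
              (τ / 4 ^ (d + 2) * ϑ ^ (d + 2) * (E / l ^ (d + 2))) := by gcongr
          _ = _ := by
            rw [← ENNReal.ofReal_mul (by positivity), ← ENNReal.ofReal_mul (by positivity)]
            congr 1
            field_simp
            ring
      calc _ ≤ ENNReal.ofReal (R ^ (d + 2)) *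
            ENNReal.ofReal (τ / 4 ^ (d + 2) * ϑ ^ (d + 2) * E) := by gcongr
        _ = ENNReal.ofReal ((ϑ / 4 * R) ^ (d + 2)) * (ENNReal.ofReal τ * ElinR T R) := by
          rw [hEE, ← ENNReal.ofReal_mul (by positivity), ← ENNReal.ofReal_mul (by positivity),
            ← ENNReal.ofReal_mul (by positivity)]
          congr 1
          rw [mul_pow, div_pow]
          ring
        _ ≤ _ := by
          gcongr
          exact le_add_right le_rfl
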